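/- (Proposition 2, Han-Costa with Kramer-Nair correction) Let (S,T) be a discrete memoryless correlated source with finite alphabets and joint pmf p(s,t), and let K = f(S) = g(T) be a common part of (S,T). Suppose there exist finite-valued auxiliary random variables W, U, V and a channel input X satisfying the Markov chain (S,T) -> (W,U,V) -> X -> (Y1,Y2), where Y1, Y2 are obtained from X through the broadcast channel p(y1,y2|x). If H(S) < I(S,W,U; Y1) - I(T; W,U | S), H(T) < I(T,W,V; Y2) - I(S; W,V | T), H(S,T) < min{I(K,W; Y1), I(K,W; Y2)} + I(S,U; Y1 | K,W) + I(T,V; Y2 | K,W) - I(S,U; T,V | K,W), and H(S,T) < I(S,W,U; Y1) + I(T,W,V; Y2) - I(S,U; T,V | K,W) - I(S,T; K,W), then the source pair (S,T) can be sent with arbitrarily small probability of error over the broadcast channel p(y1,y2|x). -/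

import Mathlib

/-! The code is a random superposition code with a stochastic choice of codeword that is
derandomised at the end by averaging.

*Codebook.* There are `M0` independent clouds. A cloud consists of a centre `w ~ q0`, and, given
`w`, of independent satellites `u (s, a) ~ q1 s w` for each source word `s` and slot `a`, and
`v (t, b) ~ q2 t w` for each source word `t` and slot `b`. For the source pair `(s, t)` the encoder
has to pick a cloud and slots `a`, `b` for which `(w, u (s, a), v (t, b))` looks as if it were drawn
from the target conditional law `c s t` of the auxiliaries.

*Covering.* Weight each slot triple by the importance weight (target over proposal, truncated to the
set `CovTyp`). The weighted average over the codebook of the error of a slot is, in expectation,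
an error under the target law, and the total weight is close to `1` by Chebyshev. The second moment
of a cloud splits into four parts, according to whether the two `u`-slots and the two `v`-slots
coincide; truncation bounds them by `θ0`, `θ1 / M1`, `θ2 / M2`, `θ3 / (M1 M2)` (`cloudAvg_sq`,
`cov_bounds`, `book_sq`). If the total weight is at least `1 / 2`, the best slot is at most twice as
bad as the weighted average, so the encoder may simply take the best one (`min_le_avg`).

*Packing.* Each receiver uses a threshold test on two likelihood ratios, and returns a source word
having some codeword that passes. A wrong source word in the correct cloud is independent of the
output given the centre, one in another cloud is independent of it altogether, which gives the bounds
`κ1`, `κ2` (`dec_term`, `test_k1`, `test_k2`); the importance weight changes the proposal into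
the target in the remaining term (`user_err`). All of this is combined in `one_shot`.

*Rates.* For product laws the weak law of large numbers turns the ratios into exponents: with
`M0 ≈ 2 ^ (n R0)`, and satellite books of rates `R1`, `R2`, the code works if four covering
inequalities (lower bounds on `R0`, `R0 + R1`, `R0 + R2`, `R0 + R1 + R2`) and four packing
inequalities (upper bounds on `R1`, `R0 + R1`, `R2`, `R0 + R2`) hold (`sendable_of_exponents`). Only
`R0` has to be nonnegative: thinning each satellite by an independent Boolean label allows `R1` and
`R2` to be negative, as they may have to be since the satellites are already indexed by the source
words. The single-letter proposals are the marginal of `W` and the conditionals of `U` given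
`(S, W)` and of `V` given `(T, W)`. With these, `R0 + R1` and `R0 + R2` can be put just below their
upper bounds, and `R0 + R1 + R2` just above its lower bound; this leaves the hypotheses of
`sendable_of_entropies`.

*Common part.* Replacing `W` by `(K, W)` changes neither the Markov chain nor the terms in which
`S` or `T` already determines `K`, and turns these hypotheses into the four inequalities of the
theorem (`margEnt_push`, `sendable_of_entropies_common`). -/

/-- Shannon entropy (in bits) of the push-forward of the pmf `p` under the map `f`. -/
noncomputable def margEnt {Ω α : Type*} [Fintype Ω] [Fintype α] [DecidableEq α]
    (p : Ω → ℝ) (f : Ω → α) : ℝ :=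
  ∑ a : α, -((∑ ω : Ω, if f ω = a then p ω else 0) *
      Real.logb 2 (∑ ω : Ω, if f ω = a then p ω else 0))

/-- Conditional entropy H(f | g). -/
noncomputable def condEnt {Ω α β : Type*} [Fintype Ω] [Fintype α] [Fintype β]
    [DecidableEq α] [DecidableEq β] (p : Ω → ℝ) (f : Ω → α) (g : Ω → β) : ℝ :=
  margEnt p (fun ω => (f ω, g ω)) - margEnt p g

/-- Mutual information I(f ; g). -/
noncomputable def mi {Ω α β : Type*} [Fintype Ω] [Fintype α] [Fintype β]
    [DecidableEq α] [DecidableEq β] (p : Ω → ℝ) (f : Ω → α) (g : Ω → β) : ℝ :=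
  margEnt p f + margEnt p g - margEnt p (fun ω => (f ω, g ω))

/-- Conditional mutual information I(f ; g | h). -/
noncomputable def cmi {Ω α β γ : Type*} [Fintype Ω] [Fintype α] [Fintype β] [Fintype γ]
    [DecidableEq α] [DecidableEq β] [DecidableEq γ]
    (p : Ω → ℝ) (f : Ω → α) (g : Ω → β) (h : Ω → γ) : ℝ :=
  margEnt p (fun ω => (f ω, h ω)) + margEnt p (fun ω => (g ω, h ω))
    - margEnt p (fun ω => (f ω, g ω, h ω)) - margEnt p h

/-- Shannon entropy (in bits) of a pmf. -/
noncomputable def pmfEnt {α : Type*} [Fintype α] (q : α → ℝ) : ℝ :=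
  ∑ a : α, -(q a * Real.logb 2 (q a))

/-- Probability of error at decoder 1 of a length-`n` source-channel code for the
broadcast channel `chan` with correlated source `pST`. -/
noncomputable def bcPe1 {S T X Y1 Y2 : Type*} [Fintype S] [Fintype T] [Fintype X]
    [Fintype Y1] [Fintype Y2] [DecidableEq S]
    (pST : S → T → ℝ) (chan : X → Y1 → Y2 → ℝ) (n : ℕ)
    (enc : (Fin n → S) × (Fin n → T) → Fin n → X)
    (φ1 : (Fin n → Y1) → Fin n → S) : ℝ :=
  ∑ sn : Fin n → S, ∑ tn : Fin n → T, ∑ y1n : Fin n → Y1, ∑ y2n : Fin n → Y2,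
    if φ1 y1n ≠ sn then
      (∏ i, pST (sn i) (tn i)) * ∏ i, chan (enc (sn, tn) i) (y1n i) (y2n i)
    else 0

/-- Probability of error at decoder 2. -/
noncomputable def bcPe2 {S T X Y1 Y2 : Type*} [Fintype S] [Fintype T] [Fintype X]
    [Fintype Y1] [Fintype Y2] [DecidableEq T]
    (pST : S → T → ℝ) (chan : X → Y1 → Y2 → ℝ) (n : ℕ)
    (enc : (Fin n → S) × (Fin n → T) → Fin n → X)
    (φ2 : (Fin n → Y2) → Fin n → T) : ℝ :=
  ∑ sn : Fin n → S, ∑ tn : Fin n → T, ∑ y1n : Fin n → Y1, ∑ y2n : Fin n → Y2,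
    if φ2 y2n ≠ tn then
      (∏ i, pST (sn i) (tn i)) * ∏ i, chan (enc (sn, tn) i) (y1n i) (y2n i)
    else 0

/-- The source `pST` can be sent with arbitrarily small probability of error over the
broadcast channel `chan`. -/
def BCSendable {S T X Y1 Y2 : Type*} [Fintype S] [Fintype T] [Fintype X]
    [Fintype Y1] [Fintype Y2] [DecidableEq S] [DecidableEq T]
    (pST : S → T → ℝ) (chan : X → Y1 → Y2 → ℝ) : Prop :=
  ∀ ε : ℝ, 0 < ε → ∃ N : ℕ, ∀ n : ℕ, N ≤ n →
    ∃ (enc : (Fin n → S) × (Fin n → T) → Fin n → X)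
      (φ1 : (Fin n → Y1) → Fin n → S) (φ2 : (Fin n → Y2) → Fin n → T),
      bcPe1 pST chan n enc φ1 ≤ ε ∧ bcPe2 pST chan n enc φ2 ≤ ε

/-- Sample space for the Han-Costa scheme. -/
abbrev Omega8 (S T W U V X Y1 Y2 : Type*) := S × T × W × U × V × X × Y1 × Y2

section Proj
variable {S T W U V X Y1 Y2 : Type*}
def bS  (ω : Omega8 S T W U V X Y1 Y2) : S := ω.1
def bT  (ω : Omega8 S T W U V X Y1 Y2) : T := ω.2.1
def bW  (ω : Omega8 S T W U V X Y1 Y2) : W := ω.2.2.1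
def bU  (ω : Omega8 S T W U V X Y1 Y2) : U := ω.2.2.2.1
def bV  (ω : Omega8 S T W U V X Y1 Y2) : V := ω.2.2.2.2.1
def bX  (ω : Omega8 S T W U V X Y1 Y2) : X := ω.2.2.2.2.2.1
def bY1 (ω : Omega8 S T W U V X Y1 Y2) : Y1 := ω.2.2.2.2.2.2.1
def bY2 (ω : Omega8 S T W U V X Y1 Y2) : Y2 := ω.2.2.2.2.2.2.2
end Proj

set_option linter.unusedSectionVars false

/-! ### Expectations under finite product weights -/

lemma prodE_mul {ι α : Type*} [Fintype ι] [DecidableEq ι] [Fintype α]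
    (μ : ι → α → ℝ) (h : ι → α → ℝ) :
    ∑ x : ι → α, (∏ i, μ i (x i)) * ∏ i, h i (x i) = ∏ i, ∑ a, μ i a * h i a := by
  rw [Finset.prod_univ_sum, Fintype.piFinset_univ]
  simp_rw [Finset.prod_mul_distrib]

lemma prodE_const {ι α : Type*} [Fintype ι] [DecidableEq ι] [Fintype α]
    (μ : ι → α → ℝ) (hμ : ∀ i, ∑ a, μ i a = 1) :
    ∑ x : ι → α, ∏ i, μ i (x i) = 1 := by
  have := prodE_mul μ (fun _ _ => 1)
  simpa [hμ] using this

lemma prodE_one {ι α : Type*} [Fintype ι] [DecidableEq ι] [Fintype α]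
    (μ : ι → α → ℝ) (hμ : ∀ i, ∑ a, μ i a = 1) (k : ι) (g : α → ℝ) :
    ∑ x : ι → α, (∏ i, μ i (x i)) * g (x k) = ∑ a, μ k a * g a := by
  have := prodE_mul μ (fun i a => if i = k then g a else 1)
  simp only [Finset.prod_ite_eq', Finset.mem_univ, if_true] at this
  rw [this, Finset.prod_eq_single k]
  · simp
  · intro b _ hb; simp [hb, hμ]
  · simp

lemma prodE_two_mul {ι α : Type*} [Fintype ι] [DecidableEq ι] [Fintype α]
    (μ : ι → α → ℝ) (hμ : ∀ i, ∑ a, μ i a = 1) (k l : ι) (hkl : k ≠ l) (g h : α → ℝ) :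
    ∑ x : ι → α, (∏ i, μ i (x i)) * (g (x k) * h (x l))
      = (∑ a, μ k a * g a) * (∑ a, μ l a * h a) := by
  have := prodE_mul μ (fun i a => (if i = k then g a else 1) * (if i = l then h a else 1))
  simp only [Finset.prod_mul_distrib, Finset.prod_ite_eq', Finset.mem_univ, if_true] at this
  rw [this, ← Finset.prod_subset (Finset.subset_univ {k, l}), Finset.prod_pair hkl]
  · simp [hkl, hkl.symm]
  · intro i _ hi
    simp only [Finset.mem_insert, Finset.mem_singleton, not_or] at hi
    simp [hi.1, hi.2, hμ]

lemma prodE_two {ι α : Type*} [Fintype ι] [DecidableEq ι] [Fintype α]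
    (μ : ι → α → ℝ) (hμ : ∀ i, ∑ a, μ i a = 1) (k l : ι) (hkl : k ≠ l) (g : α → α → ℝ) :
    ∑ x : ι → α, (∏ i, μ i (x i)) * g (x k) (x l)
      = ∑ a, ∑ b, μ k a * μ l b * g a b := by
  classical
  have key : ∀ x : ι → α, g (x k) (x l)
      = ∑ a, (if x k = a then 1 else 0) * g a (x l) := by
    intro x; simp
  simp_rw [key, Finset.mul_sum]
  rw [Finset.sum_comm]
  refine Finset.sum_congr rfl fun a _ => ?_
  rw [prodE_two_mul μ hμ k l hkl (fun y => if y = a then 1 else 0) (fun y => g a y),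
    Finset.sum_mul_sum]
  rw [Finset.sum_eq_single a]
  · simp [mul_assoc]
  · intro b _ hb; simp [hb]
  · simp

/-! ### The random codebook -/

section OneShot

variable {S T W U V A B : Type*}
  [Fintype S] [Fintype T] [Fintype W] [Fintype U] [Fintype V] [Fintype A] [Fintype B]
  [DecidableEq S] [DecidableEq T] [DecidableEq A] [DecidableEq B]

/-- One cloud of the codebook: a centre `w`, satellites `u (s, a)` indexed by a source word `s`
and a slot `a`, and satellites `v (t, b)`. -/
abbrev Cloud (S T W U V A B : Type*) := W × (S × A → U) × (T × B → V)

/-- The weight of a cloud: the centre is drawn from `q0`, and then all the satellites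
independently, `u (s, a)` from `q1 s w` and `v (t, b)` from `q2 t w`. -/
noncomputable def cloudW (q0 : W → ℝ) (q1 : S → W → U → ℝ) (q2 : T → W → V → ℝ)
    (cl : Cloud S T W U V A B) : ℝ :=
  q0 cl.1 * ((∏ i : S × A, q1 i.1 cl.1 (cl.2.1 i)) * ∏ i : T × B, q2 i.1 cl.1 (cl.2.2 i))

lemma cloudW_nonneg {q0 : W → ℝ} {q1 : S → W → U → ℝ} {q2 : T → W → V → ℝ}
    (h0 : ∀ w, 0 ≤ q0 w) (h1 : ∀ s w u, 0 ≤ q1 s w u) (h2 : ∀ t w v, 0 ≤ q2 t w v)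
    (cl : Cloud S T W U V A B) : 0 ≤ cloudW q0 q1 q2 cl :=
  mul_nonneg (h0 _) (mul_nonneg (Finset.prod_nonneg fun _ _ => h1 _ _ _)
    (Finset.prod_nonneg fun _ _ => h2 _ _ _))

/-- Expectations over a cloud can be taken centre first, then over the two satellite books. -/
lemma cloud_sum (q0 : W → ℝ) (q1 : S → W → U → ℝ) (q2 : T → W → V → ℝ)
    (F : W → (S × A → U) → (T × B → V) → ℝ) :
    ∑ cl : Cloud S T W U V A B, cloudW q0 q1 q2 cl * F cl.1 cl.2.1 cl.2.2
      = ∑ w, q0 w * ∑ ub : S × A → U, (∏ i, q1 i.1 w (ub i)) *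
          ∑ vb : T × B → V, (∏ i, q2 i.1 w (vb i)) * F w ub vb := by
  rw [Fintype.sum_prod_type]
  refine Finset.sum_congr rfl fun w _ => ?_
  rw [Fintype.sum_prod_type, Finset.mul_sum]
  refine Finset.sum_congr rfl fun ub _ => ?_
  rw [Finset.mul_sum, Finset.mul_sum]
  refine Finset.sum_congr rfl fun vb _ => ?_
  simp only [cloudW]; ring

variable {q0 : W → ℝ} {q1 : S → W → U → ℝ} {q2 : T → W → V → ℝ}

lemma cloud_const (h0 : ∑ w, q0 w = 1) (h1 : ∀ s w, ∑ u, q1 s w u = 1)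
    (h2 : ∀ t w, ∑ v, q2 t w v = 1) :
    ∑ cl : Cloud S T W U V A B, cloudW q0 q1 q2 cl = 1 := by
  have := cloud_sum (A := A) (B := B) q0 q1 q2 (fun _ _ _ => 1)
  simp only [mul_one] at this
  rw [this]
  have e1 : ∀ w, ∑ vb : T × B → V, (∏ i, q2 i.1 w (vb i)) = 1 := fun w =>
    prodE_const (fun (i : T × B) => q2 i.1 w) (fun i => h2 _ _)
  have e2 : ∀ w, ∑ ub : S × A → U, (∏ i, q1 i.1 w (ub i)) = 1 := fun w =>
    prodE_const (fun (i : S × A) => q1 i.1 w) (fun i => h1 _ _)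
  simp [e1, e2, h0]

lemma cloud_E1 (h1 : ∀ s w, ∑ u, q1 s w u = 1)
    (h2 : ∀ t w, ∑ v, q2 t w v = 1) (s : S) (a : A) (t : T) (b : B) (F : W → U → V → ℝ) :
    ∑ cl : Cloud S T W U V A B, cloudW q0 q1 q2 cl * F cl.1 (cl.2.1 (s, a)) (cl.2.2 (t, b))
      = ∑ w, q0 w * ∑ u, q1 s w u * ∑ v, q2 t w v * F w u v := by
  rw [cloud_sum q0 q1 q2 (fun w ub vb => F w (ub (s, a)) (vb (t, b)))]
  refine Finset.sum_congr rfl fun w _ => ?_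
  congr 1
  have e : ∀ ub : S × A → U, ∑ vb : T × B → V, (∏ i, q2 i.1 w (vb i)) * F w (ub (s, a)) (vb (t, b))
      = ∑ v, q2 t w v * F w (ub (s, a)) v := fun ub =>
    prodE_one (fun (i : T × B) => q2 i.1 w) (fun i => h2 _ _) (t, b) (F w (ub (s, a)))
  simp_rw [e]
  exact prodE_one (fun (i : S × A) => q1 i.1 w) (fun i => h1 _ _) (s, a)
    (fun u => ∑ v, q2 t w v * F w u v)

/-- A satellite belonging to a different source word `s'` is, given the centre, independent
of the satellites of `(s, t)`. -/
lemma cloud_E2 (h1 : ∀ s w, ∑ u, q1 s w u = 1)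
    (h2 : ∀ t w, ∑ v, q2 t w v = 1) (s s' : S) (a a' : A) (t : T) (b : B) (hs : s ≠ s')
    (F : W → U → V → ℝ) (G : W → U → ℝ) :
    ∑ cl : Cloud S T W U V A B, cloudW q0 q1 q2 cl *
        (F cl.1 (cl.2.1 (s, a)) (cl.2.2 (t, b)) * G cl.1 (cl.2.1 (s', a')))
      = ∑ w, q0 w * ((∑ u, q1 s w u * ∑ v, q2 t w v * F w u v) * ∑ u, q1 s' w u * G w u) := by
  rw [cloud_sum q0 q1 q2 (fun w ub vb => F w (ub (s, a)) (vb (t, b)) * G w (ub (s', a')))]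
  refine Finset.sum_congr rfl fun w _ => ?_
  congr 1
  have e : ∀ ub : S × A → U, ∑ vb : T × B → V, (∏ i, q2 i.1 w (vb i)) *
        (F w (ub (s, a)) (vb (t, b)) * G w (ub (s', a')))
      = (∑ v, q2 t w v * F w (ub (s, a)) v) * G w (ub (s', a')) := fun ub => by
    rw [← prodE_one (fun (i : T × B) => q2 i.1 w) (fun i => h2 _ _) (t, b) (F w (ub (s, a))),
      Finset.sum_mul]
    simp_rw [mul_assoc]
  simp_rw [e]
  exact prodE_two_mul (fun (i : S × A) => q1 i.1 w) (fun i => h1 _ _) (s, a) (s', a')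
    (by simp [hs]) (fun u => ∑ v, q2 t w v * F w u v) (G w)

end OneShot

/-! ### Second moment of the number of admissible codewords -/

/-- A double sum over slots of a nonnegative function of two satellites: distinct slots are
independent, equal slots give the diagonal term. -/
lemma pair_sum_le {ι α A : Type*} [Fintype ι] [DecidableEq ι] [Fintype α] [Fintype A]
    (μ : ι → α → ℝ) (hμ : ∀ i, ∑ a, μ i a = 1) (hμ0 : ∀ i a, 0 ≤ μ i a)
    (e : A → ι) (he : Function.Injective e) (m : α → ℝ) (hm : ∀ a, μ (e a) = m)
    (φ : α → α → ℝ) (hφ : ∀ x y, 0 ≤ φ x y) :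
    ∑ x : ι → α, (∏ i, μ i (x i)) * ∑ a, ∑ a', φ (x (e a)) (x (e a'))
      ≤ Fintype.card A * ∑ u, m u * φ u u
        + (Fintype.card A : ℝ) ^ 2 * ∑ u, ∑ u', m u * m u' * φ u u' := by
  classical
  set D := ∑ u, m u * φ u u with hD
  set O := ∑ u, ∑ u', m u * m u' * φ u u' with hO
  have hm0 : ∀ (_ : A) u, 0 ≤ m u := fun a u => by rw [← hm a]; exact hμ0 _ _
  have key : ∀ a a', ∑ x : ι → α, (∏ i, μ i (x i)) * φ (x (e a)) (x (e a'))
      ≤ (if a = a' then D else 0) + O := by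
    intro a a'
    have hD0 : 0 ≤ D := Finset.sum_nonneg fun u _ => mul_nonneg (hm0 a u) (hφ _ _)
    have hO0 : 0 ≤ O := Finset.sum_nonneg fun u _ => Finset.sum_nonneg fun u' _ =>
      mul_nonneg (mul_nonneg (hm0 a u) (hm0 a u')) (hφ _ _)
    by_cases h : a = a'
    · subst h
      rw [prodE_one μ hμ (e a) (fun u => φ u u), hm]
      simp [hD] ; exact hO0
    · rw [prodE_two μ hμ (e a) (e a') (fun h' => h (he h')), hm, hm]
      simp [h, hO]
  calc _ = ∑ a, ∑ a', ∑ x : ι → α, (∏ i, μ i (x i)) * φ (x (e a)) (x (e a')) := by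
        simp_rw [Finset.mul_sum]
        rw [Finset.sum_comm]
        refine Finset.sum_congr rfl fun a _ => ?_
        rw [Finset.sum_comm]
    _ ≤ ∑ a : A, ∑ a' : A, ((if a = a' then D else 0) + O) :=
        Finset.sum_le_sum fun a _ => Finset.sum_le_sum fun a' _ => key a a'
    _ = _ := by
        simp [Finset.sum_add_distrib]; ring

section OneShot2

variable {S T W U V A B J : Type*}
  [Fintype S] [Fintype T] [Fintype W] [Fintype U] [Fintype V] [Fintype A] [Fintype B] [Fintype J]
  [DecidableEq S] [DecidableEq T] [DecidableEq A] [DecidableEq B] [DecidableEq J]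
  {q0 : W → ℝ} {q1 : S → W → U → ℝ} {q2 : T → W → V → ℝ}

/-- The average over all slot pairs of the importance weight `lam` at the source pair `(s, t)`. -/
noncomputable def cloudAvg (s : S) (t : T) (lam : W → U → V → ℝ) (cl : Cloud S T W U V A B) : ℝ :=
  (∑ a : A, ∑ b : B, lam cl.1 (cl.2.1 (s, a)) (cl.2.2 (t, b))) /
    ((Fintype.card A : ℝ) * Fintype.card B)

lemma cloudAvg_mean [Nonempty A] [Nonempty B] (h1 : ∀ s w, ∑ u, q1 s w u = 1)
    (h2 : ∀ t w, ∑ v, q2 t w v = 1) (s : S) (t : T) (lam : W → U → V → ℝ) :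
    ∑ cl : Cloud S T W U V A B, cloudW q0 q1 q2 cl * cloudAvg s t lam cl
      = ∑ w, q0 w * ∑ u, q1 s w u * ∑ v, q2 t w v * lam w u v := by
  have hA : (Fintype.card A : ℝ) ≠ 0 := by exact_mod_cast Fintype.card_ne_zero
  have hB : (Fintype.card B : ℝ) ≠ 0 := by exact_mod_cast Fintype.card_ne_zero
  simp only [cloudAvg, mul_div_assoc', ← Finset.sum_div, Finset.mul_sum (s := (Finset.univ : Finset A)), Finset.mul_sum (s := (Finset.univ : Finset B))]
  rw [Finset.sum_comm]
  have : ∀ a : A, ∑ cl : Cloud S T W U V A B, ∑ b, cloudW q0 q1 q2 cl *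
      lam cl.1 (cl.2.1 (s, a)) (cl.2.2 (t, b))
      = Fintype.card B * ∑ w, q0 w * ∑ u, q1 s w u * ∑ v, q2 t w v * lam w u v := by
    intro a
    rw [Finset.sum_comm]
    simp_rw [cloud_E1 h1 h2 s a t _ lam]
    simp
  simp_rw [this]
  simp
  field_simp

/-- Second moment of the total weight of a cloud with centre `w`. The four terms are those of two
slot pairs with both slots equal, only the first, only the second, and neither equal. -/
lemma cloudAvg_sq_fix (h10 : ∀ s w u, 0 ≤ q1 s w u) (h20 : ∀ t w v, 0 ≤ q2 t w v)
    (h1 : ∀ s w, ∑ u, q1 s w u = 1)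
    (h2 : ∀ t w, ∑ v, q2 t w v = 1) (s : S) (t : T) (w : W) (lam : U → V → ℝ)
    (hl : ∀ u v, 0 ≤ lam u v) :
    ∑ ub : S × A → U, (∏ i, q1 i.1 w (ub i)) * ∑ vb : T × B → V, (∏ i, q2 i.1 w (vb i)) *
        (∑ a : A, ∑ b : B, lam (ub (s, a)) (vb (t, b))) ^ 2
      ≤ (Fintype.card A : ℝ) * Fintype.card B * ∑ u, q1 s w u * ∑ v, q2 t w v * lam u v ^ 2
        + (Fintype.card A : ℝ) * (Fintype.card B : ℝ) ^ 2 *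
            ∑ u, q1 s w u * (∑ v, q2 t w v * lam u v) ^ 2
        + (Fintype.card A : ℝ) ^ 2 * Fintype.card B *
            ∑ v, q2 t w v * (∑ u, q1 s w u * lam u v) ^ 2
        + (Fintype.card A : ℝ) ^ 2 * (Fintype.card B : ℝ) ^ 2 *
            (∑ u, q1 s w u * ∑ v, q2 t w v * lam u v) ^ 2 := by
  set a0 : ℝ := (Fintype.card A : ℝ)
  set b0 : ℝ := (Fintype.card B : ℝ)
  have ha0 : 0 ≤ a0 := Nat.cast_nonneg _
  have hb0 : 0 ≤ b0 := Nat.cast_nonneg _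
  let φ : U → U → ℝ := fun u u' => b0 * ∑ v, q2 t w v * (lam u v * lam u' v)
    + b0 ^ 2 * ∑ v, ∑ v', q2 t w v * q2 t w v' * (lam u v * lam u' v')
  have hφ : ∀ u u', 0 ≤ φ u u' := fun u u' => by
    refine add_nonneg (mul_nonneg hb0 (Finset.sum_nonneg fun v _ => ?_))
      (mul_nonneg (by positivity) (Finset.sum_nonneg fun v _ => Finset.sum_nonneg fun v' _ => ?_))
    · exact mul_nonneg (h20 _ _ _) (mul_nonneg (hl _ _) (hl _ _))
    · exact mul_nonneg (mul_nonneg (h20 _ _ _) (h20 _ _ _)) (mul_nonneg (hl _ _) (hl _ _))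
  have inner : ∀ ub : S × A → U, ∑ vb : T × B → V, (∏ i, q2 i.1 w (vb i)) *
        (∑ a : A, ∑ b : B, lam (ub (s, a)) (vb (t, b))) ^ 2
      ≤ ∑ a, ∑ a', φ (ub (s, a)) (ub (s, a')) := by
    intro ub
    have e : ∀ vb : T × B → V, (∏ i, q2 i.1 w (vb i)) *
        (∑ a : A, ∑ b : B, lam (ub (s, a)) (vb (t, b))) ^ 2
        = ∑ a, ∑ a', (∏ i, q2 i.1 w (vb i)) *
          ∑ b, ∑ b', lam (ub (s, a)) (vb (t, b)) * lam (ub (s, a')) (vb (t, b')) := by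
      intro vb
      rw [sq, Finset.sum_mul_sum, Finset.mul_sum]
      refine Finset.sum_congr rfl fun a _ => ?_
      rw [Finset.mul_sum]
      refine Finset.sum_congr rfl fun a' _ => ?_
      rw [Finset.sum_mul_sum]
    simp_rw [e]
    rw [Finset.sum_comm]
    refine Finset.sum_le_sum fun a _ => ?_
    rw [Finset.sum_comm]
    refine Finset.sum_le_sum fun a' _ => ?_
    exact pair_sum_le (fun i : T × B => q2 i.1 w) (fun i => h2 _ _) (fun i v => h20 _ _ _)
      (fun b => (t, b)) (fun b b' h => by simpa using h) (q2 t w) (fun _ => rfl)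
      (fun v v' => lam (ub (s, a)) v * lam (ub (s, a')) v')
      (fun v v' => mul_nonneg (hl _ _) (hl _ _))
  calc _ ≤ ∑ ub : S × A → U, (∏ i, q1 i.1 w (ub i)) *
          ∑ a, ∑ a', φ (ub (s, a)) (ub (s, a')) :=
        Finset.sum_le_sum fun ub _ => mul_le_mul_of_nonneg_left (inner ub)
          (Finset.prod_nonneg fun i _ => h10 _ _ _)
    _ ≤ a0 * ∑ u, q1 s w u * φ u u + a0 ^ 2 * ∑ u, ∑ u', q1 s w u * q1 s w u' * φ u u' :=
        pair_sum_le (fun i : S × A => q1 i.1 w) (fun i => h1 _ _) (fun i v => h10 _ _ _)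
          (fun b => (s, b)) (fun b b' h => by simpa using h) (q1 s w) (fun _ => rfl) φ hφ
    _ = _ := by
        have e1 : ∀ u u', ∑ v, ∑ v', q2 t w v * q2 t w v' * (lam u v * lam u' v')
            = (∑ v, q2 t w v * lam u v) * (∑ v, q2 t w v * lam u' v) := by
          intro u u'
          rw [Finset.sum_mul_sum]
          exact Finset.sum_congr rfl fun v _ => Finset.sum_congr rfl fun v' _ => by ring
        have e2 : ∑ u, q1 s w u * φ u u = b0 * ∑ u, q1 s w u * ∑ v, q2 t w v * lam u v ^ 2
            + b0 ^ 2 * ∑ u, q1 s w u * (∑ v, q2 t w v * lam u v) ^ 2 := by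
          rw [Finset.mul_sum, Finset.mul_sum, ← Finset.sum_add_distrib]
          refine Finset.sum_congr rfl fun u _ => ?_
          simp only [φ, e1, sq]; ring
        have e3 : ∑ u, ∑ u', q1 s w u * q1 s w u' * φ u u'
            = b0 * ∑ v, q2 t w v * (∑ u, q1 s w u * lam u v) ^ 2
              + b0 ^ 2 * (∑ u, q1 s w u * ∑ v, q2 t w v * lam u v) ^ 2 := by
          have f1 : ∑ v, q2 t w v * (∑ u, q1 s w u * lam u v) ^ 2
              = ∑ u, ∑ u', q1 s w u * q1 s w u' * ∑ v, q2 t w v * (lam u v * lam u' v) := by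
            simp_rw [sq, Finset.sum_mul_sum, Finset.mul_sum]
            rw [Finset.sum_comm]
            refine Finset.sum_congr rfl fun u _ => ?_
            rw [Finset.sum_comm]
            exact Finset.sum_congr rfl fun u' _ => Finset.sum_congr rfl fun v _ => by ring
          rw [f1, sq (∑ u, q1 s w u * ∑ v, q2 t w v * lam u v), Finset.sum_mul_sum, Finset.mul_sum,
            Finset.mul_sum,
            ← Finset.sum_add_distrib]
          refine Finset.sum_congr rfl fun u _ => ?_
          rw [Finset.mul_sum, Finset.mul_sum, ← Finset.sum_add_distrib]
          refine Finset.sum_congr rfl fun u' _ => ?_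
          simp only [φ, e1]; ring
        rw [e2, e3]; ring

/-- Second moment of the average weight of a random cloud. -/
lemma cloudAvg_sq [Nonempty A] [Nonempty B] (h00 : ∀ w, 0 ≤ q0 w)
    (h10 : ∀ s w u, 0 ≤ q1 s w u) (h20 : ∀ t w v, 0 ≤ q2 t w v)
    (h1 : ∀ s w, ∑ u, q1 s w u = 1)
    (h2 : ∀ t w, ∑ v, q2 t w v = 1) (s : S) (t : T) (lam : W → U → V → ℝ)
    (hl : ∀ w u v, 0 ≤ lam w u v) (θ0 θ1 θ2 θ3 : ℝ)
    (t3 : ∑ w, q0 w * ∑ u, q1 s w u * ∑ v, q2 t w v * lam w u v ^ 2 ≤ θ3)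
    (t1 : ∑ w, q0 w * ∑ u, q1 s w u * (∑ v, q2 t w v * lam w u v) ^ 2 ≤ θ1)
    (t2 : ∑ w, q0 w * ∑ v, q2 t w v * (∑ u, q1 s w u * lam w u v) ^ 2 ≤ θ2)
    (t0 : ∑ w, q0 w * (∑ u, q1 s w u * ∑ v, q2 t w v * lam w u v) ^ 2 ≤ θ0) :
    ∑ cl : Cloud S T W U V A B, cloudW q0 q1 q2 cl * cloudAvg s t lam cl ^ 2
      ≤ θ0 + θ1 / Fintype.card A + θ2 / Fintype.card B
        + θ3 / (Fintype.card A * Fintype.card B) := by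
  have hA : (0 : ℝ) < (Fintype.card A : ℝ) := by exact_mod_cast Fintype.card_pos
  have hB : (0 : ℝ) < (Fintype.card B : ℝ) := by exact_mod_cast Fintype.card_pos
  simp only [cloudAvg, div_pow, mul_div_assoc', ← Finset.sum_div]
  rw [cloud_sum q0 q1 q2 (fun w ub vb => (∑ a : A, ∑ b : B, lam w (ub (s, a)) (vb (t, b))) ^ 2)]
  set a0 : ℝ := (Fintype.card A : ℝ)
  set b0 : ℝ := (Fintype.card B : ℝ)
  rw [div_le_iff₀ (by positivity)]
  calc _ ≤ ∑ w, q0 w * (a0 * b0 * ∑ u, q1 s w u * ∑ v, q2 t w v * lam w u v ^ 2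
        + a0 * b0 ^ 2 * ∑ u, q1 s w u * (∑ v, q2 t w v * lam w u v) ^ 2
        + a0 ^ 2 * b0 * ∑ v, q2 t w v * (∑ u, q1 s w u * lam w u v) ^ 2
        + a0 ^ 2 * b0 ^ 2 * (∑ u, q1 s w u * ∑ v, q2 t w v * lam w u v) ^ 2) :=
        Finset.sum_le_sum fun w _ => mul_le_mul_of_nonneg_left
          (cloudAvg_sq_fix h10 h20 h1 h2 s t w (lam w) (hl w)) (h00 w)
    _ = a0 * b0 * ∑ w, q0 w * ∑ u, q1 s w u * ∑ v, q2 t w v * lam w u v ^ 2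
        + a0 * b0 ^ 2 * ∑ w, q0 w * ∑ u, q1 s w u * (∑ v, q2 t w v * lam w u v) ^ 2
        + a0 ^ 2 * b0 * ∑ w, q0 w * ∑ v, q2 t w v * (∑ u, q1 s w u * lam w u v) ^ 2
        + a0 ^ 2 * b0 ^ 2 * ∑ w, q0 w * (∑ u, q1 s w u * ∑ v, q2 t w v * lam w u v) ^ 2 := by
        rw [Finset.mul_sum, Finset.mul_sum, Finset.mul_sum, Finset.mul_sum,
          ← Finset.sum_add_distrib, ← Finset.sum_add_distrib, ← Finset.sum_add_distrib]
        exact Finset.sum_congr rfl fun w _ => by ring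
    _ ≤ a0 * b0 * θ3 + a0 * b0 ^ 2 * θ1 + a0 ^ 2 * b0 * θ2 + a0 ^ 2 * b0 ^ 2 * θ0 := by
        gcongr
    _ = _ := by field_simp; ring

/-- Chebyshev for the average of the clouds' weights around `1`. -/
lemma book_sq [Nonempty J] {Ω : Type*} [Fintype Ω] (Q : Ω → ℝ)
    (hQ : ∑ x, Q x = 1) (f : Ω → ℝ) (m D : ℝ) (hm : ∑ x, Q x * f x = m) (hm0 : 0 ≤ m) (hm1 : m ≤ 1)
    (hD : ∑ x, Q x * f x ^ 2 ≤ D) :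
    ∑ C : J → Ω, (∏ j, Q (C j)) * ((∑ j, f (C j)) / Fintype.card J - 1) ^ 2
      ≤ (1 - m) + D / Fintype.card J := by
  have hJ : (0 : ℝ) < (Fintype.card J : ℝ) := by exact_mod_cast Fintype.card_pos
  have e : ∀ C : J → Ω, ((∑ j, f (C j)) / Fintype.card J - 1) ^ 2
      = (∑ j, ∑ l, (f (C j) - 1) * (f (C l) - 1)) / (Fintype.card J : ℝ) ^ 2 := by
    intro C
    rw [← Finset.sum_mul_sum, Finset.sum_sub_distrib]
    simp
    field_simp
  simp_rw [e, mul_div_assoc', ← Finset.sum_div]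
  rw [div_le_iff₀ (by positivity)]
  have key : ∀ j l, ∑ C : J → Ω, (∏ j, Q (C j)) * ((f (C j) - 1) * (f (C l) - 1))
      ≤ (if j = l then D else 0) + (1 - m) := by
    intro j l
    have e1 : ∑ x, Q x * (f x - 1) = m - 1 := by
      simp_rw [mul_sub, Finset.sum_sub_distrib, mul_one, hm, hQ]
    by_cases h : j = l
    · subst h
      rw [prodE_one (fun _ => Q) (fun _ => hQ) j (fun x => (f x - 1) * (f x - 1))]
      have : ∑ x, Q x * ((f x - 1) * (f x - 1)) = ∑ x, Q x * f x ^ 2 - 2 * m + 1 := by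
        rw [← hm, ← hQ, Finset.mul_sum, ← Finset.sum_sub_distrib, ← Finset.sum_add_distrib]
        exact Finset.sum_congr rfl fun x _ => by rw [hQ]; ring
      rw [this, if_pos rfl]; linarith
    · rw [prodE_two_mul (fun _ => Q) (fun _ => hQ) j l h (fun x => f x - 1) (fun x => f x - 1), e1,
        if_neg h]
      nlinarith
  calc _ = ∑ j, ∑ l, ∑ C : J → Ω, (∏ j, Q (C j)) * ((f (C j) - 1) * (f (C l) - 1)) := by
        simp_rw [Finset.mul_sum]
        rw [Finset.sum_comm]
        refine Finset.sum_congr rfl fun a _ => ?_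
        rw [Finset.sum_comm]
    _ ≤ ∑ j : J, ∑ l : J, ((if j = l then D else 0) + (1 - m)) :=
        Finset.sum_le_sum fun a _ => Finset.sum_le_sum fun a' _ => key a a'
    _ = _ := by
        simp [Finset.sum_add_distrib]; field_simp; ring

end OneShot2

/-! ### Truncated importance weights -/

section Cover

variable {W U V : Type*} [Fintype W] [Fintype U] [Fintype V]

/-- The typical set for the encoder: the target `c` and its marginals `(w)`, `(w, u)`, `(w, v)`
exceed the proposal weights at most by the factors `θ3`, `θ0`, `θ1`, `θ2`. -/
def CovTyp (q0 : W → ℝ) (μ : W → U → ℝ) (ν : W → V → ℝ) (c : W → U → V → ℝ)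
    (θ0 θ1 θ2 θ3 : ℝ) (w : W) (u : U) (v : V) : Prop :=
  ∑ u, ∑ v, c w u v ≤ θ0 * q0 w ∧ ∑ v, c w u v ≤ θ1 * (q0 w * μ w u) ∧
    ∑ u, c w u v ≤ θ2 * (q0 w * ν w v) ∧ c w u v ≤ θ3 * (q0 w * μ w u * ν w v)

open Classical in
/-- The target `c` truncated to the typical set. -/
noncomputable def covT (q0 : W → ℝ) (μ : W → U → ℝ) (ν : W → V → ℝ) (c : W → U → V → ℝ)
    (θ0 θ1 θ2 θ3 : ℝ) (w : W) (u : U) (v : V) : ℝ :=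
  if CovTyp q0 μ ν c θ0 θ1 θ2 θ3 w u v then c w u v else 0

/-- The importance weight of the truncated target with respect to the proposal. -/
noncomputable def covL (q0 : W → ℝ) (μ : W → U → ℝ) (ν : W → V → ℝ) (c : W → U → V → ℝ)
    (θ0 θ1 θ2 θ3 : ℝ) (w : W) (u : U) (v : V) : ℝ :=
  covT q0 μ ν c θ0 θ1 θ2 θ3 w u v / (q0 w * μ w u * ν w v)

variable {q0 : W → ℝ} {μ : W → U → ℝ} {ν : W → V → ℝ} {c : W → U → V → ℝ} {θ0 θ1 θ2 θ3 : ℝ}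

lemma covT_nonneg (hc : ∀ w u v, 0 ≤ c w u v) (w : W) (u : U) (v : V) :
    0 ≤ covT q0 μ ν c θ0 θ1 θ2 θ3 w u v := by
  unfold covT; split_ifs <;> simp [hc]

lemma covT_le (hc : ∀ w u v, 0 ≤ c w u v) (w : W) (u : U) (v : V) :
    covT q0 μ ν c θ0 θ1 θ2 θ3 w u v ≤ c w u v := by
  unfold covT; split_ifs <;> simp [hc]

lemma covL_nonneg (h0 : ∀ w, 0 ≤ q0 w) (h1 : ∀ w u, 0 ≤ μ w u) (h2 : ∀ w v, 0 ≤ ν w v)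
    (hc : ∀ w u v, 0 ≤ c w u v) (w : W) (u : U) (v : V) :
    0 ≤ covL q0 μ ν c θ0 θ1 θ2 θ3 w u v :=
  div_nonneg (covT_nonneg hc _ _ _) (mul_nonneg (mul_nonneg (h0 _) (h1 _ _)) (h2 _ _))

/-- On the typical set the target vanishes wherever the proposal does, so reweighting the
proposal recovers the truncated target. -/
lemma covL_mul (hc : ∀ w u v, 0 ≤ c w u v) (w : W) (u : U) (v : V) :
    q0 w * μ w u * ν w v * covL q0 μ ν c θ0 θ1 θ2 θ3 w u v
      = covT q0 μ ν c θ0 θ1 θ2 θ3 w u v := by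
  unfold covL
  by_cases h : q0 w * μ w u * ν w v = 0
  · rw [h, zero_mul]
    unfold covT
    split_ifs with ht
    · have := ht.2.2.2
      rw [h, mul_zero] at this
      exact le_antisymm (hc _ _ _) this
    · rfl
  · rw [mul_div_assoc', mul_div_cancel_left₀ _ h]

lemma cov_s3 (h0 : ∀ w, 0 ≤ q0 w) (h1 : ∀ w u, 0 ≤ μ w u) (h2 : ∀ w v, 0 ≤ ν w v)
    (hθ : 0 ≤ θ3) (w : W) (u : U) (v : V) :
    covT q0 μ ν c θ0 θ1 θ2 θ3 w u v ≤ θ3 * (q0 w * μ w u * ν w v) := by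
  unfold covT
  split_ifs with h
  · exact h.2.2.2
  · exact mul_nonneg hθ (mul_nonneg (mul_nonneg (h0 _) (h1 _ _)) (h2 _ _))

lemma cov_s1 (h0 : ∀ w, 0 ≤ q0 w) (h1 : ∀ w u, 0 ≤ μ w u)
    (hc : ∀ w u v, 0 ≤ c w u v) (hθ : 0 ≤ θ1) (w : W) (u : U) :
    ∑ v, covT q0 μ ν c θ0 θ1 θ2 θ3 w u v ≤ θ1 * (q0 w * μ w u) := by
  by_cases h : ∃ v, CovTyp q0 μ ν c θ0 θ1 θ2 θ3 w u v
  · obtain ⟨v, hv⟩ := h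
    exact (Finset.sum_le_sum fun v _ => covT_le hc w u v).trans hv.2.1
  · push Not at h
    simp only [covT, h, if_false, Finset.sum_const_zero]
    exact mul_nonneg hθ (mul_nonneg (h0 _) (h1 _ _))

lemma cov_s2 (h0 : ∀ w, 0 ≤ q0 w) (h2 : ∀ w v, 0 ≤ ν w v)
    (hc : ∀ w u v, 0 ≤ c w u v) (hθ : 0 ≤ θ2) (w : W) (v : V) :
    ∑ u, covT q0 μ ν c θ0 θ1 θ2 θ3 w u v ≤ θ2 * (q0 w * ν w v) := by
  by_cases h : ∃ u, CovTyp q0 μ ν c θ0 θ1 θ2 θ3 w u v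
  · obtain ⟨v, hv⟩ := h
    exact (Finset.sum_le_sum fun u _ => covT_le hc w u _).trans hv.2.2.1
  · push Not at h
    simp only [covT, h, if_false, Finset.sum_const_zero]
    exact mul_nonneg hθ (mul_nonneg (h0 _) (h2 _ _))

lemma cov_s0 (h0 : ∀ w, 0 ≤ q0 w)
    (hc : ∀ w u v, 0 ≤ c w u v) (hθ : 0 ≤ θ0) (w : W) :
    ∑ u, ∑ v, covT q0 μ ν c θ0 θ1 θ2 θ3 w u v ≤ θ0 * q0 w := by
  by_cases h : ∃ u v, CovTyp q0 μ ν c θ0 θ1 θ2 θ3 w u v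
  · obtain ⟨u, v, hv⟩ := h
    exact (Finset.sum_le_sum fun u _ => Finset.sum_le_sum fun v _ => covT_le hc w u v).trans hv.1
  · push Not at h
    simp only [covT, h, if_false, Finset.sum_const_zero]
    exact mul_nonneg hθ (h0 _)

lemma covT_total_le (hc : ∀ w u v, 0 ≤ c w u v) (hc1 : ∑ w, ∑ u, ∑ v, c w u v = 1) :
    ∑ w, ∑ u, ∑ v, covT q0 μ ν c θ0 θ1 θ2 θ3 w u v ≤ 1 := by
  rw [← hc1]
  exact Finset.sum_le_sum fun w _ => Finset.sum_le_sum fun u _ => Finset.sum_le_sum fun v _ =>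
    covT_le hc w u v

lemma covL_mean (hc : ∀ w u v, 0 ≤ c w u v) :
    ∑ w, q0 w * ∑ u, μ w u * ∑ v, ν w v * covL q0 μ ν c θ0 θ1 θ2 θ3 w u v
      = ∑ w, ∑ u, ∑ v, covT q0 μ ν c θ0 θ1 θ2 θ3 w u v := by
  simp_rw [← covL_mul hc, Finset.mul_sum, mul_assoc]

/-- If `p * x ≤ θ * p` then `p * x ^ 2 ≤ θ * (p * x)`: the step from a pointwise bound on a density
to a bound on its second moment. -/
lemma mul_sq_le_of {p x θ : ℝ} (hx : 0 ≤ x) (h : p * x ≤ θ * p) : p * x ^ 2 ≤ θ * (p * x) := by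
  nlinarith [mul_le_mul_of_nonneg_right h hx]

/-- The second moments of the truncated importance weight and of its partial averages: the
typicality bounds of `CovTyp` bound them by `θ3`, `θ1`, `θ2`, `θ0`. -/
lemma cov_bounds (h0 : ∀ w, 0 ≤ q0 w) (h1 : ∀ w u, 0 ≤ μ w u) (h2 : ∀ w v, 0 ≤ ν w v)
    (hc : ∀ w u v, 0 ≤ c w u v) (hc1 : ∑ w, ∑ u, ∑ v, c w u v = 1)
    (ht0 : 0 ≤ θ0) (ht1 : 0 ≤ θ1) (ht2 : 0 ≤ θ2) (ht3 : 0 ≤ θ3) :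
    (∑ w, q0 w * ∑ u, μ w u * ∑ v, ν w v * covL q0 μ ν c θ0 θ1 θ2 θ3 w u v ^ 2 ≤ θ3) ∧
    (∑ w, q0 w * ∑ u, μ w u * (∑ v, ν w v * covL q0 μ ν c θ0 θ1 θ2 θ3 w u v) ^ 2 ≤ θ1) ∧
    (∑ w, q0 w * ∑ v, ν w v * (∑ u, μ w u * covL q0 μ ν c θ0 θ1 θ2 θ3 w u v) ^ 2 ≤ θ2) ∧
    (∑ w, q0 w * (∑ u, μ w u * ∑ v, ν w v * covL q0 μ ν c θ0 θ1 θ2 θ3 w u v) ^ 2 ≤ θ0) := by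
  set τ := covT q0 μ ν c θ0 θ1 θ2 θ3 with hτ
  set l := covL q0 μ ν c θ0 θ1 θ2 θ3 with hl
  have lm : ∀ w u v, q0 w * μ w u * ν w v * l w u v = τ w u v := covL_mul hc
  have l0 : ∀ w u v, 0 ≤ l w u v := covL_nonneg h0 h1 h2 hc
  have tot : ∑ w, ∑ u, ∑ v, τ w u v ≤ 1 := covT_total_le hc hc1
  have lv0 : ∀ w u, 0 ≤ ∑ v, ν w v * l w u v := fun w u =>
    Finset.sum_nonneg fun v _ => mul_nonneg (h2 _ _) (l0 _ _ _)
  have lu0 : ∀ w v, 0 ≤ ∑ u, μ w u * l w u v := fun w u =>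
    Finset.sum_nonneg fun v _ => mul_nonneg (h1 _ _) (l0 _ _ _)
  have lw0 : ∀ w, 0 ≤ ∑ u, μ w u * ∑ v, ν w v * l w u v := fun w =>
    Finset.sum_nonneg fun u _ => mul_nonneg (h1 _ _) (lv0 _ _)
  have ev : ∀ w u, q0 w * μ w u * ∑ v, ν w v * l w u v = ∑ v, τ w u v := fun w u => by
    simp_rw [← lm, Finset.mul_sum, mul_assoc]
  have eu : ∀ w v, q0 w * ν w v * ∑ u, μ w u * l w u v = ∑ u, τ w u v := fun w v => by
    simp_rw [← lm, Finset.mul_sum]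
    exact Finset.sum_congr rfl fun _ _ => by ring
  have ew : ∀ w, q0 w * ∑ u, μ w u * ∑ v, ν w v * l w u v = ∑ u, ∑ v, τ w u v := fun w => by
    simp_rw [← lm, Finset.mul_sum, mul_assoc]
  refine ⟨?_, ?_, ?_, ?_⟩
  · calc _ = ∑ w, ∑ u, ∑ v, (q0 w * μ w u * ν w v) * l w u v ^ 2 := by
          simp_rw [Finset.mul_sum, mul_assoc]
      _ ≤ ∑ w, ∑ u, ∑ v, θ3 * τ w u v := by
          refine Finset.sum_le_sum fun w _ => Finset.sum_le_sum fun u _ =>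
            Finset.sum_le_sum fun v _ => ?_
          rw [← lm]
          refine mul_sq_le_of (l0 _ _ _) ?_
          rw [lm]; exact cov_s3 h0 h1 h2 ht3 w u v
      _ = θ3 * ∑ w, ∑ u, ∑ v, τ w u v := by simp_rw [Finset.mul_sum]
      _ ≤ θ3 := mul_le_of_le_one_right ht3 tot
  · calc _ = ∑ w, ∑ u, (q0 w * μ w u) * (∑ v, ν w v * l w u v) ^ 2 := by
          refine Finset.sum_congr rfl fun w _ => ?_
          rw [Finset.mul_sum]
          exact Finset.sum_congr rfl fun _ _ => by ring
      _ ≤ ∑ w, ∑ u, θ1 * ∑ v, τ w u v := by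
          refine Finset.sum_le_sum fun w _ => Finset.sum_le_sum fun u _ => ?_
          rw [← ev]
          refine mul_sq_le_of (lv0 _ _) ?_
          rw [ev]; exact cov_s1 h0 h1 hc ht1 w u
      _ = θ1 * ∑ w, ∑ u, ∑ v, τ w u v := by simp_rw [Finset.mul_sum]
      _ ≤ θ1 := mul_le_of_le_one_right ht1 tot
  · calc _ = ∑ w, ∑ v, (q0 w * ν w v) * (∑ u, μ w u * l w u v) ^ 2 := by
          refine Finset.sum_congr rfl fun w _ => ?_
          rw [Finset.mul_sum]
          exact Finset.sum_congr rfl fun _ _ => by ring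
      _ ≤ ∑ w, ∑ v, θ2 * ∑ u, τ w u v := by
          refine Finset.sum_le_sum fun w _ => Finset.sum_le_sum fun v _ => ?_
          rw [← eu]
          refine mul_sq_le_of (lu0 _ _) ?_
          rw [eu]; exact cov_s2 h0 h2 hc ht2 w v
      _ = θ2 * ∑ w, ∑ u, ∑ v, τ w u v := by
          simp_rw [Finset.mul_sum]
          exact Finset.sum_congr rfl fun w _ => Finset.sum_comm
      _ ≤ θ2 := mul_le_of_le_one_right ht2 tot
  · calc _ ≤ ∑ w, θ0 * ∑ u, ∑ v, τ w u v := by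
          refine Finset.sum_le_sum fun w _ => ?_
          rw [← ew]
          refine mul_sq_le_of (lw0 _) ?_
          rw [ew]; exact cov_s0 h0 hc ht0 w
      _ = θ0 * ∑ w, ∑ u, ∑ v, τ w u v := by simp_rw [Finset.mul_sum]
      _ ≤ θ0 := mul_le_of_le_one_right ht0 tot

end Cover

/-! ### Decoding error -/

section Decode

variable {S T W U V A B J Y : Type*}
  [Fintype S] [Fintype T] [Fintype W] [Fintype U] [Fintype V] [Fintype A] [Fintype B] [Fintype J]
  [Fintype Y]
  [DecidableEq S] [DecidableEq T] [DecidableEq A] [DecidableEq B] [DecidableEq J]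
  {q0 : W → ℝ} {q1 : S → W → U → ℝ} {q2 : T → W → V → ℝ}

/-- Expected number of wrong source words `s'` accepted by the decoder, weighted by a function
`F` of the codewords at the chosen slots `(j, a, b)`. Wrong words in the chosen cloud contribute
`κ1` per slot, those in the other clouds `κ2` per slot. -/
lemma dec_term (h00 : ∀ w, 0 ≤ q0 w)
    (h10 : ∀ s w u, 0 ≤ q1 s w u) (h20 : ∀ t w v, 0 ≤ q2 t w v)
    (h0 : ∑ w, q0 w = 1) (h1 : ∀ s w, ∑ u, q1 s w u = 1)
    (h2 : ∀ t w, ∑ v, q2 t w v = 1) (s : S) (t : T) (j : J) (a : A) (b : B)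
    (F : W → U → V → Y → ℝ) (hF : ∀ w u v y, 0 ≤ F w u v y)
    (G : S → W → U → Y → ℝ) (hG : ∀ s w u y, 0 ≤ G s w u y) (κ1 κ2 : ℝ)
    (hk1 : ∀ w y, ∑ s, ∑ u, q1 s w u * G s w u y ≤ κ1)
    (hk2 : ∀ y, ∑ s, ∑ w, q0 w * ∑ u, q1 s w u * G s w u y ≤ κ2) :
    ∑ C : J → Cloud S T W U V A B, (∏ j, cloudW q0 q1 q2 (C j)) *
        ∑ y, F (C j).1 ((C j).2.1 (s, a)) ((C j).2.2 (t, b)) y *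
          ∑ s', (if s' = s then 0 else ∑ j', ∑ a', G s' (C j').1 ((C j').2.1 (s', a')) y)
      ≤ (Fintype.card A * κ1 + Fintype.card J * Fintype.card A * κ2) *
          ∑ y, ∑ w, q0 w * ∑ u, q1 s w u * ∑ v, q2 t w v * F w u v y := by
  classical
  set Φ : W → Y → ℝ := fun w y => ∑ u, q1 s w u * ∑ v, q2 t w v * F w u v y with hΦ
  set Γ : S → W → Y → ℝ := fun s' w y => ∑ u, q1 s' w u * G s' w u y with hΓ
  have hΦ0 : ∀ w y, 0 ≤ Φ w y := fun w y => Finset.sum_nonneg fun u _ => mul_nonneg (h10 _ _ _)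
    (Finset.sum_nonneg fun v _ => mul_nonneg (h20 _ _ _) (hF _ _ _ _))
  have hΓ0 : ∀ s w y, 0 ≤ Γ s w y := fun s w y => Finset.sum_nonneg fun u _ =>
    mul_nonneg (h10 _ _ _) (hG _ _ _ _)
  have hcw : ∑ cl : Cloud S T W U V A B, cloudW q0 q1 q2 cl = 1 := cloud_const h0 h1 h2
  have key : ∀ y s' j' a', s' ≠ s →
      ∑ C : J → Cloud S T W U V A B, (∏ j, cloudW q0 q1 q2 (C j)) *
        (F (C j).1 ((C j).2.1 (s, a)) ((C j).2.2 (t, b)) y *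
          G s' (C j').1 ((C j').2.1 (s', a')) y)
      ≤ (if j = j' then ∑ w, q0 w * (Φ w y * Γ s' w y) else 0)
        + (∑ w, q0 w * Φ w y) * ∑ w, q0 w * Γ s' w y := by
    intro y s' j' a' hs
    have hX : 0 ≤ ∑ w, q0 w * (Φ w y * Γ s' w y) := Finset.sum_nonneg fun w _ =>
      mul_nonneg (h00 _) (mul_nonneg (hΦ0 _ _) (hΓ0 _ _ _))
    have hZ : 0 ≤ (∑ w, q0 w * Φ w y) * ∑ w, q0 w * Γ s' w y := mul_nonneg
      (Finset.sum_nonneg fun w _ => mul_nonneg (h00 _) (hΦ0 _ _))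
      (Finset.sum_nonneg fun w _ => mul_nonneg (h00 _) (hΓ0 _ _ _))
    by_cases h : j = j'
    · subst h
      rw [prodE_one (fun _ => cloudW q0 q1 q2) (fun _ => hcw) j
        (fun cl : Cloud S T W U V A B => F cl.1 (cl.2.1 (s, a)) (cl.2.2 (t, b)) y *
          G s' cl.1 (cl.2.1 (s', a')) y),
        cloud_E2 h1 h2 s s' a a' t b hs.symm (fun w u v => F w u v y) (fun w u => G s' w u y)]
      rw [if_pos rfl]
      linarith
    · rw [prodE_two_mul (fun _ => cloudW q0 q1 q2) (fun _ => hcw) j j' h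
        (fun cl : Cloud S T W U V A B => F cl.1 (cl.2.1 (s, a)) (cl.2.2 (t, b)) y)
        (fun cl => G s' cl.1 (cl.2.1 (s', a')) y),
        cloud_E1 h1 h2 s a t b (fun w u v => F w u v y),
        cloud_E1 h1 h2 s' a' t b (fun w u _ => G s' w u y), if_neg h, zero_add]
      simp_rw [← Finset.sum_mul, h2, one_mul]
      exact le_rfl
  have key2 : ∀ y s',
      ∑ C : J → Cloud S T W U V A B, (∏ j, cloudW q0 q1 q2 (C j)) *
        (F (C j).1 ((C j).2.1 (s, a)) ((C j).2.2 (t, b)) y *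
          (if s' = s then 0 else ∑ j', ∑ a', G s' (C j').1 ((C j').2.1 (s', a')) y))
      ≤ Fintype.card A * (∑ w, q0 w * (Φ w y * Γ s' w y)) +
        Fintype.card J * Fintype.card A * ((∑ w, q0 w * Φ w y) * ∑ w, q0 w * Γ s' w y) := by
    intro y s'
    by_cases hs : s' = s
    · simp only [hs, if_true, mul_zero, Finset.sum_const_zero]
      have hX : 0 ≤ ∑ w, q0 w * (Φ w y * Γ s w y) := Finset.sum_nonneg fun w _ =>
        mul_nonneg (h00 _) (mul_nonneg (hΦ0 _ _) (hΓ0 _ _ _))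
      have hZ : 0 ≤ (∑ w, q0 w * Φ w y) * ∑ w, q0 w * Γ s w y := mul_nonneg
        (Finset.sum_nonneg fun w _ => mul_nonneg (h00 _) (hΦ0 _ _))
        (Finset.sum_nonneg fun w _ => mul_nonneg (h00 _) (hΓ0 _ _ _))
      positivity
    · simp only [hs, if_false, Finset.mul_sum (s := (Finset.univ : Finset J)),
        Finset.mul_sum (s := (Finset.univ : Finset A))]
      rw [Finset.sum_comm]
      calc _ = ∑ j', ∑ a', ∑ C : J → Cloud S T W U V A B, (∏ j, cloudW q0 q1 q2 (C j)) *
            (F (C j).1 ((C j).2.1 (s, a)) ((C j).2.2 (t, b)) y *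
              G s' (C j').1 ((C j').2.1 (s', a')) y) :=
            Finset.sum_congr rfl fun _ _ => Finset.sum_comm
        _ ≤ ∑ j' : J, ∑ a' : A, ((if j = j' then ∑ w, q0 w * (Φ w y * Γ s' w y) else 0)
              + (∑ w, q0 w * Φ w y) * ∑ w, q0 w * Γ s' w y) :=
            Finset.sum_le_sum fun j' _ => Finset.sum_le_sum fun a' _ => key y s' j' a' hs
        _ = _ := by simp [Finset.sum_add_distrib]; ring
  calc _ = ∑ y, ∑ s', ∑ C : J → Cloud S T W U V A B, (∏ j, cloudW q0 q1 q2 (C j)) *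
        (F (C j).1 ((C j).2.1 (s, a)) ((C j).2.2 (t, b)) y *
          (if s' = s then 0 else ∑ j', ∑ a', G s' (C j').1 ((C j').2.1 (s', a')) y)) := by
        simp only [Finset.mul_sum (s := (Finset.univ : Finset Y)),
          Finset.mul_sum (s := (Finset.univ : Finset S))]
        rw [Finset.sum_comm]
        exact Finset.sum_congr rfl fun _ _ => Finset.sum_comm
    _ ≤ ∑ y, ∑ s', (Fintype.card A * (∑ w, q0 w * (Φ w y * Γ s' w y)) +
        Fintype.card J * Fintype.card A * ((∑ w, q0 w * Φ w y) * ∑ w, q0 w * Γ s' w y)) :=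
        Finset.sum_le_sum fun y _ => Finset.sum_le_sum fun s' _ => key2 y s'
    _ ≤ ∑ y, (Fintype.card A * κ1 + Fintype.card J * Fintype.card A * κ2) *
          ∑ w, q0 w * Φ w y := by
        refine Finset.sum_le_sum fun y _ => ?_
        rw [Finset.sum_add_distrib, ← Finset.mul_sum, ← Finset.mul_sum, ← Finset.mul_sum]
        have e1 : ∑ s', ∑ w, q0 w * (Φ w y * Γ s' w y) ≤ κ1 * ∑ w, q0 w * Φ w y := by
          rw [Finset.sum_comm, Finset.mul_sum]
          refine Finset.sum_le_sum fun w _ => ?_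
          rw [← Finset.mul_sum, ← Finset.mul_sum, ← mul_assoc, mul_comm κ1]
          exact mul_le_mul_of_nonneg_left (hk1 w y) (mul_nonneg (h00 _) (hΦ0 _ _))
        have e2 : (∑ w, q0 w * Φ w y) * ∑ s', ∑ w, q0 w * Γ s' w y
            ≤ κ2 * ∑ w, q0 w * Φ w y := by
          rw [mul_comm κ2]
          exact mul_le_mul_of_nonneg_left (hk2 y)
            (Finset.sum_nonneg fun w _ => mul_nonneg (h00 _) (hΦ0 _ _))
        have hA : (0 : ℝ) ≤ Fintype.card A := Nat.cast_nonneg _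
        have hJ : (0 : ℝ) ≤ Fintype.card J := Nat.cast_nonneg _
        nlinarith [mul_le_mul_of_nonneg_left e1 hA,
          mul_le_mul_of_nonneg_left e2 (mul_nonneg hJ hA)]
    _ = _ := by rw [Finset.mul_sum]

open Classical in
/-- The decoder: output some source word accepted together with the received word by the test
`A1` for one of the codewords assigned to it. -/
noncomputable def decoder [Nonempty S] (A1 : S → W → U → Y → Prop)
    (C : J → Cloud S T W U V A B) (y : Y) : S :=
  if h : ∃ s, ∃ j a, A1 s (C j).1 ((C j).2.1 (s, a)) y then h.choose else Classical.arbitrary S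

open Classical in
/-- Union bound: the decoder errs only if the codeword at `(j, a)` fails the test, or some codeword
of a wrong source word passes it. -/
lemma decoder_err [Nonempty S] (A1 : S → W → U → Y → Prop)
    (C : J → Cloud S T W U V A B) (y : Y) (s : S) (j : J) (a : A) :
    (if decoder A1 C y ≠ s then (1 : ℝ) else 0)
      ≤ (if A1 s (C j).1 ((C j).2.1 (s, a)) y then 0 else 1) +
        ∑ s', (if s' = s then 0 else
          ∑ j', ∑ a', if A1 s' (C j').1 ((C j').2.1 (s', a')) y then (1 : ℝ) else 0) := by
  have hin : ∀ s', 0 ≤ (if s' = s then 0 else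
      ∑ j', ∑ a', if A1 s' (C j').1 ((C j').2.1 (s', a')) y then (1 : ℝ) else 0) := by
    intro s'
    split_ifs
    · rfl
    · exact Finset.sum_nonneg fun _ _ => Finset.sum_nonneg fun _ _ => by split_ifs <;> simp
  have hsum := Finset.sum_nonneg fun s' (_ : s' ∈ Finset.univ) => hin s'
  by_cases hA : A1 s (C j).1 ((C j).2.1 (s, a)) y
  · rw [if_pos hA, zero_add]
    split_ifs with hd
    · have hex : ∃ s, ∃ j a, A1 s (C j).1 ((C j).2.1 (s, a)) y := ⟨s, j, a, hA⟩
      have hdec : decoder A1 C y = hex.choose := by simp only [decoder, dif_pos hex]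
      obtain ⟨j', a', hj⟩ := hex.choose_spec
      rw [← hdec] at hj
      refine le_trans ?_ (Finset.single_le_sum (fun s' _ => hin s')
        (Finset.mem_univ (decoder A1 C y)))
      rw [if_neg hd]
      refine le_trans ?_ (Finset.single_le_sum (fun j' _ => Finset.sum_nonneg fun _ _ => by
        split_ifs <;> simp) (Finset.mem_univ j'))
      refine le_trans ?_ (Finset.single_le_sum (fun j' _ => by
        split_ifs <;> simp) (Finset.mem_univ a'))
      rw [if_pos hj]
    · exact hsum
  · rw [if_neg hA]
    split_ifs <;> linarith

open Classical in
/-- Change of measure for the decoding error: weighting by `lam` turns the proposal at the chosen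
slots into (at most) the target `c`. -/
lemma user_err [Nonempty S] (h00 : ∀ w, 0 ≤ q0 w)
    (h10 : ∀ s w u, 0 ≤ q1 s w u) (h20 : ∀ t w v, 0 ≤ q2 t w v)
    (h0 : ∑ w, q0 w = 1) (h1 : ∀ s w, ∑ u, q1 s w u = 1)
    (h2 : ∀ t w, ∑ v, q2 t w v = 1) (s : S) (t : T) (j : J) (a : A) (b : B)
    (lam : W → U → V → ℝ) (hl : ∀ w u v, 0 ≤ lam w u v)
    (c : W → U → V → ℝ) (hc1 : ∑ w, ∑ u, ∑ v, c w u v = 1)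
    (hlc : ∀ w u v, q0 w * q1 s w u * q2 t w v * lam w u v ≤ c w u v)
    (H : W → U → V → Y → ℝ) (hH : ∀ w u v y, 0 ≤ H w u v y)
    (hH1 : ∀ w u v, ∑ y, H w u v y = 1)
    (A1 : S → W → U → Y → Prop) (κ1 κ2 : ℝ) (hk10 : 0 ≤ κ1) (hk20 : 0 ≤ κ2)
    (hk1 : ∀ w y, ∑ s, ∑ u, q1 s w u * (if A1 s w u y then 1 else 0) ≤ κ1)
    (hk2 : ∀ y, ∑ s, ∑ w, q0 w * ∑ u, q1 s w u * (if A1 s w u y then 1 else 0) ≤ κ2) :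
    ∑ C : J → Cloud S T W U V A B, (∏ j, cloudW q0 q1 q2 (C j)) *
        ∑ y, (lam (C j).1 ((C j).2.1 (s, a)) ((C j).2.2 (t, b)) *
          H (C j).1 ((C j).2.1 (s, a)) ((C j).2.2 (t, b)) y) *
          (if decoder A1 C y ≠ s then (1 : ℝ) else 0)
      ≤ (∑ w, ∑ u, ∑ v, c w u v * ∑ y, H w u v y * (if A1 s w u y then 0 else 1)) +
        (Fintype.card A * κ1 + Fintype.card J * Fintype.card A * κ2) := by
  have hcw : ∑ cl : Cloud S T W U V A B, cloudW q0 q1 q2 cl = 1 := cloud_const h0 h1 h2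
  set F : W → U → V → Y → ℝ := fun w u v y => lam w u v * H w u v y with hF
  have hF0 : ∀ w u v y, 0 ≤ F w u v y := fun w u v y => mul_nonneg (hl _ _ _) (hH _ _ _ _)
  set G : S → W → U → Y → ℝ := fun s w u y => if A1 s w u y then 1 else 0 with hGd
  have hG : ∀ s w u y, 0 ≤ G s w u y := fun s w u y => by simp only [hGd]; split_ifs <;> simp
  have T2 := dec_term h00 h10 h20 h0 h1 h2 s t j a b F hF0 G hG κ1 κ2 hk1 hk2
  have T1 : ∑ C : J → Cloud S T W U V A B, (∏ j, cloudW q0 q1 q2 (C j)) *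
        ∑ y, F (C j).1 ((C j).2.1 (s, a)) ((C j).2.2 (t, b)) y *
          (if A1 s (C j).1 ((C j).2.1 (s, a)) y then 0 else 1)
      = ∑ w, q0 w * ∑ u, q1 s w u * ∑ v, q2 t w v *
          ∑ y, F w u v y * (if A1 s w u y then 0 else 1) := by
    rw [prodE_one (fun _ => cloudW q0 q1 q2) (fun _ => hcw) j
        (fun cl : Cloud S T W U V A B => ∑ y, F cl.1 (cl.2.1 (s, a)) (cl.2.2 (t, b)) y *
          (if A1 s cl.1 (cl.2.1 (s, a)) y then 0 else 1)),
        cloud_E1 h1 h2 s a t b (fun w u v => ∑ y, F w u v y * (if A1 s w u y then 0 else 1))]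
  have T1' : ∑ w, q0 w * ∑ u, q1 s w u * ∑ v, q2 t w v *
          ∑ y, F w u v y * (if A1 s w u y then 0 else 1)
      ≤ ∑ w, ∑ u, ∑ v, c w u v * ∑ y, H w u v y * (if A1 s w u y then 0 else 1) := by
    simp_rw [Finset.mul_sum (s := (Finset.univ : Finset U)),
      Finset.mul_sum (s := (Finset.univ : Finset V))]
    refine Finset.sum_le_sum fun w _ => Finset.sum_le_sum fun u _ =>
      Finset.sum_le_sum fun v _ => ?_
    have e : q0 w * (q1 s w u * (q2 t w v * ∑ y, F w u v y * (if A1 s w u y then 0 else 1)))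
        = (q0 w * q1 s w u * q2 t w v * lam w u v) *
          ∑ y, H w u v y * (if A1 s w u y then 0 else 1) := by
      simp only [hF, mul_assoc]
      rw [← Finset.mul_sum]
    rw [e]
    refine mul_le_mul_of_nonneg_right (hlc w u v) (Finset.sum_nonneg fun y _ =>
      mul_nonneg (hH _ _ _ _) ?_)
    split_ifs <;> simp
  have T2' : ∑ y, ∑ w, q0 w * ∑ u, q1 s w u * ∑ v, q2 t w v * F w u v y ≤ 1 := by
    rw [← hc1, Finset.sum_comm]
    refine Finset.sum_le_sum fun w _ => ?_
    simp_rw [Finset.mul_sum]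
    rw [Finset.sum_comm]
    refine Finset.sum_le_sum fun u _ => ?_
    rw [Finset.sum_comm]
    refine Finset.sum_le_sum fun v _ => ?_
    refine le_trans (le_of_eq ?_) (hlc w u v)
    calc _ = ∑ y, (q0 w * q1 s w u * q2 t w v * lam w u v) * H w u v y :=
          Finset.sum_congr rfl fun y _ => by simp only [hF]; ring
      _ = _ := by rw [← Finset.mul_sum, hH1, mul_one]
  have hcoef : 0 ≤ (Fintype.card A * κ1 + Fintype.card J * Fintype.card A * κ2) := by positivity
  have main : ∑ C : J → Cloud S T W U V A B, (∏ j, cloudW q0 q1 q2 (C j)) *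
        ∑ y, F (C j).1 ((C j).2.1 (s, a)) ((C j).2.2 (t, b)) y *
          (if decoder A1 C y ≠ s then (1 : ℝ) else 0)
      ≤ ∑ C : J → Cloud S T W U V A B, (∏ j, cloudW q0 q1 q2 (C j)) *
        (∑ y, F (C j).1 ((C j).2.1 (s, a)) ((C j).2.2 (t, b)) y *
          (if A1 s (C j).1 ((C j).2.1 (s, a)) y then 0 else 1)) +
        ∑ C : J → Cloud S T W U V A B, (∏ j, cloudW q0 q1 q2 (C j)) *
        ∑ y, F (C j).1 ((C j).2.1 (s, a)) ((C j).2.2 (t, b)) y *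
          ∑ s', (if s' = s then 0 else ∑ j', ∑ a', G s' (C j').1 ((C j').2.1 (s', a')) y) := by
    rw [← Finset.sum_add_distrib]
    refine Finset.sum_le_sum fun C _ => ?_
    rw [← mul_add, ← Finset.sum_add_distrib]
    refine mul_le_mul_of_nonneg_left (Finset.sum_le_sum fun y _ => ?_)
      (Finset.prod_nonneg fun _ _ => cloudW_nonneg h00 h10 h20 _)
    rw [← mul_add]
    exact mul_le_mul_of_nonneg_left (decoder_err A1 C y s j a) (hF0 _ _ _ _)
  have := mul_le_mul_of_nonneg_left T2' hcoef
  rw [mul_one] at this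
  calc _ ≤ _ := main
    _ ≤ _ := add_le_add (T1.trans_le T1') (T2.trans this)

end Decode

/-! ### The one-shot coding theorem -/

section OneShotThm

variable {S T W U V A B J X Y1 Y2 : Type*}
  [Fintype S] [Fintype T] [Fintype W] [Fintype U] [Fintype V] [Fintype A] [Fintype B] [Fintype J]
  [Fintype X] [Fintype Y1] [Fintype Y2]
  [DecidableEq S] [DecidableEq T] [DecidableEq A] [DecidableEq B] [DecidableEq J]
  {q0 : W → ℝ} {q1 : S → W → U → ℝ} {q2 : T → W → V → ℝ}

/-- Exchanging the roles of the two users. -/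
def cloudSwap (cl : Cloud S T W U V A B) : Cloud T S W V U B A := (cl.1, cl.2.2, cl.2.1)

lemma sum_book_swap (f : (J → Cloud T S W V U B A) → ℝ) :
    ∑ C : J → Cloud S T W U V A B, (∏ j, cloudW q0 q1 q2 (C j)) * f (fun j => cloudSwap (C j))
      = ∑ C : J → Cloud T S W V U B A, (∏ j, cloudW q0 q2 q1 (C j)) * f C := by
  refine Fintype.sum_equiv ((Equiv.refl J).arrowCongr
    ((Equiv.refl W).prodCongr (Equiv.prodComm _ _))) _ _ fun C => ?_
  congr 1
  refine Finset.prod_congr rfl fun j _ => ?_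
  simp only [cloudW]
  rw [mul_comm (∏ i : T × B, _)]
  rfl

/-- If the average weight `Z` is close to one, a minimal error `m` is controlled by the weighted
average `avg` of the errors; if not, the deviation of `Z` pays for it. -/
lemma min_le_avg {m Z avg : ℝ} (hm0 : 0 ≤ m) (hm2 : m ≤ 2) (ha : 0 ≤ avg)
    (h : Z * m ≤ avg) : m ≤ 8 * (Z - 1) ^ 2 + 2 * avg := by
  by_cases hZ : 1 / 2 ≤ Z
  · nlinarith [sq_nonneg (Z - 1), mul_le_mul_of_nonneg_right hZ hm0]
  · push Not at hZ
    nlinarith [sq_nonneg (Z - 1)]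

open Classical in
/-- One-shot coding theorem: source `PS`, target `c` for the auxiliary words given the source
pair, proposals `q0`, `q1`, `q2` for the codebook with `|J|` clouds and `|A|`, `|B|` slots, and
acceptance tests `A1`, `A2`. -/
theorem one_shot [Nonempty S] [Nonempty T] [Nonempty X] [Nonempty A] [Nonempty B] [Nonempty J]
    (PS : S → T → ℝ) (hPS0 : ∀ s t, 0 ≤ PS s t) (hPS1 : ∑ s, ∑ t, PS s t = 1)
    (c : S → T → W → U → V → ℝ) (hc0 : ∀ s t w u v, 0 ≤ c s t w u v)
    (hc1 : ∀ s t, ∑ w, ∑ u, ∑ v, c s t w u v = 1)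
    (K : W → U → V → X → ℝ) (hK0 : ∀ w u v x, 0 ≤ K w u v x) (hK1 : ∀ w u v, ∑ x, K w u v x = 1)
    (ch : X → Y1 → Y2 → ℝ) (hch0 : ∀ x y1 y2, 0 ≤ ch x y1 y2)
    (hch1 : ∀ x, ∑ y1, ∑ y2, ch x y1 y2 = 1)
    (h00 : ∀ w, 0 ≤ q0 w) (h10 : ∀ s w u, 0 ≤ q1 s w u) (h20 : ∀ t w v, 0 ≤ q2 t w v)
    (h0 : ∑ w, q0 w = 1) (h1 : ∀ s w, ∑ u, q1 s w u = 1) (h2 : ∀ t w, ∑ v, q2 t w v = 1)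
    (θ0 θ1 θ2 θ3 : ℝ) (ht0 : 0 ≤ θ0) (ht1 : 0 ≤ θ1) (ht2 : 0 ≤ θ2) (ht3 : 0 ≤ θ3)
    (A1 : S → W → U → Y1 → Prop) (κ1 κ2 : ℝ) (hk10 : 0 ≤ κ1) (hk20 : 0 ≤ κ2)
    (hk1 : ∀ w y, ∑ s, ∑ u, q1 s w u * (if A1 s w u y then 1 else 0) ≤ κ1)
    (hk2 : ∀ y, ∑ s, ∑ w, q0 w * ∑ u, q1 s w u * (if A1 s w u y then 1 else 0) ≤ κ2)
    (A2 : T → W → V → Y2 → Prop) (ι1 ι2 : ℝ) (hi10 : 0 ≤ ι1) (hi20 : 0 ≤ ι2)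
    (hi1 : ∀ w y, ∑ t, ∑ v, q2 t w v * (if A2 t w v y then 1 else 0) ≤ ι1)
    (hi2 : ∀ y, ∑ t, ∑ w, q0 w * ∑ v, q2 t w v * (if A2 t w v y then 1 else 0) ≤ ι2) :
    ∃ (enc : S × T → X) (φ1 : Y1 → S) (φ2 : Y2 → T),
      ∑ s, ∑ t, PS s t * ∑ y1, ∑ y2, ch (enc (s, t)) y1 y2 *
        ((if φ1 y1 ≠ s then (1 : ℝ) else 0) + (if φ2 y2 ≠ t then (1 : ℝ) else 0))
      ≤ 8 * (∑ s, ∑ t, PS s t * ∑ w, ∑ u, ∑ v, c s t w u v *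
            (if CovTyp q0 (q1 s) (q2 t) (c s t) θ0 θ1 θ2 θ3 w u v then 0 else 1) +
          (θ0 + θ1 / Fintype.card A + θ2 / Fintype.card B
            + θ3 / (Fintype.card A * Fintype.card B)) / Fintype.card J)
        + 2 * (∑ s, ∑ t, PS s t * ∑ w, ∑ u, ∑ v, c s t w u v * ∑ y1,
              (∑ x, K w u v x * ∑ y2, ch x y1 y2) * (if A1 s w u y1 then 0 else 1)
          + (Fintype.card A * κ1 + Fintype.card J * Fintype.card A * κ2)
          + (∑ s, ∑ t, PS s t * ∑ w, ∑ u, ∑ v, c s t w u v * ∑ y2,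
              (∑ x, K w u v x * ∑ y1, ch x y1 y2) * (if A2 t w v y2 then 0 else 1)
          + (Fintype.card B * ι1 + Fintype.card J * Fintype.card B * ι2))) := by
  let Bk := J → Cloud S T W U V A B
  let Q : Bk → ℝ := fun C => ∏ j, cloudW q0 q1 q2 (C j)
  have hQ0 : ∀ C, 0 ≤ Q C := fun C => Finset.prod_nonneg fun _ _ => cloudW_nonneg h00 h10 h20 _
  have hcw : ∑ cl : Cloud S T W U V A B, cloudW q0 q1 q2 cl = 1 := cloud_const h0 h1 h2
  have hQ1 : ∑ C, Q C = 1 := prodE_const (fun _ => cloudW q0 q1 q2) (fun _ => hcw)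
  let e1 : Bk → S → Y1 → ℝ := fun C s y => if decoder A1 C y ≠ s then 1 else 0
  let e2 : Bk → T → Y2 → ℝ := fun C t y =>
    if decoder A2 (fun j => cloudSwap (C j)) y ≠ t then 1 else 0
  have he10 : ∀ C s y, 0 ≤ e1 C s y := fun C s y => by simp only [e1]; split_ifs <;> simp
  have he20 : ∀ C s y, 0 ≤ e2 C s y := fun C s y => by simp only [e2]; split_ifs <;> simp
  have he11 : ∀ C s y, e1 C s y ≤ 1 := fun C s y => by simp only [e1]; split_ifs <;> simp
  have he21 : ∀ C s y, e2 C s y ≤ 1 := fun C s y => by simp only [e2]; split_ifs <;> simp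
  let err : Bk → S → T → X → ℝ := fun C s t x =>
    ∑ y1, ∑ y2, ch x y1 y2 * (e1 C s y1 + e2 C t y2)
  have herr0 : ∀ C s t x, 0 ≤ err C s t x := fun C s t x =>
    Finset.sum_nonneg fun y1 _ => Finset.sum_nonneg fun y2 _ =>
      mul_nonneg (hch0 _ _ _) (add_nonneg (he10 _ _ _) (he20 _ _ _))
  have herr2 : ∀ C s t x, err C s t x ≤ 2 := fun C s t x => by
    calc err C s t x ≤ ∑ y1, ∑ y2, ch x y1 y2 * 2 :=
          Finset.sum_le_sum fun y1 _ => Finset.sum_le_sum fun y2 _ =>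
            mul_le_mul_of_nonneg_left (by linarith [he11 C s y1, he21 C t y2]) (hch0 _ _ _)
      _ = 2 := by simp_rw [← Finset.sum_mul, hch1, one_mul]
  have hmin : ∀ C s t, ∃ x, ∀ x', err C s t x ≤ err C s t x' := fun C s t =>
    Finite.exists_min (err C s t)
  choose enc henc using hmin
  let lam : S → T → W → U → V → ℝ := fun s t =>
    covL q0 (q1 s) (q2 t) (c s t) θ0 θ1 θ2 θ3
  have hlam0 : ∀ s t w u v, 0 ≤ lam s t w u v := fun s t =>
    covL_nonneg h00 (h10 s) (h20 t) (hc0 s t)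
  let Z : S → T → Bk → ℝ := fun s t C =>
    (∑ j, cloudAvg s t (lam s t) (C j)) / Fintype.card J
  have hA : (0 : ℝ) < (Fintype.card A : ℝ) := by exact_mod_cast Fintype.card_pos
  have hB : (0 : ℝ) < (Fintype.card B : ℝ) := by exact_mod_cast Fintype.card_pos
  have hJ : (0 : ℝ) < (Fintype.card J : ℝ) := by exact_mod_cast Fintype.card_pos
  set N : ℝ := (Fintype.card A : ℝ) * Fintype.card B * Fintype.card J with hN
  have hN0 : 0 < N := by positivity
  let H1 : W → U → V → Y1 → ℝ := fun w u v y1 => ∑ x, K w u v x * ∑ y2, ch x y1 y2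
  let H2 : W → U → V → Y2 → ℝ := fun w u v y2 => ∑ x, K w u v x * ∑ y1, ch x y1 y2
  have hH10 : ∀ w u v y, 0 ≤ H1 w u v y := fun w u v y => Finset.sum_nonneg fun x _ =>
    mul_nonneg (hK0 _ _ _ _) (Finset.sum_nonneg fun _ _ => hch0 _ _ _)
  have hH20 : ∀ w u v y, 0 ≤ H2 w u v y := fun w u v y => Finset.sum_nonneg fun x _ =>
    mul_nonneg (hK0 _ _ _ _) (Finset.sum_nonneg fun _ _ => hch0 _ _ _)
  have hH11 : ∀ w u v, ∑ y, H1 w u v y = 1 := fun w u v => by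
    simp only [H1]
    rw [Finset.sum_comm]
    simp_rw [← Finset.mul_sum, hch1, mul_one, hK1]
  have hH21 : ∀ w u v, ∑ y, H2 w u v y = 1 := fun w u v => by
    simp only [H2]
    rw [Finset.sum_comm]
    simp_rw [← Finset.mul_sum]
    have : ∀ x, ∑ y2, ∑ y1, ch x y1 y2 = 1 := fun x => by rw [Finset.sum_comm, hch1]
    simp_rw [this, mul_one, hK1]
  -- the average error of the randomised encoder, split into the two users' contributions
  have avg_split : ∀ C s t w u v, ∑ x, K w u v x * err C s t x
      = ∑ y1, H1 w u v y1 * e1 C s y1 + ∑ y2, H2 w u v y2 * e2 C t y2 := by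
    intro C s t w u v
    have f : ∀ x, err C s t x = ∑ y1, (∑ y2, ch x y1 y2) * e1 C s y1
        + ∑ y2, (∑ y1, ch x y1 y2) * e2 C t y2 := by
      intro x
      simp only [err, mul_add, Finset.sum_add_distrib, Finset.sum_mul]
      congr 1
      rw [Finset.sum_comm]
    simp_rw [f, mul_add, Finset.sum_add_distrib, H1, H2, Finset.sum_mul, Finset.mul_sum]
    congr 1
    · rw [Finset.sum_comm]
      refine Finset.sum_congr rfl fun y _ => Finset.sum_congr rfl fun x _ => ?_
      rw [Finset.sum_mul]
      exact Finset.sum_congr rfl fun _ _ => by ring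
    · rw [Finset.sum_comm]
      refine Finset.sum_congr rfl fun y _ => Finset.sum_congr rfl fun x _ => ?_
      rw [Finset.sum_mul]
      exact Finset.sum_congr rfl fun _ _ => by ring
  let R1 : S → T → J → A → B → Bk → ℝ := fun s t j a b C =>
    ∑ y, (lam s t (C j).1 ((C j).2.1 (s, a)) ((C j).2.2 (t, b)) *
          H1 (C j).1 ((C j).2.1 (s, a)) ((C j).2.2 (t, b)) y) * e1 C s y
  let R2 : S → T → J → A → B → Bk → ℝ := fun s t j a b C =>
    ∑ y, (lam s t (C j).1 ((C j).2.1 (s, a)) ((C j).2.2 (t, b)) *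
          H2 (C j).1 ((C j).2.1 (s, a)) ((C j).2.2 (t, b)) y) * e2 C t y
  have hR10 : ∀ s t j a b C, 0 ≤ R1 s t j a b C := fun s t j a b C =>
    Finset.sum_nonneg fun y _ => mul_nonneg (mul_nonneg (hlam0 _ _ _ _ _) (hH10 _ _ _ _))
      (he10 _ _ _)
  have hR20 : ∀ s t j a b C, 0 ≤ R2 s t j a b C := fun s t j a b C =>
    Finset.sum_nonneg fun y _ => mul_nonneg (mul_nonneg (hlam0 _ _ _ _ _) (hH20 _ _ _ _))
      (he20 _ _ _)
  have step1 : ∀ C s t, err C s t (enc C s t) ≤ 8 * (Z s t C - 1) ^ 2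
      + 2 * ((∑ j, ∑ a, ∑ b, (R1 s t j a b C + R2 s t j a b C)) / N) := by
    intro C s t
    refine min_le_avg (herr0 _ _ _ _) (herr2 _ _ _ _) (div_nonneg (Finset.sum_nonneg fun j _ =>
      Finset.sum_nonneg fun a _ => Finset.sum_nonneg fun b _ =>
        add_nonneg (hR10 _ _ _ _ _ _) (hR20 _ _ _ _ _ _)) hN0.le) ?_
    rw [le_div_iff₀ hN0]
    have eZ : Z s t C * err C s t (enc C s t) * N
        = ∑ j, ∑ a, ∑ b, lam s t (C j).1 ((C j).2.1 (s, a)) ((C j).2.2 (t, b)) *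
            err C s t (enc C s t) := by
      simp only [Z, cloudAvg, ← Finset.sum_div, ← Finset.sum_mul, hN]
      field_simp
    rw [eZ]
    refine Finset.sum_le_sum fun j _ => Finset.sum_le_sum fun a _ => Finset.sum_le_sum fun b _ => ?_
    have : err C s t (enc C s t) ≤ ∑ x, K (C j).1 ((C j).2.1 (s, a)) ((C j).2.2 (t, b)) x *
        err C s t x := by
      calc err C s t (enc C s t) = ∑ x, K (C j).1 ((C j).2.1 (s, a)) ((C j).2.2 (t, b)) x *
            err C s t (enc C s t) := by rw [← Finset.sum_mul, hK1, one_mul]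
        _ ≤ _ := Finset.sum_le_sum fun x _ => mul_le_mul_of_nonneg_left (henc _ _ _ _)
            (hK0 _ _ _ _)
    refine (mul_le_mul_of_nonneg_left this (hlam0 _ _ _ _ _)).trans (le_of_eq ?_)
    rw [avg_split, mul_add, Finset.mul_sum, Finset.mul_sum]
    simp only [R1, R2, mul_assoc]
  have hlc : ∀ s t w u v, q0 w * q1 s w u * q2 t w v * lam s t w u v ≤ c s t w u v :=
    fun s t w u v => by
      simp only [lam]
      rw [covL_mul (hc0 s t)]
      exact covT_le (hc0 s t) w u v
  set D1 : S → T → ℝ := fun s t => ∑ w, ∑ u, ∑ v, c s t w u v * ∑ y1,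
              H1 w u v y1 * (if A1 s w u y1 then 0 else 1) with hD1
  set D2 : S → T → ℝ := fun s t => ∑ w, ∑ u, ∑ v, c s t w u v * ∑ y2,
              H2 w u v y2 * (if A2 t w v y2 then 0 else 1) with hD2
  set k1 : ℝ := Fintype.card A * κ1 + Fintype.card J * Fintype.card A * κ2 with hk1d
  set k2 : ℝ := Fintype.card B * ι1 + Fintype.card J * Fintype.card B * ι2 with hk2d
  have B1 : ∀ s t j a b, ∑ C, Q C * R1 s t j a b C ≤ D1 s t + k1 := fun s t j a b =>
    user_err h00 h10 h20 h0 h1 h2 s t j a b (lam s t) (hlam0 s t) (c s t) (hc1 s t) (hlc s t)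
      H1 hH10 hH11 A1 κ1 κ2 hk10 hk20 hk1 hk2
  have B2 : ∀ s t j a b, ∑ C, Q C * R2 s t j a b C ≤ D2 s t + k2 := fun s t j a b => by
    have hsw := sum_book_swap (q0 := q0) (q1 := q1) (q2 := q2) (fun C : J → Cloud T S W V U B A =>
      ∑ y, (lam s t (C j).1 ((C j).2.2 (s, a)) ((C j).2.1 (t, b)) *
          H2 (C j).1 ((C j).2.2 (s, a)) ((C j).2.1 (t, b)) y) *
          (if decoder A2 C y ≠ t then (1 : ℝ) else 0))
    have hu := user_err h00 h20 h10 h0 h2 h1 t s j b a (fun w v u => lam s t w u v)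
      (fun w v u => hlam0 s t w u v) (fun w v u => c s t w u v)
      (by rw [← hc1 s t]; exact Finset.sum_congr rfl fun _ _ => Finset.sum_comm)
      (fun w v u => by rw [mul_right_comm (q0 w)]; exact hlc s t w u v)
      (fun w v u => H2 w u v) (fun w v u => hH20 w u v) (fun w v u => hH21 w u v)
      A2 ι1 ι2 hi10 hi20 hi1 hi2
    calc _ = _ := hsw
      _ ≤ _ := hu
      _ = _ := by
        simp only [hD2, hk2d]
        congr 1
        exact Finset.sum_congr rfl fun _ _ => Finset.sum_comm
  let m : S → T → ℝ := fun s t => ∑ w, ∑ u, ∑ v, covT q0 (q1 s) (q2 t) (c s t) θ0 θ1 θ2 θ3 w u v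
  set D : ℝ := θ0 + θ1 / Fintype.card A + θ2 / Fintype.card B
            + θ3 / (Fintype.card A * Fintype.card B) with hD
  have B3 : ∀ s t, ∑ C, Q C * (Z s t C - 1) ^ 2 ≤ (1 - m s t) + D / Fintype.card J := by
    intro s t
    obtain ⟨b3, b1, b2, b0⟩ := cov_bounds (θ0 := θ0) (θ1 := θ1) (θ2 := θ2) (θ3 := θ3)
      h00 (h10 s) (h20 t) (hc0 s t) (hc1 s t) ht0 ht1 ht2 ht3
    refine book_sq (cloudW q0 q1 q2) hcw (cloudAvg s t (lam s t)) (m s t) D ?_ ?_ ?_ ?_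
    · rw [cloudAvg_mean h1 h2]; exact covL_mean (hc0 s t)
    · exact Finset.sum_nonneg fun w _ => Finset.sum_nonneg fun u _ => Finset.sum_nonneg fun v _ =>
        covT_nonneg (hc0 s t) w u v
    · exact covT_total_le (hc0 s t) (hc1 s t)
    · exact cloudAvg_sq h00 h10 h20 h1 h2 s t (lam s t) (hlam0 s t) θ0 θ1 θ2 θ3 b3 b1 b2 b0
  have B4 : ∀ s t, ∑ C, Q C * err C s t (enc C s t) ≤
      8 * ((1 - m s t) + D / Fintype.card J) + 2 * ((D1 s t + k1) + (D2 s t + k2)) := by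
    intro s t
    have b12 : ∑ C, Q C * ((∑ j, ∑ a, ∑ b, (R1 s t j a b C + R2 s t j a b C)) / N)
        ≤ (D1 s t + k1) + (D2 s t + k2) := by
      simp_rw [mul_div_assoc', ← Finset.sum_div]
      rw [div_le_iff₀ hN0]
      simp_rw [Finset.mul_sum]
      rw [Finset.sum_comm]
      calc _ = ∑ j : J, ∑ a : A, ∑ b : B, ∑ C, Q C * (R1 s t j a b C + R2 s t j a b C) := by
            refine Finset.sum_congr rfl fun j _ => ?_
            rw [Finset.sum_comm]
            exact Finset.sum_congr rfl fun a _ => Finset.sum_comm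
        _ ≤ ∑ j : J, ∑ a : A, ∑ b : B, ((D1 s t + k1) + (D2 s t + k2)) := by
            refine Finset.sum_le_sum fun j _ => Finset.sum_le_sum fun a _ =>
              Finset.sum_le_sum fun b _ => ?_
            simp_rw [mul_add, Finset.sum_add_distrib]
            exact add_le_add (B1 s t j a b) (B2 s t j a b)
        _ = _ := by simp [hN]; ring
    calc _ ≤ ∑ C, Q C * (8 * (Z s t C - 1) ^ 2
            + 2 * ((∑ j, ∑ a, ∑ b, (R1 s t j a b C + R2 s t j a b C)) / N)) :=
          Finset.sum_le_sum fun C _ => mul_le_mul_of_nonneg_left (step1 C s t) (hQ0 C)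
      _ = 8 * ∑ C, Q C * (Z s t C - 1) ^ 2 + 2 * ∑ C, Q C *
            ((∑ j, ∑ a, ∑ b, (R1 s t j a b C + R2 s t j a b C)) / N) := by
          rw [Finset.mul_sum, Finset.mul_sum, ← Finset.sum_add_distrib]
          exact Finset.sum_congr rfl fun _ _ => by ring
      _ ≤ _ := add_le_add (mul_le_mul_of_nonneg_left (B3 s t) (by norm_num))
          (mul_le_mul_of_nonneg_left b12 (by norm_num))
  set bound : ℝ := ∑ s, ∑ t, PS s t *
    (8 * ((1 - m s t) + D / Fintype.card J) + 2 * ((D1 s t + k1) + (D2 s t + k2))) with hbound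
  have B5 : ∑ C, Q C * ∑ s, ∑ t, PS s t * err C s t (enc C s t) ≤ ∑ C, Q C * bound := by
    rw [← Finset.sum_mul, hQ1, one_mul]
    simp_rw [Finset.mul_sum]
    rw [Finset.sum_comm]
    refine Finset.sum_le_sum fun s _ => ?_
    rw [Finset.sum_comm]
    refine Finset.sum_le_sum fun t _ => ?_
    refine le_trans (le_of_eq ?_) (mul_le_mul_of_nonneg_left (B4 s t) (hPS0 s t))
    rw [Finset.mul_sum]
    exact Finset.sum_congr rfl fun _ _ => by ring
  obtain ⟨C, hC⟩ : ∃ C, ∑ s, ∑ t, PS s t * err C s t (enc C s t) ≤ bound := by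
    by_contra hcon
    push Not at hcon
    obtain ⟨C, -, hCpos⟩ : ∃ C ∈ Finset.univ, Q C ≠ 0 :=
      Finset.exists_ne_zero_of_sum_ne_zero (by rw [hQ1]; norm_num)
    refine absurd B5 (not_le.mpr (Finset.sum_lt_sum (fun C _ => mul_le_mul_of_nonneg_left
      (hcon C).le (hQ0 C)) ⟨C, Finset.mem_univ _, mul_lt_mul_of_pos_left (hcon C)
        (lt_of_le_of_ne (hQ0 C) hCpos.symm)⟩))
  refine ⟨fun st => enc C st.1 st.2, decoder A1 C, decoder A2 (fun j => cloudSwap (C j)), ?_⟩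
  refine hC.trans (le_of_eq ?_)
  have em : ∀ s t, 1 - m s t = ∑ w, ∑ u, ∑ v, c s t w u v *
            (if CovTyp q0 (q1 s) (q2 t) (c s t) θ0 θ1 θ2 θ3 w u v then 0 else 1) := by
    intro s t
    have e : 1 - m s t = (∑ w, ∑ u, ∑ v, c s t w u v) - m s t := by rw [hc1 s t]
    rw [e]
    simp only [m, ← Finset.sum_sub_distrib]
    refine Finset.sum_congr rfl fun w _ => Finset.sum_congr rfl fun u _ =>
      Finset.sum_congr rfl fun v _ => ?_
    unfold covT
    split_ifs <;> simp
  simp_rw [← em]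
  have ePS : ∀ x : ℝ, ∑ s, ∑ t, PS s t * x = x := fun x => by
    simp_rw [← Finset.sum_mul, hPS1, one_mul]
  rw [hbound]
  simp_rw [mul_add, Finset.sum_add_distrib, ePS, mul_left_comm (PS _ _), ← Finset.mul_sum, hD1, hD2,
    H1, H2]

end OneShotThm

/-! ### Product measures, Chebyshev, and marginals -/

section LLN

variable {Ω : Type*} [Fintype Ω]

/-- The variance of a sum of independent centred terms. -/
lemma sum_sq_iid (p : Ω → ℝ) (hp1 : ∑ ω, p ω = 1) (g : Ω → ℝ) (hg : ∑ ω, p ω * g ω = 0) (n : ℕ) :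
    ∑ x : Fin n → Ω, (∏ i, p (x i)) * (∑ i, g (x i)) ^ 2 = n * ∑ ω, p ω * g ω ^ 2 := by
  simp_rw [sq, Finset.sum_mul_sum, Finset.mul_sum]
  rw [Finset.sum_comm]
  simp_rw [Finset.sum_comm (s := (Finset.univ : Finset (Fin n → Ω)))]
  have h : ∀ i j : Fin n, ∑ x : Fin n → Ω, (∏ k, p (x k)) * (g (x i) * g (x j))
      = if i = j then ∑ ω, p ω * (g ω * g ω) else 0 := by
    intro i j
    split_ifs with hij
    · subst hij
      exact prodE_one (fun _ => p) (fun _ => hp1) i (fun a => g a * g a)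
    · rw [prodE_two_mul (fun _ => p) (fun _ => hp1) i j hij g g, hg, zero_mul]
  simp_rw [h]
  simp [Finset.mul_sum]

open Classical in
/-- Chebyshev's inequality for the log-likelihood ratio of two product weights. -/
lemma lln (p : Ω → ℝ) (hp0 : ∀ ω, 0 ≤ p ω) (hp1 : ∑ ω, p ω = 1) (num den : Ω → ℝ)
    (hpos : ∀ ω, p ω ≠ 0 → 0 < num ω ∧ 0 < den ω) (r : ℝ)
    (hr : ∑ ω, p ω * (Real.logb 2 (num ω) - Real.logb 2 (den ω)) < r) :
    ∃ C : ℝ, 0 ≤ C ∧ ∀ n : ℕ, 0 < n → ∑ x : Fin n → Ω, (∏ i, p (x i)) *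
      (if (2 : ℝ) ^ (n * r) * ∏ i, den (x i) < ∏ i, num (x i) then 1 else 0) ≤ C / n := by
  set m := ∑ ω, p ω * (Real.logb 2 (num ω) - Real.logb 2 (den ω)) with hm
  set g : Ω → ℝ := fun ω => Real.logb 2 (num ω) - Real.logb 2 (den ω) - m with hg
  have hg0 : ∑ ω, p ω * g ω = 0 := by
    simp only [hg, mul_sub (p _) (_ - _) m, Finset.sum_sub_distrib, ← Finset.sum_mul, hp1]
    rw [← hm]; ring
  have hd : 0 < r - m := by linarith
  set σ := ∑ ω, p ω * g ω ^ 2 with hσ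
  have hσ0 : 0 ≤ σ := Finset.sum_nonneg fun ω _ => mul_nonneg (hp0 ω) (sq_nonneg _)
  refine ⟨σ / (r - m) ^ 2, by positivity, fun n hn => ?_⟩
  have hn' : (0 : ℝ) < n := by exact_mod_cast hn
  have key : ∑ x : Fin n → Ω, (∏ i, p (x i)) *
      (if (2 : ℝ) ^ (n * r) * ∏ i, den (x i) < ∏ i, num (x i) then 1 else 0)
      ≤ ∑ x : Fin n → Ω, (∏ i, p (x i)) * (∑ i, g (x i)) ^ 2 / (n * (r - m)) ^ 2 := by
    refine Finset.sum_le_sum fun x _ => ?_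
    by_cases hx : ∏ i, p (x i) = 0
    · simp [hx]
    rw [mul_div_assoc]
    refine mul_le_mul_of_nonneg_left ?_ (Finset.prod_nonneg fun i _ => hp0 _)
    split_ifs with hev
    · rw [le_div_iff₀ (by positivity), one_mul]
      refine pow_le_pow_left₀ (by positivity) ?_ 2
      have hs : ∀ i, 0 < num (x i) ∧ 0 < den (x i) := fun i =>
        hpos _ fun h => hx (Finset.prod_eq_zero (Finset.mem_univ i) h)
      have hD : 0 < ∏ i, den (x i) := Finset.prod_pos fun i _ => (hs i).2
      have hl := Real.logb_lt_logb (b := 2) (by norm_num) (by positivity) hev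
      rw [Real.logb_mul (by positivity) hD.ne', Real.logb_rpow (by norm_num) (by norm_num),
        Real.logb_prod _ _ fun i _ => (hs i).2.ne', Real.logb_prod _ _ fun i _ => (hs i).1.ne'] at hl
      simp only [hg, Finset.sum_sub_distrib, Finset.sum_const, Finset.card_univ, Fintype.card_fin,
        nsmul_eq_mul]
      linarith
    · positivity
  refine key.trans (le_of_eq ?_)
  rw [← Finset.sum_div, sum_sq_iid p hp1 g hg0, ← hσ]
  field_simp

end LLN

lemma sum_fun_pair {ι A B : Type*} [Fintype ι] [DecidableEq ι] [Fintype A] [Fintype B]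
    (G : (ι → A) → (ι → B) → ℝ) :
    ∑ a : ι → A, ∑ b : ι → B, G a b
      = ∑ ω : ι → A × B, G (fun i => (ω i).1) (fun i => (ω i).2) := by
  rw [← Fintype.sum_prod_type']
  exact (Fintype.sum_equiv (Equiv.arrowProdEquivProdArrow ι (fun _ => A) (fun _ => B)) _ _ fun _ => rfl).symm

/-- Summing over eight separate words amounts to summing over words in the joint alphabet. -/
lemma sum_omega8 {S T W U V X Y1 Y2 : Type*} [Fintype S] [Fintype T] [Fintype W] [Fintype U]
    [Fintype V] [Fintype X] [Fintype Y1] [Fintype Y2] {n : ℕ}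
    (G : (Fin n → S) → (Fin n → T) → (Fin n → W) → (Fin n → U) → (Fin n → V) → (Fin n → X) →
      (Fin n → Y1) → (Fin n → Y2) → ℝ) :
    ∑ s, ∑ t, ∑ w, ∑ u, ∑ v, ∑ x, ∑ y1, ∑ y2, G s t w u v x y1 y2
      = ∑ ω : Fin n → Omega8 S T W U V X Y1 Y2, G (fun i => bS (ω i)) (fun i => bT (ω i))
        (fun i => bW (ω i)) (fun i => bU (ω i)) (fun i => bV (ω i)) (fun i => bX (ω i))
        (fun i => bY1 (ω i)) (fun i => bY2 (ω i)) := by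
  simp_rw [sum_fun_pair]
  rfl

section Marg

variable {Ω α β : Type*} [Fintype Ω] [DecidableEq α] [DecidableEq β]

/-- The law of `F` under the weights `p`. -/
def pm (p : Ω → ℝ) (F : Ω → α) (a : α) : ℝ := ∑ ω, if F ω = a then p ω else 0

lemma pm_nonneg {p : Ω → ℝ} (hp : ∀ ω, 0 ≤ p ω) (F : Ω → α) (a : α) : 0 ≤ pm p F a :=
  Finset.sum_nonneg fun ω _ => by split_ifs <;> simp [hp]

lemma pm_pos {p : Ω → ℝ} (hp : ∀ ω, 0 ≤ p ω) (F : Ω → α) {ω : Ω} (h : p ω ≠ 0) :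
    0 < pm p F (F ω) := by
  refine lt_of_lt_of_le (lt_of_le_of_ne (hp ω) h.symm) ?_
  have := Finset.single_le_sum (f := fun ω' => if F ω' = F ω then p ω' else 0)
    (fun ω' _ => by split_ifs <;> simp [hp]) (Finset.mem_univ ω)
  simpa [pm] using this

lemma sum_pm [Fintype α] (p : Ω → ℝ) (F : Ω → α) (h : α → ℝ) :
    ∑ a, pm p F a * h a = ∑ ω, p ω * h (F ω) := by
  simp_rw [pm, Finset.sum_mul]
  rw [Finset.sum_comm]
  refine Finset.sum_congr rfl fun ω _ => ?_
  simp

lemma margEnt_eq [Fintype α] (p : Ω → ℝ) (F : Ω → α) :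
    margEnt p F = - ∑ ω, p ω * Real.logb 2 (pm p F (F ω)) := by
  rw [← sum_pm p F (fun a => Real.logb 2 (pm p F a)), margEnt, Finset.sum_neg_distrib]
  rfl

lemma pm_congr {p : Ω → ℝ} {F : Ω → α} {G : Ω → β} {ω : Ω}
    (h : ∀ ω', p ω' ≠ 0 → (F ω' = F ω ↔ G ω' = G ω)) : pm p F (F ω) = pm p G (G ω) := by
  refine Finset.sum_congr rfl fun ω' _ => ?_
  by_cases hp : p ω' = 0
  · simp [hp]
  · simp [h ω' hp]

/-- Variables that determine each other on the support have the same entropy. -/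
lemma margEnt_congr [Fintype α] [Fintype β] {p : Ω → ℝ} {F : Ω → α} {G : Ω → β}
    (h : ∀ ω ω', p ω ≠ 0 → p ω' ≠ 0 → (F ω' = F ω ↔ G ω' = G ω)) : margEnt p F = margEnt p G := by
  rw [margEnt_eq, margEnt_eq]
  congr 1
  refine Finset.sum_congr rfl fun ω _ => ?_
  by_cases hp : p ω = 0
  · simp [hp]
  · rw [pm_congr fun ω' hp' => h ω ω' hp hp']

lemma pm_marg [Fintype β] (p : Ω → ℝ) (F : Ω → α) (G : Ω → β) (a : α) :
    ∑ b, pm p (fun ω => (F ω, G ω)) (a, b) = pm p F a := by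
  simp_rw [pm]
  rw [Finset.sum_comm]
  refine Finset.sum_congr rfl fun ω _ => ?_
  by_cases h : F ω = a <;> simp [h]

/-- Mutual information is nonnegative. -/
lemma mi_nonneg [Fintype α] [Fintype β] {p : Ω → ℝ} (hp : ∀ ω, 0 ≤ p ω) (hp1 : ∑ ω, p ω = 1)
    (F : Ω → α) (G : Ω → β) : 0 ≤ mi p F G := by
  set H : Ω → α × β := fun ω => (F ω, G ω) with hH
  have e : mi p F G = ∑ ω, p ω * (Real.log (pm p H (H ω) / (pm p F (F ω) * pm p G (G ω))) / Real.log 2) := by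
    rw [mi, margEnt_eq, margEnt_eq, margEnt_eq, ← sub_eq_zero, sub_eq_add_neg, ← Finset.sum_neg_distrib,
      ← Finset.sum_neg_distrib, ← Finset.sum_neg_distrib, ← Finset.sum_add_distrib, ← Finset.sum_sub_distrib,
      ← Finset.sum_neg_distrib, ← Finset.sum_add_distrib]
    refine Finset.sum_eq_zero fun ω _ => ?_
    by_cases h : p ω = 0
    · simp [h]
    rw [Real.log_div (pm_pos hp H h).ne' (mul_pos (pm_pos hp F h) (pm_pos hp G h)).ne',
      Real.log_mul (pm_pos hp F h).ne' (pm_pos hp G h).ne']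
    simp only [Real.logb, hH]
    ring
  rw [e]
  have l : ∀ ω, p ω * (1 - pm p F (F ω) * pm p G (G ω) / pm p H (H ω)) / Real.log 2 ≤
      p ω * (Real.log (pm p H (H ω) / (pm p F (F ω) * pm p G (G ω))) / Real.log 2) := by
    intro ω
    by_cases h : p ω = 0
    · simp [h]
    rw [mul_div_assoc]
    refine mul_le_mul_of_nonneg_left
      (div_le_div_of_nonneg_right ?_ (Real.log_nonneg (by norm_num))) (hp ω)
    have := Real.one_sub_inv_le_log_of_pos (div_pos (pm_pos hp H h) (mul_pos (pm_pos hp F h) (pm_pos hp G h)))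
    rwa [inv_div] at this
  refine le_trans ?_ (Finset.sum_le_sum fun ω _ => l ω)
  rw [← Finset.sum_div]
  refine div_nonneg ?_ (Real.log_nonneg (by norm_num))
  simp_rw [mul_sub, mul_one, Finset.sum_sub_distrib, hp1]
  rw [← sum_pm p H (fun a => pm p F a.1 * pm p G a.2 / pm p H a)]
  have : ∑ a, pm p H a * (pm p F a.1 * pm p G a.2 / pm p H a) ≤ ∑ a : α × β, pm p F a.1 * pm p G a.2 := by
    refine Finset.sum_le_sum fun a _ => ?_
    by_cases h : pm p H a = 0
    · simp only [h, zero_mul]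
      exact mul_nonneg (pm_nonneg hp _ _) (pm_nonneg hp _ _)
    · rw [mul_div_cancel₀ _ h]
  have t : ∑ a : α × β, pm p F a.1 * pm p G a.2 = 1 := by
    rw [Fintype.sum_prod_type]
    simp only
    rw [← Finset.sum_mul_sum]
    have := sum_pm p F (fun _ => 1)
    have := sum_pm p G (fun _ => 1)
    simp_all
  linarith

end Marg

/-! ### Words with a thinning label -/

section NLetter

variable {S T W U V X Y Y1 Y2 : Type*} [Fintype S] [Fintype T] [Fintype W] [Fintype U] [Fintype V]
  [Fintype X] [Fintype Y] [Fintype Y1] [Fintype Y2] {n : ℕ}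

lemma sum_prod_fun {α : Type*} [Fintype α] (g : Fin n → α → ℝ) :
    ∑ x : Fin n → α, ∏ i, g i (x i) = ∏ i, ∑ a, g i a := by
  rw [Finset.prod_univ_sum, Fintype.piFinset_univ]

/-- The product proposal for satellite words.  Every word carries a label, which is `true` with
probability `δ`; only words labelled `true` are ever used, so that `|A|` slots act like `δ |A|`
slots, a number that may be smaller than one. -/
def labU (δ : ℝ) (q : S → W → U → ℝ) (s : Fin n → S) (w : Fin n → W) (u : (Fin n → U) × Bool) : ℝ :=
  (∏ i, q (s i) (w i) (u.1 i)) * (if u.2 then δ else 1 - δ)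

/-- The product target, concentrated on words labelled `true`. -/
def labC (c : S → T → W → U → V → ℝ) (s : Fin n → S) (t : Fin n → T) (w : Fin n → W)
    (u : (Fin n → U) × Bool) (v : (Fin n → V) × Bool) : ℝ :=
  if u.2 = true ∧ v.2 = true then ∏ i, c (s i) (t i) (w i) (u.1 i) (v.1 i) else 0

lemma labU_nonneg {δ : ℝ} (hδ : 0 ≤ δ) (hδ1 : δ ≤ 1) {q : S → W → U → ℝ} (hq : ∀ s w u, 0 ≤ q s w u)
    (s : Fin n → S) (w : Fin n → W) (u : (Fin n → U) × Bool) : 0 ≤ labU δ q s w u := by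
  unfold labU
  refine mul_nonneg (Finset.prod_nonneg fun i _ => hq _ _ _) ?_
  split_ifs <;> linarith

lemma labU_sum {δ : ℝ} {q : S → W → U → ℝ} (hq : ∀ s w, ∑ u, q s w u = 1)
    (s : Fin n → S) (w : Fin n → W) : ∑ u, labU δ q s w u = 1 := by
  simp only [labU, Fintype.sum_prod_type, Fintype.sum_bool, if_true, Bool.false_eq_true, if_false,
    ← mul_add, add_sub_cancel, mul_one]
  rw [sum_prod_fun (fun i u => q (s i) (w i) u)]
  simp [hq]

lemma labC_nonneg {c : S → T → W → U → V → ℝ} (hc : ∀ s t w u v, 0 ≤ c s t w u v)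
    (s : Fin n → S) (t : Fin n → T) (w : Fin n → W)
    (u : (Fin n → U) × Bool) (v : (Fin n → V) × Bool) : 0 ≤ labC c s t w u v := by
  unfold labC
  split_ifs
  · exact Finset.prod_nonneg fun i _ => hc _ _ _ _ _
  · rfl

/-- Sums against the target only see words labelled `true`. -/
lemma labC_sum_mul (c : S → T → W → U → V → ℝ) (s : Fin n → S) (t : Fin n → T) (w : Fin n → W)
    (G : (Fin n → U) × Bool → (Fin n → V) × Bool → ℝ) :
    ∑ u, ∑ v, labC c s t w u v * G u v = ∑ u : Fin n → U, ∑ v : Fin n → V,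
      (∏ i, c (s i) (t i) (w i) (u i) (v i)) * G (u, true) (v, true) := by
  simp [labC, Fintype.sum_prod_type]

lemma labC_sum_v (c : S → T → W → U → V → ℝ) (s : Fin n → S) (t : Fin n → T) (w : Fin n → W)
    (u : Fin n → U) :
    ∑ v, labC c s t w (u, true) v = ∏ i, ∑ v, c (s i) (t i) (w i) (u i) v := by
  rw [← sum_prod_fun (fun i v => c (s i) (t i) (w i) (u i) v)]
  simp [labC, Fintype.sum_prod_type]

lemma labC_sum_u (c : S → T → W → U → V → ℝ) (s : Fin n → S) (t : Fin n → T) (w : Fin n → W)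
    (v : Fin n → V) :
    ∑ u, labC c s t w u (v, true) = ∏ i, ∑ u, c (s i) (t i) (w i) u (v i) := by
  rw [← sum_prod_fun (fun i u => c (s i) (t i) (w i) u (v i))]
  simp [labC, Fintype.sum_prod_type]

lemma labC_sum_uv (c : S → T → W → U → V → ℝ) (s : Fin n → S) (t : Fin n → T) (w : Fin n → W) :
    ∑ u, ∑ v, labC c s t w u v = ∏ i, ∑ u, ∑ v, c (s i) (t i) (w i) u v := by
  have := labC_sum_mul c s t w (fun _ _ => 1)
  simp only [mul_one] at this
  rw [this, ← sum_prod_fun (fun i u => ∑ v, c (s i) (t i) (w i) u v)]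
  exact Finset.sum_congr rfl fun u _ => sum_prod_fun (fun i v => c (s i) (t i) (w i) (u i) v)

lemma labC_sum {c : S → T → W → U → V → ℝ} (hc : ∀ s t, ∑ w, ∑ u, ∑ v, c s t w u v = 1)
    (s : Fin n → S) (t : Fin n → T) : ∑ w, ∑ u, ∑ v, labC c s t w u v = 1 := by
  simp_rw [labC_sum_uv]
  rw [sum_prod_fun (fun i w => ∑ u, ∑ v, c (s i) (t i) w u v)]
  simp [hc]

/-- The receiver's test: the word is labelled `true`, the observation has positive probability,
and the two likelihood ratios, given the cloud centre and unconditionally, are large. -/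
def Test (qW : W → ℝ) (q : S → W → U → ℝ) (pY : Y → ℝ) (pWY : W → Y → ℝ) (pJ : S → W → U → Y → ℝ)
    (k1 k2 : ℝ) (s : Fin n → S) (w : Fin n → W) (u : (Fin n → U) × Bool) (y : Fin n → Y) : Prop :=
  u.2 = true ∧ 0 < ∏ i, pWY (w i) (y i) ∧ 0 < ∏ i, pY (y i) ∧
    ∏ i, q (s i) (w i) (u.1 i) * pWY (w i) (y i) ≤ k1 * ∏ i, pJ (s i) (w i) (u.1 i) (y i) ∧
    ∏ i, qW (w i) * q (s i) (w i) (u.1 i) * pY (y i) ≤ k2 * ∏ i, pJ (s i) (w i) (u.1 i) (y i)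

open Classical in
/-- Expected number of source words passing the test, given the centre: by the first likelihood
ratio bound, the proposal on passing words is at most `δ k1` times the law of `(s, u)` given
`(w, y)`. -/
lemma test_k1 {qW : W → ℝ} {q : S → W → U → ℝ} {pY : Y → ℝ} {pWY : W → Y → ℝ}
    {pJ : S → W → U → Y → ℝ} {k1 k2 δ : ℝ} (hδ : 0 ≤ δ) (hk1 : 0 ≤ k1)
    (hJ0 : ∀ s w u y, 0 ≤ pJ s w u y) (hJ : ∀ w y, ∑ s, ∑ u, pJ s w u y = pWY w y)
    (w : Fin n → W) (y : Fin n → Y) :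
    ∑ s, ∑ u, labU δ q s w u * (if Test qW q pY pWY pJ k1 k2 s w u y then 1 else 0) ≤ δ * k1 := by
  by_cases hp : 0 < ∏ i, pWY (w i) (y i)
  swap
  · simp only [Test, hp, false_and, and_false, if_false, mul_zero, Finset.sum_const_zero]
    positivity
  have e : ∀ (s : Fin n → S) (u : (Fin n → U) × Bool),
      labU δ q s w u * (if Test qW q pY pWY pJ k1 k2 s w u y then 1 else 0)
      ≤ (if u.2 = true then δ else 0) * (k1 * (∏ i, pJ (s i) (w i) (u.1 i) (y i))
        / ∏ i, pWY (w i) (y i)) := by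
    intro s u
    have h0 : 0 ≤ ∏ i, pJ (s i) (w i) (u.1 i) (y i) := Finset.prod_nonneg fun _ _ => hJ0 _ _ _ _
    split_ifs with h h'
    · simp only [labU, h', if_true, mul_one]
      rw [mul_comm]
      refine mul_le_mul_of_nonneg_left ?_ hδ
      rw [le_div_iff₀ hp, ← Finset.prod_mul_distrib]
      exact h.2.2.2.1
    · exact absurd h.1 h'
    · rw [mul_zero]; positivity
    · simp
  refine (Finset.sum_le_sum fun s _ => Finset.sum_le_sum fun u _ => e s u).trans (le_of_eq ?_)
  simp only [Fintype.sum_prod_type, Fintype.sum_bool, if_true, Bool.false_eq_true, if_false,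
    zero_mul, add_zero, ← Finset.mul_sum, ← Finset.sum_div]
  have : ∑ s : Fin n → S, ∑ u : Fin n → U, ∏ i, pJ (s i) (w i) (u i) (y i)
      = ∏ i, pWY (w i) (y i) := by
    simp_rw [← hJ]
    rw [← sum_prod_fun (fun i s => ∑ u, pJ s (w i) u (y i))]
    exact Finset.sum_congr rfl fun s _ => sum_prod_fun (fun i u => pJ (s i) (w i) u (y i))
  rw [this, mul_div_assoc, div_self hp.ne', mul_one]

open Classical in
/-- Expected number of source words passing the test with an independent cloud: by the second
likelihood ratio bound, the proposal on passing words is at most `δ k2` times the law of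
`(s, w, u)` given `y`. -/
lemma test_k2 {qW : W → ℝ} {q : S → W → U → ℝ} {pY : Y → ℝ} {pWY : W → Y → ℝ}
    {pJ : S → W → U → Y → ℝ} {k1 k2 δ : ℝ} (hδ : 0 ≤ δ) (hk2 : 0 ≤ k2)
    (hJ0 : ∀ s w u y, 0 ≤ pJ s w u y) (hJ : ∀ y, ∑ s, ∑ w, ∑ u, pJ s w u y = pY y)
    (y : Fin n → Y) :
    ∑ s : Fin n → S, ∑ w : Fin n → W, (∏ i, qW (w i)) *
      ∑ u, labU δ q s w u * (if Test qW q pY pWY pJ k1 k2 s w u y then 1 else 0) ≤ δ * k2 := by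
  by_cases hp : 0 < ∏ i, pY (y i)
  swap
  · simp only [Test, hp, false_and, and_false, if_false, mul_zero, Finset.sum_const_zero]
    positivity
  have e : ∀ (s : Fin n → S) (w : Fin n → W) (u : (Fin n → U) × Bool),
      (∏ i, qW (w i)) * (labU δ q s w u * (if Test qW q pY pWY pJ k1 k2 s w u y then 1 else 0))
      ≤ (if u.2 = true then δ else 0) * (k2 * (∏ i, pJ (s i) (w i) (u.1 i) (y i))
        / ∏ i, pY (y i)) := by
    intro s w u
    have h0 : 0 ≤ ∏ i, pJ (s i) (w i) (u.1 i) (y i) := Finset.prod_nonneg fun _ _ => hJ0 _ _ _ _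
    split_ifs with h h'
    · simp only [labU, h', if_true, mul_one]
      rw [← mul_assoc, mul_comm]
      refine mul_le_mul_of_nonneg_left ?_ hδ
      rw [le_div_iff₀ hp, ← Finset.prod_mul_distrib, ← Finset.prod_mul_distrib]
      exact h.2.2.2.2
    · exact absurd h.1 h'
    · rw [mul_zero, mul_zero]; positivity
    · simp
  simp_rw [Finset.mul_sum]
  refine (Finset.sum_le_sum fun s _ => Finset.sum_le_sum fun w _ => Finset.sum_le_sum fun u _ =>
    e s w u).trans (le_of_eq ?_)
  simp only [Fintype.sum_prod_type, Fintype.sum_bool, if_true, Bool.false_eq_true, if_false,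
    zero_mul, add_zero, ← Finset.mul_sum, ← Finset.sum_div]
  have : ∑ s : Fin n → S, ∑ w : Fin n → W, ∑ u : Fin n → U, ∏ i, pJ (s i) (w i) (u i) (y i)
      = ∏ i, pY (y i) := by
    simp_rw [← hJ]
    rw [← sum_prod_fun (fun i s => ∑ w, ∑ u, pJ s w u (y i))]
    refine Finset.sum_congr rfl fun s _ => ?_
    rw [← sum_prod_fun (fun i w => ∑ u, pJ (s i) w u (y i))]
    exact Finset.sum_congr rfl fun w _ => sum_prod_fun (fun i u => pJ (s i) (w i) u (y i))
  rw [this, mul_div_assoc, div_self hp.ne', mul_one]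

/-- The average of a function of the words and of the first output, as an expectation over
independent letters of the joint law. -/
lemma expect_user1 (pST : S → T → ℝ) (c : S → T → W → U → V → ℝ) (pX : W → U → V → X → ℝ)
    (ch : X → Y1 → Y2 → ℝ) (p : Omega8 S T W U V X Y1 Y2 → ℝ)
    (hp : ∀ s t w u v x y1 y2, p (s, t, w, u, v, x, y1, y2) =
        pST s t * c s t w u v * pX w u v x * ch x y1 y2)
    (G : (Fin n → S) → (Fin n → T) → (Fin n → W) → (Fin n → U) × Bool → (Fin n → V) × Bool →
      (Fin n → Y1) → ℝ) :
    ∑ s : Fin n → S, ∑ t : Fin n → T, (∏ i, pST (s i) (t i)) * ∑ w, ∑ u, ∑ v, labC c s t w u v *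
      ∑ y1, (∑ x : Fin n → X, (∏ i, pX (w i) (u.1 i) (v.1 i) (x i)) *
        ∑ y2 : Fin n → Y2, ∏ i, ch (x i) (y1 i) (y2 i)) * G s t w u v y1
    = ∑ ω : Fin n → Omega8 S T W U V X Y1 Y2, (∏ i, p (ω i)) * G (fun i => bS (ω i))
        (fun i => bT (ω i)) (fun i => bW (ω i)) (fun i => bU (ω i), true)
        (fun i => bV (ω i), true) (fun i => bY1 (ω i)) := by
  have key := sum_omega8 (n := n) (S := S) (T := T) (W := W) (U := U) (V := V) (X := X) (Y1 := Y1)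
    (Y2 := Y2) (fun s t w u v x y1 y2 => (∏ i, p (s i, t i, w i, u i, v i, x i, y1 i, y2 i)) *
      G s t w (u, true) (v, true) y1)
  refine Eq.trans ?_ (key.trans rfl)
  refine Finset.sum_congr rfl fun s _ => Finset.sum_congr rfl fun t _ => ?_
  rw [Finset.mul_sum]
  refine Finset.sum_congr rfl fun w _ => ?_
  rw [labC_sum_mul, Finset.mul_sum]
  refine Finset.sum_congr rfl fun u _ => ?_
  rw [Finset.mul_sum]
  refine Finset.sum_congr rfl fun v _ => ?_
  simp_rw [Finset.sum_mul, Finset.mul_sum]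
  rw [Finset.sum_comm]
  refine Finset.sum_congr rfl fun x _ => Finset.sum_congr rfl fun y1 _ => ?_
  rw [Finset.sum_mul, Finset.mul_sum, Finset.mul_sum]
  refine Finset.sum_congr rfl fun y2 _ => ?_
  simp_rw [hp, Finset.prod_mul_distrib]
  ring

lemma expect_user2 (pST : S → T → ℝ) (c : S → T → W → U → V → ℝ) (pX : W → U → V → X → ℝ)
    (ch : X → Y1 → Y2 → ℝ) (p : Omega8 S T W U V X Y1 Y2 → ℝ)
    (hp : ∀ s t w u v x y1 y2, p (s, t, w, u, v, x, y1, y2) =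
        pST s t * c s t w u v * pX w u v x * ch x y1 y2)
    (G : (Fin n → S) → (Fin n → T) → (Fin n → W) → (Fin n → U) × Bool → (Fin n → V) × Bool →
      (Fin n → Y2) → ℝ) :
    ∑ s : Fin n → S, ∑ t : Fin n → T, (∏ i, pST (s i) (t i)) * ∑ w, ∑ u, ∑ v, labC c s t w u v *
      ∑ y2, (∑ x : Fin n → X, (∏ i, pX (w i) (u.1 i) (v.1 i) (x i)) *
        ∑ y1 : Fin n → Y1, ∏ i, ch (x i) (y1 i) (y2 i)) * G s t w u v y2
    = ∑ ω : Fin n → Omega8 S T W U V X Y1 Y2, (∏ i, p (ω i)) * G (fun i => bS (ω i))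
        (fun i => bT (ω i)) (fun i => bW (ω i)) (fun i => bU (ω i), true)
        (fun i => bV (ω i), true) (fun i => bY2 (ω i)) := by
  have key := sum_omega8 (n := n) (S := S) (T := T) (W := W) (U := U) (V := V) (X := X) (Y1 := Y1)
    (Y2 := Y2) (fun s t w u v x y1 y2 => (∏ i, p (s i, t i, w i, u i, v i, x i, y1 i, y2 i)) *
      G s t w (u, true) (v, true) y2)
  refine Eq.trans ?_ (key.trans rfl)
  refine Finset.sum_congr rfl fun s _ => Finset.sum_congr rfl fun t _ => ?_
  rw [Finset.mul_sum]
  refine Finset.sum_congr rfl fun w _ => ?_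
  rw [labC_sum_mul, Finset.mul_sum]
  refine Finset.sum_congr rfl fun u _ => ?_
  rw [Finset.mul_sum]
  refine Finset.sum_congr rfl fun v _ => ?_
  simp_rw [Finset.sum_mul, Finset.mul_sum]
  rw [Finset.sum_comm]
  refine Finset.sum_congr rfl fun x _ => ?_
  rw [Finset.sum_comm (s := (Finset.univ : Finset (Fin n → Y1)))]
  refine Finset.sum_congr rfl fun y2 _ => ?_
  rw [Finset.sum_mul, Finset.mul_sum, Finset.mul_sum]
  refine Finset.sum_congr rfl fun y1 _ => ?_
  simp_rw [hp, Finset.prod_mul_distrib]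
  ring

end NLetter

/-! ### Block codes at given rates -/

section Block

variable {S T W U V X Y1 Y2 : Type*} [Fintype S] [Fintype T] [Fintype W] [Fintype U] [Fintype V]
  [Fintype X] [Fintype Y1] [Fintype Y2] [DecidableEq S] [DecidableEq T]

/-- Typicality of a word labelled `true` from unlabelled likelihood bounds; every satellite costs a
factor `1 / δ`. -/
lemma covTyp_block {n : ℕ} {c : S → T → W → U → V → ℝ} {qW : W → ℝ} {q1 : S → W → U → ℝ}
    {q2 : T → W → V → ℝ} {δ θ0 θ1 θ2 θ3 : ℝ} (hδ : 0 < δ) (s : Fin n → S) (t : Fin n → T)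
    (w : Fin n → W) (u : Fin n → U) (v : Fin n → V)
    (h0 : ∏ i, (∑ u, ∑ v, c (s i) (t i) (w i) u v) ≤ θ0 * ∏ i, qW (w i))
    (h1 : ∏ i, (∑ v, c (s i) (t i) (w i) (u i) v) ≤
      θ1 * ∏ i, qW (w i) * q1 (s i) (w i) (u i))
    (h2 : ∏ i, (∑ u, c (s i) (t i) (w i) u (v i)) ≤
      θ2 * ∏ i, qW (w i) * q2 (t i) (w i) (v i))
    (h3 : ∏ i, c (s i) (t i) (w i) (u i) (v i) ≤
      θ3 * ∏ i, qW (w i) * q1 (s i) (w i) (u i) * q2 (t i) (w i) (v i)) :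
    CovTyp (fun w => ∏ i, qW (w i)) (labU δ q1 s) (labU δ q2 t) (labC c s t)
      θ0 (θ1 / δ) (θ2 / δ) (θ3 / (δ * δ)) w (u, true) (v, true) := by
  refine ⟨?_, ?_, ?_, ?_⟩
  · rw [labC_sum_uv]; exact h0
  · rw [labC_sum_v]
    refine h1.trans (le_of_eq ?_)
    simp only [labU, if_true, Finset.prod_mul_distrib]
    field_simp
  · rw [labC_sum_u]
    refine h2.trans (le_of_eq ?_)
    simp only [labU, if_true, Finset.prod_mul_distrib]
    field_simp
  · simp only [labC, and_self, if_true]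
    refine h3.trans (le_of_eq ?_)
    simp only [labU, if_true, Finset.prod_mul_distrib]
    field_simp

open Classical in
lemma not_of_four {P : Prop} {a0 b0 a1 b1 a2 b2 a3 b3 : ℝ}
    (h : a0 ≤ b0 → a1 ≤ b1 → a2 ≤ b2 → a3 ≤ b3 → P) :
    (if P then (0 : ℝ) else 1) ≤ (if b0 < a0 then 1 else 0) + (if b1 < a1 then 1 else 0)
      + (if b2 < a2 then 1 else 0) + (if b3 < a3 then 1 else 0) := by
  by_cases h0 : b0 < a0
  · rw [if_pos h0]; split_ifs <;> norm_num
  by_cases h1 : b1 < a1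
  · rw [if_pos h1]; split_ifs <;> norm_num
  by_cases h2 : b2 < a2
  · rw [if_pos h2]; split_ifs <;> norm_num
  by_cases h3 : b3 < a3
  · rw [if_pos h3]; split_ifs <;> norm_num
  rw [if_pos (h (not_lt.mp h0) (not_lt.mp h1) (not_lt.mp h2) (not_lt.mp h3))]
  split_ifs
  norm_num

lemma exp2_add (n : ℕ) (a b : ℝ) : (2 : ℝ) ^ (n * (a + b)) = 2 ^ (n * a) * 2 ^ (n * b) := by
  rw [mul_add, Real.rpow_add (by norm_num)]

lemma exp2_tendsto {a : ℝ} (ha : a < 0) :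
    Filter.Tendsto (fun n : ℕ => (2 : ℝ) ^ (n * a)) Filter.atTop (nhds 0) := by
  have : ∀ n : ℕ, (2 : ℝ) ^ (n * a) = ((2 : ℝ) ^ a) ^ n := fun n => by
    rw [mul_comm, Real.rpow_mul (by norm_num), Real.rpow_natCast]
  simp_rw [this]
  exact tendsto_pow_atTop_nhds_zero_of_lt_one (by positivity)
    (Real.rpow_lt_one_of_one_lt_of_neg (by norm_num) ha)

/-- A codebook size `M` and a thinning probability `δ = 2 ^ (-n b)` with `δ M ≈ 2 ^ (n R)`. -/
lemma exists_size (n : ℕ) {R b : ℝ} (h : 0 ≤ R + b) :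
    ∃ M : ℕ, 0 < M ∧ (2 : ℝ) ^ (n * R) ≤ M * 2 ^ (n * (-b)) ∧
      M * (2 : ℝ) ^ (n * (-b)) ≤ 2 * 2 ^ (n * R) := by
  have e : (2 : ℝ) ^ (n * R) = 2 ^ (n * (R + b)) * 2 ^ (n * (-b)) := by
    rw [← exp2_add]; ring_nf
  have h1 : (1 : ℝ) ≤ 2 ^ (n * (R + b)) := Real.one_le_rpow (by norm_num) (by positivity)
  refine ⟨⌈(2 : ℝ) ^ (n * (R + b))⌉₊, Nat.ceil_pos.mpr (by positivity), ?_, ?_⟩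
  · rw [e]
    exact mul_le_mul_of_nonneg_right (Nat.le_ceil _) (by positivity)
  · rw [e, ← mul_assoc]
    refine mul_le_mul_of_nonneg_right ?_ (by positivity)
    linarith [Nat.ceil_lt_add_one (a := (2 : ℝ) ^ (n * (R + b))) (by positivity)]

lemma ite_le_left {a b : ℝ} {P Q : Prop} [Decidable P] [Decidable Q] (ha : 0 ≤ a) (hb : 0 ≤ b) :
    (if P then a * b else 0) ≤ a * (b * ((if P then 1 else 0) + (if Q then 1 else 0))) := by
  have := mul_nonneg ha hb
  split_ifs <;> simp <;> linarith

lemma ite_le_right {a b : ℝ} {P Q : Prop} [Decidable P] [Decidable Q] (ha : 0 ≤ a) (hb : 0 ≤ b) :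
    (if Q then a * b else 0) ≤ a * (b * ((if P then 1 else 0) + (if Q then 1 else 0))) := by
  have := mul_nonneg ha hb
  split_ifs <;> simp <;> linarith

/-- The covering error as a sum of exponentials; the thinning probability `δ` cancels against the
book sizes. -/
lemma rate_cov (n : ℕ) {r0 r1 r2 r3 R0 R1 R2 δ M0 M1 M2 : ℝ}
    (h0 : (2 : ℝ) ^ (n * R0) ≤ M0) (h1 : (2 : ℝ) ^ (n * R1) ≤ M1 * δ)
    (h2 : (2 : ℝ) ^ (n * R2) ≤ M2 * δ) :
    (2 ^ (n * r0) + 2 ^ (n * r1) / δ / M1 + 2 ^ (n * r2) / δ / M2 +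
      2 ^ (n * r3) / (δ * δ) / (M1 * M2)) / M0 ≤
    2 ^ (n * (r0 - R0)) + 2 ^ (n * (r1 - (R0 + R1))) + 2 ^ (n * (r2 - (R0 + R2)))
        + 2 ^ (n * (r3 - (R0 + R1 + R2))) := by
  have e : ∀ a b : ℝ, (2 : ℝ) ^ (n * (a - b)) = 2 ^ (n * a) / 2 ^ (n * b) := fun a b => by
    rw [mul_sub, Real.rpow_sub (by norm_num)]
  have p0 : (0 : ℝ) < 2 ^ (n * R0) := by positivity
  have p1 : (0 : ℝ) < 2 ^ (n * R1) := by positivity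
  have p2 : (0 : ℝ) < 2 ^ (n * R2) := by positivity
  have q0 : 0 ≤ M0 := p0.le.trans h0
  have q1 : 0 ≤ M0 * (M1 * δ) := mul_nonneg q0 (p1.le.trans h1)
  simp only [e, exp2_add]
  rw [add_div, add_div, add_div]
  refine add_le_add (add_le_add (add_le_add ?_ ?_) ?_) ?_
  · gcongr
  · rw [div_div, div_div, show δ * (M1 * M0) = M0 * (M1 * δ) by ring]
    gcongr
  · rw [div_div, div_div, show δ * (M2 * M0) = M0 * (M2 * δ) by ring]
    gcongr
  · rw [div_div, div_div, show δ * δ * (M1 * M2 * M0) = M0 * (M1 * δ) * (M2 * δ) by ring]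
    gcongr

/-- The packing error as a sum of exponentials. -/
lemma rate_pack (n : ℕ) {k1 k2 R0 R1 δ M0 M1 : ℝ} (hδ : 0 ≤ δ) (hM : 0 ≤ M1)
    (h0 : M0 ≤ 2 * (2 : ℝ) ^ (n * R0)) (h1 : M1 * δ ≤ 2 * (2 : ℝ) ^ (n * R1)) :
    M1 * (δ * 2 ^ (n * k1)) + M0 * M1 * (δ * 2 ^ (n * k2)) ≤
      2 * 2 ^ (n * (R1 + k1)) + 4 * 2 ^ (n * (R0 + R1 + k2)) := by
  simp only [exp2_add]
  refine add_le_add ?_ ?_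
  · rw [← mul_assoc, ← mul_assoc]
    gcongr
  · rw [show M0 * M1 * (δ * (2 : ℝ) ^ (n * k2)) = M0 * (M1 * δ) * 2 ^ (n * k2) by ring,
      show 4 * ((2 : ℝ) ^ (n * R0) * 2 ^ (n * R1) * 2 ^ (n * k2)) =
        (2 * 2 ^ (n * R0)) * (2 * 2 ^ (n * R1)) * 2 ^ (n * k2) by ring]
    gcongr

set_option maxHeartbeats 1600000 in
open Classical in
/-- A block-coding theorem for arbitrary single-letter proposals and test densities, in terms of
the exponents of the eight likelihood ratios involved and of the codebook rates `R0` (clouds) and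
`R1`, `R2` (satellites; possibly negative). -/
theorem sendable_of_exponents
    (pST : S → T → ℝ) (hpST0 : ∀ s t, 0 ≤ pST s t) (hpST1 : ∑ s, ∑ t, pST s t = 1)
    (chan : X → Y1 → Y2 → ℝ) (hch0 : ∀ x y1 y2, 0 ≤ chan x y1 y2)
    (hch1 : ∀ x, ∑ y1, ∑ y2, chan x y1 y2 = 1)
    (c : S → T → W → U → V → ℝ) (hc0 : ∀ s t w u v, 0 ≤ c s t w u v)
    (hc1 : ∀ s t, ∑ w, ∑ u, ∑ v, c s t w u v = 1)
    (pX : W → U → V → X → ℝ) (hX0 : ∀ w u v x, 0 ≤ pX w u v x)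
    (hX1 : ∀ w u v, ∑ x, pX w u v x = 1)
    (p : Omega8 S T W U V X Y1 Y2 → ℝ)
    (hp : ∀ s t w u v x y1 y2, p (s, t, w, u, v, x, y1, y2) =
        pST s t * c s t w u v * pX w u v x * chan x y1 y2)
    (hp0 : ∀ ω, 0 ≤ p ω) (hp1 : ∑ ω, p ω = 1)
    (qW : W → ℝ) (hW0 : ∀ w, 0 ≤ qW w) (hW1 : ∑ w, qW w = 1)
    (q1 : S → W → U → ℝ) (hU0 : ∀ s w u, 0 ≤ q1 s w u) (hU1 : ∀ s w, ∑ u, q1 s w u = 1)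
    (q2 : T → W → V → ℝ) (hV0 : ∀ t w v, 0 ≤ q2 t w v) (hV1 : ∀ t w, ∑ v, q2 t w v = 1)
    (pY1 : Y1 → ℝ) (pWY1 : W → Y1 → ℝ) (pJ1 : S → W → U → Y1 → ℝ)
    (hJ10 : ∀ s w u y, 0 ≤ pJ1 s w u y) (hJ11 : ∀ w y, ∑ s, ∑ u, pJ1 s w u y = pWY1 w y)
    (hJ12 : ∀ y, ∑ s, ∑ w, ∑ u, pJ1 s w u y = pY1 y)
    (pY2 : Y2 → ℝ) (pWY2 : W → Y2 → ℝ) (pJ2 : T → W → V → Y2 → ℝ)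
    (hJ20 : ∀ t w v y, 0 ≤ pJ2 t w v y) (hJ21 : ∀ w y, ∑ t, ∑ v, pJ2 t w v y = pWY2 w y)
    (hJ22 : ∀ y, ∑ t, ∑ w, ∑ v, pJ2 t w v y = pY2 y)
    (hW : ∀ ω, p ω ≠ 0 → 0 < qW (bW ω))
    (hU : ∀ ω, p ω ≠ 0 → 0 < q1 (bS ω) (bW ω) (bU ω))
    (hV : ∀ ω, p ω ≠ 0 → 0 < q2 (bT ω) (bW ω) (bV ω))
    (hY1 : ∀ ω, p ω ≠ 0 → 0 < pY1 (bY1 ω)) (hWY1 : ∀ ω, p ω ≠ 0 → 0 < pWY1 (bW ω) (bY1 ω))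
    (hJ1 : ∀ ω, p ω ≠ 0 → 0 < pJ1 (bS ω) (bW ω) (bU ω) (bY1 ω))
    (hY2 : ∀ ω, p ω ≠ 0 → 0 < pY2 (bY2 ω)) (hWY2 : ∀ ω, p ω ≠ 0 → 0 < pWY2 (bW ω) (bY2 ω))
    (hJ2 : ∀ ω, p ω ≠ 0 → 0 < pJ2 (bT ω) (bW ω) (bV ω) (bY2 ω))
    (r0 r1 r2 r3 k1 k2 l1 l2 R0 R1 R2 : ℝ) (hR0 : 0 ≤ R0)
    (m0 : ∑ ω, p ω * (Real.logb 2 (∑ u, ∑ v, c (bS ω) (bT ω) (bW ω) u v)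
      - Real.logb 2 (qW (bW ω))) < r0) (g0 : r0 < R0)
    (m1 : ∑ ω, p ω * (Real.logb 2 (∑ v, c (bS ω) (bT ω) (bW ω) (bU ω) v)
      - Real.logb 2 (qW (bW ω) * q1 (bS ω) (bW ω) (bU ω))) < r1) (g1 : r1 < R0 + R1)
    (m2 : ∑ ω, p ω * (Real.logb 2 (∑ u, c (bS ω) (bT ω) (bW ω) u (bV ω))
      - Real.logb 2 (qW (bW ω) * q2 (bT ω) (bW ω) (bV ω))) < r2) (g2 : r2 < R0 + R2)
    (m3 : ∑ ω, p ω * (Real.logb 2 (c (bS ω) (bT ω) (bW ω) (bU ω) (bV ω))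
      - Real.logb 2 (qW (bW ω) * q1 (bS ω) (bW ω) (bU ω) * q2 (bT ω) (bW ω) (bV ω))) < r3)
    (g3 : r3 < R0 + R1 + R2)
    (m4 : ∑ ω, p ω * (Real.logb 2 (q1 (bS ω) (bW ω) (bU ω) * pWY1 (bW ω) (bY1 ω))
      - Real.logb 2 (pJ1 (bS ω) (bW ω) (bU ω) (bY1 ω))) < k1) (g4 : R1 + k1 < 0)
    (m5 : ∑ ω, p ω * (Real.logb 2 (qW (bW ω) * q1 (bS ω) (bW ω) (bU ω) * pY1 (bY1 ω))
      - Real.logb 2 (pJ1 (bS ω) (bW ω) (bU ω) (bY1 ω))) < k2) (g5 : R0 + R1 + k2 < 0)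
    (m6 : ∑ ω, p ω * (Real.logb 2 (q2 (bT ω) (bW ω) (bV ω) * pWY2 (bW ω) (bY2 ω))
      - Real.logb 2 (pJ2 (bT ω) (bW ω) (bV ω) (bY2 ω))) < l1) (g6 : R2 + l1 < 0)
    (m7 : ∑ ω, p ω * (Real.logb 2 (qW (bW ω) * q2 (bT ω) (bW ω) (bV ω) * pY2 (bY2 ω))
      - Real.logb 2 (pJ2 (bT ω) (bW ω) (bV ω) (bY2 ω))) < l2) (g7 : R0 + R2 + l2 < 0) :
    BCSendable pST chan := by
  have hne : Nonempty (Omega8 S T W U V X Y1 Y2) := by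
    by_contra h
    rw [not_nonempty_iff] at h
    simp at hp1
  obtain ⟨o⟩ := hne
  have : Nonempty S := ⟨bS o⟩
  have : Nonempty T := ⟨bT o⟩
  have : Nonempty X := ⟨bX o⟩
  have hc : ∀ ω, p ω ≠ 0 → 0 < c (bS ω) (bT ω) (bW ω) (bU ω) (bV ω) := fun ω h =>
    lt_of_le_of_ne (hc0 _ _ _ _ _) fun e => h (by
      obtain ⟨s, t, w, u, v, x, y1, y2⟩ := ω
      rw [hp]
      simp only [bS, bT, bW, bU, bV] at e
      rw [← e]; ring)
  have hcv : ∀ ω, p ω ≠ 0 → 0 < ∑ v, c (bS ω) (bT ω) (bW ω) (bU ω) v := fun ω h =>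
    (hc ω h).trans_le (Finset.single_le_sum (f := fun v => c (bS ω) (bT ω) (bW ω) (bU ω) v)
      (fun _ _ => hc0 _ _ _ _ _) (Finset.mem_univ _))
  have hcu : ∀ ω, p ω ≠ 0 → 0 < ∑ u, c (bS ω) (bT ω) (bW ω) u (bV ω) := fun ω h =>
    (hc ω h).trans_le (Finset.single_le_sum (f := fun u => c (bS ω) (bT ω) (bW ω) u (bV ω))
      (fun _ _ => hc0 _ _ _ _ _) (Finset.mem_univ _))
  have hcuv : ∀ ω, p ω ≠ 0 → 0 < ∑ u, ∑ v, c (bS ω) (bT ω) (bW ω) u v := fun ω h =>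
    (hcv ω h).trans_le (Finset.single_le_sum (f := fun u => ∑ v, c (bS ω) (bT ω) (bW ω) u v)
      (fun _ _ => Finset.sum_nonneg fun _ _ => hc0 _ _ _ _ _) (Finset.mem_univ _))
  obtain ⟨C0, hC0, L0⟩ := lln p hp0 hp1 (fun ω => ∑ u, ∑ v, c (bS ω) (bT ω) (bW ω) u v)
    (fun ω => qW (bW ω)) (fun ω h => ⟨hcuv ω h, hW ω h⟩) r0 m0
  obtain ⟨C1, hC1, L1⟩ := lln p hp0 hp1 (fun ω => ∑ v, c (bS ω) (bT ω) (bW ω) (bU ω) v)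
    (fun ω => qW (bW ω) * q1 (bS ω) (bW ω) (bU ω))
    (fun ω h => ⟨hcv ω h, mul_pos (hW ω h) (hU ω h)⟩) r1 m1
  obtain ⟨C2, hC2, L2⟩ := lln p hp0 hp1 (fun ω => ∑ u, c (bS ω) (bT ω) (bW ω) u (bV ω))
    (fun ω => qW (bW ω) * q2 (bT ω) (bW ω) (bV ω))
    (fun ω h => ⟨hcu ω h, mul_pos (hW ω h) (hV ω h)⟩) r2 m2
  obtain ⟨C3, hC3, L3⟩ := lln p hp0 hp1 (fun ω => c (bS ω) (bT ω) (bW ω) (bU ω) (bV ω))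
    (fun ω => qW (bW ω) * q1 (bS ω) (bW ω) (bU ω) * q2 (bT ω) (bW ω) (bV ω))
    (fun ω h => ⟨hc ω h, mul_pos (mul_pos (hW ω h) (hU ω h)) (hV ω h)⟩) r3 m3
  obtain ⟨C4, hC4, L4⟩ := lln p hp0 hp1 (fun ω => q1 (bS ω) (bW ω) (bU ω) * pWY1 (bW ω) (bY1 ω))
    (fun ω => pJ1 (bS ω) (bW ω) (bU ω) (bY1 ω))
    (fun ω h => ⟨mul_pos (hU ω h) (hWY1 ω h), hJ1 ω h⟩) k1 m4
  obtain ⟨C5, hC5, L5⟩ := lln p hp0 hp1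
    (fun ω => qW (bW ω) * q1 (bS ω) (bW ω) (bU ω) * pY1 (bY1 ω))
    (fun ω => pJ1 (bS ω) (bW ω) (bU ω) (bY1 ω))
    (fun ω h => ⟨mul_pos (mul_pos (hW ω h) (hU ω h)) (hY1 ω h), hJ1 ω h⟩) k2 m5
  obtain ⟨C6, hC6, L6⟩ := lln p hp0 hp1 (fun ω => q2 (bT ω) (bW ω) (bV ω) * pWY2 (bW ω) (bY2 ω))
    (fun ω => pJ2 (bT ω) (bW ω) (bV ω) (bY2 ω))
    (fun ω h => ⟨mul_pos (hV ω h) (hWY2 ω h), hJ2 ω h⟩) l1 m6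
  obtain ⟨C7, hC7, L7⟩ := lln p hp0 hp1
    (fun ω => qW (bW ω) * q2 (bT ω) (bW ω) (bV ω) * pY2 (bY2 ω))
    (fun ω => pJ2 (bT ω) (bW ω) (bV ω) (bY2 ω))
    (fun ω h => ⟨mul_pos (mul_pos (hW ω h) (hV ω h)) (hY2 ω h), hJ2 ω h⟩) l2 m7
  let bd : ℕ → ℝ := fun n => 8 * ((C0 / n + C1 / n + C2 / n + C3 / n) +
      (2 ^ (n * (r0 - R0)) + 2 ^ (n * (r1 - (R0 + R1))) + 2 ^ (n * (r2 - (R0 + R2)))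
        + 2 ^ (n * (r3 - (R0 + R1 + R2))))) +
    2 * ((C4 / n + C5 / n) + (2 * 2 ^ (n * (R1 + k1)) + 4 * 2 ^ (n * (R0 + R1 + k2)))
      + ((C6 / n + C7 / n) + (2 * 2 ^ (n * (R2 + l1)) + 4 * 2 ^ (n * (R0 + R2 + l2)))))
  have hbd : Filter.Tendsto bd Filter.atTop (nhds 0) := by
    have t : ∀ C : ℝ, Filter.Tendsto (fun n : ℕ => C / (n : ℝ)) Filter.atTop (nhds 0) :=
      fun C => tendsto_const_div_atTop_nhds_zero_nat C
    have := ((((((t C0).add (t C1)).add (t C2)).add (t C3)).add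
      ((((exp2_tendsto (sub_neg.mpr g0)).add (exp2_tendsto (sub_neg.mpr g1))).add
      (exp2_tendsto (sub_neg.mpr g2))).add (exp2_tendsto (sub_neg.mpr g3)))).const_mul 8).add
      (((((t C4).add (t C5)).add (((exp2_tendsto g4).const_mul 2).add
        ((exp2_tendsto g5).const_mul 4))).add
      (((t C6).add (t C7)).add (((exp2_tendsto g6).const_mul 2).add
        ((exp2_tendsto g7).const_mul 4)))).const_mul 2)
    simpa [bd] using this
  have main : ∀ n : ℕ, 0 < n → ∃ (enc : (Fin n → S) × (Fin n → T) → Fin n → X)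
      (φ1 : (Fin n → Y1) → Fin n → S) (φ2 : (Fin n → Y2) → Fin n → T),
      ∑ s : Fin n → S, ∑ t : Fin n → T, (∏ i, pST (s i) (t i)) * ∑ y1 : Fin n → Y1,
        ∑ y2 : Fin n → Y2, (∏ i, chan (enc (s, t) i) (y1 i) (y2 i)) *
        ((if φ1 y1 ≠ s then (1 : ℝ) else 0) + (if φ2 y2 ≠ t then (1 : ℝ) else 0)) ≤ bd n := by
    intro n hn
    -- the thinning exponent makes both slot numbers at least one
    set β : ℝ := |R1| + |R2| with hβ
    have hβ0 : 0 ≤ β := by positivity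
    obtain ⟨M0, hM0, M0l, M0u⟩ := exists_size n (R := R0) (b := 0) (by linarith)
    obtain ⟨M1, hM1, M1l, M1u⟩ := exists_size n (R := R1) (b := β)
      (by linarith [neg_abs_le R1, abs_nonneg R2])
    obtain ⟨M2, hM2, M2l, M2u⟩ := exists_size n (R := R2) (b := β)
      (by linarith [neg_abs_le R2, abs_nonneg R1])
    have : Nonempty (Fin M0) := ⟨⟨0, hM0⟩⟩
    have : Nonempty (Fin M1) := ⟨⟨0, hM1⟩⟩
    have : Nonempty (Fin M2) := ⟨⟨0, hM2⟩⟩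
    set δ : ℝ := 2 ^ (n * (-β)) with hδ
    have hδ0 : 0 < δ := by positivity
    have hδ1 : δ ≤ 1 := Real.rpow_le_one_of_one_le_of_nonpos (by norm_num)
      (mul_nonpos_of_nonneg_of_nonpos (Nat.cast_nonneg n) (by linarith))
    obtain ⟨enc, φ1, φ2, hE⟩ := one_shot (A := Fin M1) (B := Fin M2) (J := Fin M0)
      (q0 := fun w : Fin n → W => ∏ i, qW (w i)) (q1 := labU δ q1) (q2 := labU δ q2)
      (fun (s : Fin n → S) (t : Fin n → T) => ∏ i, pST (s i) (t i))
      (fun s t => Finset.prod_nonneg fun i _ => hpST0 _ _)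
      (by
        have : ∀ s : Fin n → S, ∑ t : Fin n → T, ∏ i, pST (s i) (t i) = ∏ i, ∑ t, pST (s i) t :=
          fun s => sum_prod_fun (fun i t => pST (s i) t)
        simp_rw [this]
        rw [sum_prod_fun (fun (_ : Fin n) s => ∑ t, pST s t)]
        simp [hpST1])
      (labC c) (labC_nonneg hc0) (labC_sum hc1)
      (fun w u v (x : Fin n → X) => ∏ i, pX (w i) (u.1 i) (v.1 i) (x i))
      (fun w u v x => Finset.prod_nonneg fun i _ => hX0 _ _ _ _)
      (fun w u v => by
        rw [sum_prod_fun (fun i x => pX (w i) (u.1 i) (v.1 i) x)]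
        simp [hX1])
      (fun (x : Fin n → X) (y1 : Fin n → Y1) (y2 : Fin n → Y2) => ∏ i, chan (x i) (y1 i) (y2 i))
      (fun x y1 y2 => Finset.prod_nonneg fun i _ => hch0 _ _ _)
      (fun x => by
        have : ∀ y1 : Fin n → Y1, ∑ y2 : Fin n → Y2, ∏ i, chan (x i) (y1 i) (y2 i)
            = ∏ i, ∑ y2, chan (x i) (y1 i) y2 :=
          fun y1 => sum_prod_fun (fun i y2 => chan (x i) (y1 i) y2)
        simp_rw [this]
        rw [sum_prod_fun (fun i y1 => ∑ y2, chan (x i) y1 y2)]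
        simp [hch1])
      (fun w => Finset.prod_nonneg fun i _ => hW0 _)
      (labU_nonneg hδ0.le hδ1 hU0) (labU_nonneg hδ0.le hδ1 hV0)
      (by rw [sum_prod_fun (fun _ w => qW w)]; simp [hW1])
      (labU_sum hU1) (labU_sum hV1)
      (2 ^ (n * r0)) (2 ^ (n * r1) / δ) (2 ^ (n * r2) / δ) (2 ^ (n * r3) / (δ * δ))
      (by positivity) (by positivity) (by positivity) (by positivity)
      (Test qW q1 pY1 pWY1 pJ1 (2 ^ (n * k1)) (2 ^ (n * k2)))
      (δ * 2 ^ (n * k1)) (δ * 2 ^ (n * k2)) (by positivity) (by positivity)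
      (test_k1 hδ0.le (by positivity) hJ10 hJ11) (test_k2 hδ0.le (by positivity) hJ10 hJ12)
      (Test qW q2 pY2 pWY2 pJ2 (2 ^ (n * l1)) (2 ^ (n * l2)))
      (δ * 2 ^ (n * l1)) (δ * 2 ^ (n * l2)) (by positivity) (by positivity)
      (test_k1 hδ0.le (by positivity) hJ20 hJ21) (test_k2 hδ0.le (by positivity) hJ20 hJ22)
    refine ⟨enc, φ1, φ2, ?_⟩
    refine le_trans (le_of_eq ?_) (hE.trans ?_)
    · refine Finset.sum_congr rfl fun s _ => Finset.sum_congr rfl fun t _ => ?_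
      congr 1
    have supp : ∀ ω : Fin n → Omega8 S T W U V X Y1 Y2, ∏ i, p (ω i) ≠ 0 → ∀ i, p (ω i) ≠ 0 :=
      fun ω h i h' => h (Finset.prod_eq_zero (Finset.mem_univ i) h')
    have hP0 : ∀ ω : Fin n → Omega8 S T W U V X Y1 Y2, 0 ≤ ∏ i, p (ω i) :=
      fun ω => Finset.prod_nonneg fun i _ => hp0 _
    refine add_le_add (mul_le_mul_of_nonneg_left (add_le_add ?_ ?_) (by norm_num))
      (mul_le_mul_of_nonneg_left (add_le_add (add_le_add ?_ ?_) (add_le_add ?_ ?_)) (by norm_num))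
    · have ex := expect_user1 (n := n) pST c pX chan p hp (fun s t w u v _ =>
        if CovTyp (fun w => ∏ i, qW (w i)) (labU δ q1 s) (labU δ q2 t) (labC c s t)
          (2 ^ (n * r0)) (2 ^ (n * r1) / δ) (2 ^ (n * r2) / δ) (2 ^ (n * r3) / (δ * δ)) w u v
        then 0 else 1)
      have hone : ∀ (w : Fin n → W) (u : (Fin n → U) × Bool) (v : (Fin n → V) × Bool) (a : ℝ),
          ∑ y1 : Fin n → Y1, (∑ x : Fin n → X, (∏ i, pX (w i) (u.1 i) (v.1 i) (x i)) *
            ∑ y2 : Fin n → Y2, ∏ i, chan (x i) (y1 i) (y2 i)) * a = a := by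
        intro w u v a
        have h1 : ∀ x : Fin n → X, ∑ y1 : Fin n → Y1, ∑ y2 : Fin n → Y2,
            ∏ i, chan (x i) (y1 i) (y2 i) = 1 := fun x => by
          have : ∀ y1 : Fin n → Y1, ∑ y2 : Fin n → Y2, ∏ i, chan (x i) (y1 i) (y2 i)
              = ∏ i, ∑ y2, chan (x i) (y1 i) y2 :=
            fun y1 => sum_prod_fun (fun i y2 => chan (x i) (y1 i) y2)
          simp_rw [this]
          rw [sum_prod_fun (fun i y1 => ∑ y2, chan (x i) y1 y2)]
          simp [hch1]
        rw [← Finset.sum_mul, Finset.sum_comm]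
        simp_rw [← Finset.mul_sum, h1, mul_one]
        rw [sum_prod_fun (fun i x => pX (w i) (u.1 i) (v.1 i) x)]
        simp [hX1]
      simp_rw [hone] at ex
      refine (le_of_eq ex).trans ?_
      refine le_trans ?_
        (add_le_add (add_le_add (add_le_add (L0 n hn) (L1 n hn)) (L2 n hn)) (L3 n hn))
      rw [← Finset.sum_add_distrib, ← Finset.sum_add_distrib, ← Finset.sum_add_distrib]
      refine Finset.sum_le_sum fun ω _ => ?_
      rw [← mul_add, ← mul_add, ← mul_add]
      refine mul_le_mul_of_nonneg_left ?_ (hP0 ω)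
      have ct := covTyp_block (c := c) (qW := qW) (q1 := q1) (q2 := q2) (θ0 := 2 ^ (n * r0))
        (θ1 := 2 ^ (n * r1)) (θ2 := 2 ^ (n * r2)) (θ3 := 2 ^ (n * r3)) hδ0
        (fun i => bS (ω i)) (fun i => bT (ω i)) (fun i => bW (ω i)) (fun i => bU (ω i))
        (fun i => bV (ω i))
      exact not_of_four ct
    · simp only [Fintype.card_fin]
      exact rate_cov n (by simpa using M0l) M1l M2l
    · have ex := expect_user1 (n := n) pST c pX chan p hp (fun s t w u v y =>
        if Test qW q1 pY1 pWY1 pJ1 (2 ^ (n * k1)) (2 ^ (n * k2)) s w u y then 0 else 1)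
      refine (le_of_eq ex).trans ?_
      refine le_trans ?_ (add_le_add (L4 n hn) (L5 n hn))
      rw [← Finset.sum_add_distrib]
      refine Finset.sum_le_sum fun ω _ => ?_
      by_cases hω : ∏ i, p (ω i) = 0
      · simp [hω]
      rw [← mul_add]
      refine mul_le_mul_of_nonneg_left ?_ (hP0 ω)
      have s1 : 0 < ∏ i, pWY1 (bW (ω i)) (bY1 (ω i)) :=
        Finset.prod_pos fun i _ => hWY1 _ (supp ω hω i)
      have s2 : 0 < ∏ i, pY1 (bY1 (ω i)) := Finset.prod_pos fun i _ => hY1 _ (supp ω hω i)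
      by_cases a : (2 : ℝ) ^ (n * k1) * ∏ i, pJ1 (bS (ω i)) (bW (ω i)) (bU (ω i)) (bY1 (ω i)) <
        ∏ i, q1 (bS (ω i)) (bW (ω i)) (bU (ω i)) * pWY1 (bW (ω i)) (bY1 (ω i))
      · rw [if_pos a]; split_ifs <;> norm_num
      by_cases b : (2 : ℝ) ^ (n * k2) * ∏ i, pJ1 (bS (ω i)) (bW (ω i)) (bU (ω i)) (bY1 (ω i)) <
        ∏ i, qW (bW (ω i)) * q1 (bS (ω i)) (bW (ω i)) (bU (ω i)) * pY1 (bY1 (ω i))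
      · rw [if_pos b]; split_ifs <;> norm_num
      rw [if_neg a, if_neg b, if_pos ⟨rfl, s1, s2, not_lt.mp a, not_lt.mp b⟩]
      norm_num
    · simp only [Fintype.card_fin]
      exact rate_pack n hδ0.le (Nat.cast_nonneg _) (by simpa using M0u) M1u
    · have ex := expect_user2 (n := n) pST c pX chan p hp (fun s t w u v y =>
        if Test qW q2 pY2 pWY2 pJ2 (2 ^ (n * l1)) (2 ^ (n * l2)) t w v y then 0 else 1)
      refine (le_of_eq ex).trans ?_
      refine le_trans ?_ (add_le_add (L6 n hn) (L7 n hn))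
      rw [← Finset.sum_add_distrib]
      refine Finset.sum_le_sum fun ω _ => ?_
      by_cases hω : ∏ i, p (ω i) = 0
      · simp [hω]
      rw [← mul_add]
      refine mul_le_mul_of_nonneg_left ?_ (hP0 ω)
      have s1 : 0 < ∏ i, pWY2 (bW (ω i)) (bY2 (ω i)) :=
        Finset.prod_pos fun i _ => hWY2 _ (supp ω hω i)
      have s2 : 0 < ∏ i, pY2 (bY2 (ω i)) := Finset.prod_pos fun i _ => hY2 _ (supp ω hω i)
      by_cases a : (2 : ℝ) ^ (n * l1) * ∏ i, pJ2 (bT (ω i)) (bW (ω i)) (bV (ω i)) (bY2 (ω i)) <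
        ∏ i, q2 (bT (ω i)) (bW (ω i)) (bV (ω i)) * pWY2 (bW (ω i)) (bY2 (ω i))
      · rw [if_pos a]; split_ifs <;> norm_num
      by_cases b : (2 : ℝ) ^ (n * l2) * ∏ i, pJ2 (bT (ω i)) (bW (ω i)) (bV (ω i)) (bY2 (ω i)) <
        ∏ i, qW (bW (ω i)) * q2 (bT (ω i)) (bW (ω i)) (bV (ω i)) * pY2 (bY2 (ω i))
      · rw [if_pos b]; split_ifs <;> norm_num
      rw [if_neg a, if_neg b, if_pos ⟨rfl, s1, s2, not_lt.mp a, not_lt.mp b⟩]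
      norm_num
    · simp only [Fintype.card_fin]
      exact rate_pack n hδ0.le (Nat.cast_nonneg _) (by simpa using M0u) M2u
  intro ε hε
  obtain ⟨N, hN⟩ := Filter.eventually_atTop.mp ((hbd.eventually (gt_mem_nhds hε)).and
    (Filter.eventually_gt_atTop 0))
  refine ⟨N, fun n hn => ?_⟩
  obtain ⟨enc, φ1, φ2, h⟩ := main n (hN n hn).2
  have hle := h.trans (hN n hn).1.le
  refine ⟨enc, φ1, φ2, le_trans ?_ hle, le_trans ?_ hle⟩
  · unfold bcPe1
    refine Finset.sum_le_sum fun s _ => Finset.sum_le_sum fun t _ => ?_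
    rw [Finset.mul_sum]
    refine Finset.sum_le_sum fun y1 _ => ?_
    rw [Finset.mul_sum]
    refine Finset.sum_le_sum fun y2 _ => ?_
    have a : 0 ≤ ∏ i, pST (s i) (t i) := Finset.prod_nonneg fun i _ => hpST0 _ _
    have b : 0 ≤ ∏ i, chan (enc (s, t) i) (y1 i) (y2 i) := Finset.prod_nonneg fun i _ => hch0 _ _ _
    exact ite_le_left a b
  · unfold bcPe2
    refine Finset.sum_le_sum fun s _ => Finset.sum_le_sum fun t _ => ?_
    rw [Finset.mul_sum]
    refine Finset.sum_le_sum fun y1 _ => ?_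
    rw [Finset.mul_sum]
    refine Finset.sum_le_sum fun y2 _ => ?_
    have a : 0 ≤ ∏ i, pST (s i) (t i) := Finset.prod_nonneg fun i _ => hpST0 _ _
    have b : 0 ≤ ∏ i, chan (enc (s, t) i) (y1 i) (y2 i) := Finset.prod_nonneg fun i _ => hch0 _ _ _
    exact ite_le_right a b

end Block

/-! ### Single-letter entropies -/

section Entropy

variable {S T W U V X Y1 Y2 : Type*} [Fintype S] [Fintype T] [Fintype W] [Fintype U] [Fintype V]
  [Fintype X] [Fintype Y1] [Fintype Y2] [DecidableEq S] [DecidableEq T] [DecidableEq W]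
  [DecidableEq U] [DecidableEq V] [DecidableEq X] [DecidableEq Y1] [DecidableEq Y2]

lemma pm_iff {Ω α β : Type*} [Fintype Ω] [DecidableEq α] [DecidableEq β] (p : Ω → ℝ) {F : Ω → α}
    {G : Ω → β} {a : α} {b : β} (h : ∀ ω, F ω = a ↔ G ω = b) : pm p F a = pm p G b := by
  simp [pm, h]

/-- Summing the law of `F` over a coordinate `b` gives the law of the remaining coordinates. -/
lemma pm_sum {Ω α β γ : Type*} [Fintype Ω] [DecidableEq α] [DecidableEq β] [DecidableEq γ]
    [Fintype β] (p : Ω → ℝ) {F : Ω → α} {G : Ω → β} {H : Ω → γ} (a : β → α) (c : γ)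
    (h : ∀ ω b, F ω = a b ↔ (H ω = c ∧ G ω = b)) : ∑ b, pm p F (a b) = pm p H c := by
  rw [← pm_marg p H G c]
  exact Finset.sum_congr rfl fun b _ => pm_iff p fun ω => by rw [h, Prod.mk.injEq]

variable {pST : S → T → ℝ} {c : S → T → W → U → V → ℝ} {pX : W → U → V → X → ℝ}
  {ch : X → Y1 → Y2 → ℝ} {p : Omega8 S T W U V X Y1 Y2 → ℝ}

lemma pm_STWUV (hch1 : ∀ x, ∑ y1, ∑ y2, ch x y1 y2 = 1) (hX1 : ∀ w u v, ∑ x, pX w u v x = 1)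
    (hp : ∀ s t w u v x y1 y2, p (s, t, w, u, v, x, y1, y2) =
        pST s t * c s t w u v * pX w u v x * ch x y1 y2) (s : S) (t : T) (w : W) (u : U) (v : V) :
    pm p (fun ω => (bS ω, bT ω, bW ω, bU ω, bV ω)) (s, t, w, u, v) = pST s t * c s t w u v := by
  simp only [pm, Fintype.sum_prod_type, bS, bT, bW, bU, bV, Prod.mk.injEq, ite_and, hp]
  simp [Finset.sum_ite_irrel, ← Finset.mul_sum, hch1, hX1]

/-- The conditional law of the last coordinate, uniform where the condition has probability zero. -/
noncomputable def condU {α β : Type*} [Fintype β] (P : α → ℝ) (J : α → β → ℝ) (a : α) (b : β) : ℝ :=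
  if P a = 0 then (Fintype.card β : ℝ)⁻¹ else J a b / P a

lemma condU_nonneg {α β : Type*} [Fintype β] {P : α → ℝ} {J : α → β → ℝ} (hP : ∀ a, 0 ≤ P a)
    (hJ : ∀ a b, 0 ≤ J a b) (a : α) (b : β) : 0 ≤ condU P J a b := by
  unfold condU
  split_ifs
  · positivity
  · exact div_nonneg (hJ a b) (hP a)

lemma condU_sum {α β : Type*} [Fintype β] [Nonempty β] {P : α → ℝ} {J : α → β → ℝ}
    (h : ∀ a, ∑ b, J a b = P a) (a : α) : ∑ b, condU P J a b = 1 := by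
  unfold condU
  split_ifs with h0
  · simp
  · rw [← Finset.sum_div, h, div_self h0]

lemma mean_eq {Ω : Type*} [Fintype Ω] {p : Ω → ℝ} {a b : Ω → ℝ}
    (h : ∀ ω, p ω ≠ 0 → a ω = b ω) : ∑ ω, p ω * a ω = ∑ ω, p ω * b ω := by
  refine Finset.sum_congr rfl fun ω _ => ?_
  by_cases hp : p ω = 0
  · simp [hp]
  · rw [h ω hp]

/-- The coding theorem without a common part, with all information quantities expanded into joint
entropies. -/
theorem sendable_of_entropies
    (hpST0 : ∀ s t, 0 ≤ pST s t) (hpST1 : ∑ s, ∑ t, pST s t = 1)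
    (hch0 : ∀ x y1 y2, 0 ≤ ch x y1 y2) (hch1 : ∀ x, ∑ y1, ∑ y2, ch x y1 y2 = 1)
    (hc0 : ∀ s t w u v, 0 ≤ c s t w u v) (hc1 : ∀ s t, ∑ w, ∑ u, ∑ v, c s t w u v = 1)
    (hX0 : ∀ w u v x, 0 ≤ pX w u v x) (hX1 : ∀ w u v, ∑ x, pX w u v x = 1)
    (hp : ∀ s t w u v x y1 y2, p (s, t, w, u, v, x, y1, y2) =
        pST s t * c s t w u v * pX w u v x * ch x y1 y2)
    {hY1 hY2 hW hST hSW hTW hSTW hSWU hTWV hSTWU hSTWV hSTWUV hWY1 hWY2 hJ1 hJ2 : ℝ}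
    (eY1 : margEnt p bY1 = hY1) (eY2 : margEnt p bY2 = hY2) (eW : margEnt p bW = hW)
    (eST : margEnt p (fun ω => (bS ω, bT ω)) = hST)
    (eSW : margEnt p (fun ω => (bS ω, bW ω)) = hSW)
    (eTW : margEnt p (fun ω => (bT ω, bW ω)) = hTW)
    (eSTW : margEnt p (fun ω => (bS ω, bT ω, bW ω)) = hSTW)
    (eSWU : margEnt p (fun ω => (bS ω, bW ω, bU ω)) = hSWU)
    (eTWV : margEnt p (fun ω => (bT ω, bW ω, bV ω)) = hTWV)
    (eSTWU : margEnt p (fun ω => (bS ω, bT ω, bW ω, bU ω)) = hSTWU)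
    (eSTWV : margEnt p (fun ω => (bS ω, bT ω, bW ω, bV ω)) = hSTWV)
    (eSTWUV : margEnt p (fun ω => (bS ω, bT ω, bW ω, bU ω, bV ω)) = hSTWUV)
    (eWY1 : margEnt p (fun ω => (bW ω, bY1 ω)) = hWY1)
    (eWY2 : margEnt p (fun ω => (bW ω, bY2 ω)) = hWY2)
    (eJ1 : margEnt p (fun ω => (bS ω, bW ω, bU ω, bY1 ω)) = hJ1)
    (eJ2 : margEnt p (fun ω => (bT ω, bW ω, bV ω, bY2 ω)) = hJ2)
    (i1 : hST + hJ1 < hY1 + hSTWU) (i2 : hST + hJ2 < hY2 + hSTWV)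
    (i3 : hST + hJ1 + hJ2 < hY1 + hWY2 + hSTWUV) (i3' : hST + hJ1 + hJ2 < hWY1 + hY2 + hSTWUV)
    (i4 : 2 * hST + hJ1 + hJ2 < hY1 + hY2 + hSTWUV + hSTW) :
    BCSendable pST ch := by
  have hp0 : ∀ ω, 0 ≤ p ω := fun ⟨s, t, w, u, v, x, y1, y2⟩ => by
    rw [hp]
    exact mul_nonneg (mul_nonneg (mul_nonneg (hpST0 _ _) (hc0 _ _ _ _ _)) (hX0 _ _ _ _))
      (hch0 _ _ _)
  have hp1 : ∑ ω, p ω = 1 := by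
    simp only [Fintype.sum_prod_type, hp]
    simp [← Finset.mul_sum, hch1, hX1, hc1, hpST1]
  have hne : Nonempty (Omega8 S T W U V X Y1 Y2) := by
    by_contra h
    rw [not_nonempty_iff] at h
    simp at hp1
  obtain ⟨o⟩ := hne
  have : Nonempty U := ⟨bU o⟩
  have : Nonempty V := ⟨bV o⟩
  let PW := pm p bW
  let PY1 := pm p bY1
  let PY2 := pm p bY2
  let PSW := pm p (fun ω => (bS ω, bW ω))
  let PTW := pm p (fun ω => (bT ω, bW ω))
  let PST := pm p (fun ω => (bS ω, bT ω))
  let PSTW := pm p (fun ω => (bS ω, bT ω, bW ω))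
  let PSWU := pm p (fun ω => (bS ω, bW ω, bU ω))
  let PTWV := pm p (fun ω => (bT ω, bW ω, bV ω))
  let PSTWU := pm p (fun ω => (bS ω, bT ω, bW ω, bU ω))
  let PSTWV := pm p (fun ω => (bS ω, bT ω, bW ω, bV ω))
  let PSTWUV := pm p (fun ω => (bS ω, bT ω, bW ω, bU ω, bV ω))
  let PWY1 := pm p (fun ω => (bW ω, bY1 ω))
  let PWY2 := pm p (fun ω => (bW ω, bY2 ω))
  let PJ1 := pm p (fun ω => (bS ω, bW ω, bU ω, bY1 ω))
  let PJ2 := pm p (fun ω => (bT ω, bW ω, bV ω, bY2 ω))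
  let q1 : S → W → U → ℝ := fun s w u => condU PSW (fun a b => PSWU (a.1, a.2, b)) (s, w) u
  let q2 : T → W → V → ℝ := fun t w v => condU PTW (fun a b => PTWV (a.1, a.2, b)) (t, w) v
  have sSTWUV : ∀ s t w u v, PSTWUV (s, t, w, u, v) = pST s t * c s t w u v :=
    pm_STWUV hch1 hX1 hp
  have sSTWU : ∀ s t w u, PSTWU (s, t, w, u) = pST s t * ∑ v, c s t w u v := fun s t w u => by
    simp_rw [Finset.mul_sum, ← sSTWUV]
    exact (pm_sum p (G := bV) _ _ fun ω b => by simp; tauto).symm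
  have sSTWV : ∀ s t w v, PSTWV (s, t, w, v) = pST s t * ∑ u, c s t w u v := fun s t w v => by
    simp_rw [Finset.mul_sum, ← sSTWUV]
    exact (pm_sum p (G := bU) _ _ fun ω b => by simp; tauto).symm
  have sSTW : ∀ s t w, PSTW (s, t, w) = pST s t * ∑ u, ∑ v, c s t w u v := fun s t w => by
    rw [Finset.mul_sum]
    simp_rw [← sSTWU]
    exact (pm_sum p (G := bU) _ _ fun ω b => by simp; tauto).symm
  have sST : ∀ s t, PST (s, t) = pST s t := fun s t => by
    rw [← mul_one (pST s t), ← hc1 s t, Finset.mul_sum]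
    simp_rw [← sSTW]
    exact (pm_sum p (G := bW) _ _ fun ω b => by simp; tauto).symm
  have sSWU : ∀ a : S × W, ∑ u, PSWU (a.1, a.2, u) = PSW a := fun a =>
    pm_sum p (G := bU) (fun u => (a.1, a.2, u)) _ fun ω b => by
      rw [Prod.ext_iff (y := a)]; simp; tauto
  have sTWV : ∀ a : T × W, ∑ v, PTWV (a.1, a.2, v) = PTW a := fun a =>
    pm_sum p (G := bV) (fun v => (a.1, a.2, v)) _ fun ω b => by
      rw [Prod.ext_iff (y := a)]; simp; tauto
  have sJ1' : ∀ s w y, ∑ u, PJ1 (s, w, u, y) = pm p (fun ω => (bS ω, bW ω, bY1 ω)) (s, w, y) :=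
    fun s w y => pm_sum p (G := bU) _ _ fun ω b => by simp; tauto
  have sJ2' : ∀ t w y, ∑ v, PJ2 (t, w, v, y) = pm p (fun ω => (bT ω, bW ω, bY2 ω)) (t, w, y) :=
    fun t w y => pm_sum p (G := bV) _ _ fun ω b => by simp; tauto
  have sJ1 : ∀ w y, ∑ s, ∑ u, PJ1 (s, w, u, y) = PWY1 (w, y) := fun w y =>
    (Finset.sum_congr rfl fun s _ => sJ1' s w y).trans
      (pm_sum p (G := bS) (fun s => (s, w, y)) (w, y) fun ω b => by simp; tauto)
  have sJ2 : ∀ w y, ∑ t, ∑ v, PJ2 (t, w, v, y) = PWY2 (w, y) := fun w y =>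
    (Finset.sum_congr rfl fun t _ => sJ2' t w y).trans
      (pm_sum p (G := bT) (fun t => (t, w, y)) (w, y) fun ω b => by simp; tauto)
  have sY1 : ∀ y, ∑ w, PWY1 (w, y) = PY1 y := fun y =>
    pm_sum p (G := bW) _ _ fun ω b => by simp; tauto
  have sY2 : ∀ y, ∑ w, PWY2 (w, y) = PY2 y := fun y =>
    pm_sum p (G := bW) _ _ fun ω b => by simp; tauto
  -- the single-letter likelihoods on the support of the joint law
  have vq1 : ∀ ω, p ω ≠ 0 → q1 (bS ω) (bW ω) (bU ω) =
      PSWU (bS ω, bW ω, bU ω) / PSW (bS ω, bW ω) := fun ω h =>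
    if_neg (pm_pos hp0 (fun ω => (bS ω, bW ω)) h).ne'
  have vq2 : ∀ ω, p ω ≠ 0 → q2 (bT ω) (bW ω) (bV ω) =
      PTWV (bT ω, bW ω, bV ω) / PTW (bT ω, bW ω) := fun ω h =>
    if_neg (pm_pos hp0 (fun ω => (bT ω, bW ω)) h).ne'
  have zW : ∀ ω, p ω ≠ 0 → 0 < PW (bW ω) := fun ω h => pm_pos hp0 bW h
  have zY1 : ∀ ω, p ω ≠ 0 → 0 < PY1 (bY1 ω) := fun ω h => pm_pos hp0 bY1 h
  have zY2 : ∀ ω, p ω ≠ 0 → 0 < PY2 (bY2 ω) := fun ω h => pm_pos hp0 bY2 h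
  have zSW : ∀ ω, p ω ≠ 0 → 0 < PSW (bS ω, bW ω) := fun ω h => pm_pos hp0 (fun ω => (bS ω, bW ω)) h
  have zTW : ∀ ω, p ω ≠ 0 → 0 < PTW (bT ω, bW ω) := fun ω h => pm_pos hp0 (fun ω => (bT ω, bW ω)) h
  have zST : ∀ ω, p ω ≠ 0 → 0 < PST (bS ω, bT ω) := fun ω h => pm_pos hp0 (fun ω => (bS ω, bT ω)) h
  have zSTW : ∀ ω, p ω ≠ 0 → 0 < PSTW (bS ω, bT ω, bW ω) := fun ω h => pm_pos hp0 (fun ω => (bS ω, bT ω, bW ω)) h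
  have zSWU : ∀ ω, p ω ≠ 0 → 0 < PSWU (bS ω, bW ω, bU ω) := fun ω h => pm_pos hp0 (fun ω => (bS ω, bW ω, bU ω)) h
  have zTWV : ∀ ω, p ω ≠ 0 → 0 < PTWV (bT ω, bW ω, bV ω) := fun ω h => pm_pos hp0 (fun ω => (bT ω, bW ω, bV ω)) h
  have zSTWU : ∀ ω, p ω ≠ 0 → 0 < PSTWU (bS ω, bT ω, bW ω, bU ω) := fun ω h => pm_pos hp0 (fun ω => (bS ω, bT ω, bW ω, bU ω)) h
  have zSTWV : ∀ ω, p ω ≠ 0 → 0 < PSTWV (bS ω, bT ω, bW ω, bV ω) := fun ω h => pm_pos hp0 (fun ω => (bS ω, bT ω, bW ω, bV ω)) h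
  have zSTWUV : ∀ ω, p ω ≠ 0 → 0 < PSTWUV (bS ω, bT ω, bW ω, bU ω, bV ω) := fun ω h => pm_pos hp0 (fun ω => (bS ω, bT ω, bW ω, bU ω, bV ω)) h
  have zWY1 : ∀ ω, p ω ≠ 0 → 0 < PWY1 (bW ω, bY1 ω) := fun ω h => pm_pos hp0 (fun ω => (bW ω, bY1 ω)) h
  have zWY2 : ∀ ω, p ω ≠ 0 → 0 < PWY2 (bW ω, bY2 ω) := fun ω h => pm_pos hp0 (fun ω => (bW ω, bY2 ω)) h
  have zJ1 : ∀ ω, p ω ≠ 0 → 0 < PJ1 (bS ω, bW ω, bU ω, bY1 ω) := fun ω h => pm_pos hp0 (fun ω => (bS ω, bW ω, bU ω, bY1 ω)) h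
  have zJ2 : ∀ ω, p ω ≠ 0 → 0 < PJ2 (bT ω, bW ω, bV ω, bY2 ω) := fun ω h => pm_pos hp0 (fun ω => (bT ω, bW ω, bV ω, bY2 ω)) h
  have nW : ∑ ω, p ω * Real.logb 2 (PW (bW ω)) = -hW := by
    rw [← eW, margEnt_eq, neg_neg]
  have nY1 : ∑ ω, p ω * Real.logb 2 (PY1 (bY1 ω)) = -hY1 := by
    rw [← eY1, margEnt_eq, neg_neg]
  have nY2 : ∑ ω, p ω * Real.logb 2 (PY2 (bY2 ω)) = -hY2 := by
    rw [← eY2, margEnt_eq, neg_neg]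
  have nSW : ∑ ω, p ω * Real.logb 2 (PSW (bS ω, bW ω)) = -hSW := by
    rw [← eSW, margEnt_eq, neg_neg]
  have nTW : ∑ ω, p ω * Real.logb 2 (PTW (bT ω, bW ω)) = -hTW := by
    rw [← eTW, margEnt_eq, neg_neg]
  have nST : ∑ ω, p ω * Real.logb 2 (PST (bS ω, bT ω)) = -hST := by
    rw [← eST, margEnt_eq, neg_neg]
  have nSTW : ∑ ω, p ω * Real.logb 2 (PSTW (bS ω, bT ω, bW ω)) = -hSTW := by
    rw [← eSTW, margEnt_eq, neg_neg]
  have nSWU : ∑ ω, p ω * Real.logb 2 (PSWU (bS ω, bW ω, bU ω)) = -hSWU := by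
    rw [← eSWU, margEnt_eq, neg_neg]
  have nTWV : ∑ ω, p ω * Real.logb 2 (PTWV (bT ω, bW ω, bV ω)) = -hTWV := by
    rw [← eTWV, margEnt_eq, neg_neg]
  have nSTWU : ∑ ω, p ω * Real.logb 2 (PSTWU (bS ω, bT ω, bW ω, bU ω)) = -hSTWU := by
    rw [← eSTWU, margEnt_eq, neg_neg]
  have nSTWV : ∑ ω, p ω * Real.logb 2 (PSTWV (bS ω, bT ω, bW ω, bV ω)) = -hSTWV := by
    rw [← eSTWV, margEnt_eq, neg_neg]
  have nSTWUV : ∑ ω, p ω * Real.logb 2 (PSTWUV (bS ω, bT ω, bW ω, bU ω, bV ω)) = -hSTWUV := by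
    rw [← eSTWUV, margEnt_eq, neg_neg]
  have nWY1 : ∑ ω, p ω * Real.logb 2 (PWY1 (bW ω, bY1 ω)) = -hWY1 := by
    rw [← eWY1, margEnt_eq, neg_neg]
  have nWY2 : ∑ ω, p ω * Real.logb 2 (PWY2 (bW ω, bY2 ω)) = -hWY2 := by
    rw [← eWY2, margEnt_eq, neg_neg]
  have nJ1 : ∑ ω, p ω * Real.logb 2 (PJ1 (bS ω, bW ω, bU ω, bY1 ω)) = -hJ1 := by
    rw [← eJ1, margEnt_eq, neg_neg]
  have nJ2 : ∑ ω, p ω * Real.logb 2 (PJ2 (bT ω, bW ω, bV ω, bY2 ω)) = -hJ2 := by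
    rw [← eJ2, margEnt_eq, neg_neg]
  have vST : ∀ ω, p ω ≠ 0 → 0 < pST (bS ω) (bT ω) := fun ω h => by
    rw [← sST]; exact zST ω h
  have lSTW : ∀ ω, p ω ≠ 0 → Real.logb 2 (∑ u, ∑ v, c (bS ω) (bT ω) (bW ω) u v) =
      Real.logb 2 (PSTW (bS ω, bT ω, bW ω)) - Real.logb 2 (PST (bS ω, bT ω)) := fun ω h => by
    rw [← Real.logb_div (zSTW ω h).ne' (zST ω h).ne', sST, sSTW, mul_div_cancel_left₀ _ (vST ω h).ne']
  have lSTWU : ∀ ω, p ω ≠ 0 → Real.logb 2 (∑ v, c (bS ω) (bT ω) (bW ω) (bU ω) v) =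
      Real.logb 2 (PSTWU (bS ω, bT ω, bW ω, bU ω)) - Real.logb 2 (PST (bS ω, bT ω)) := fun ω h => by
    rw [← Real.logb_div (zSTWU ω h).ne' (zST ω h).ne', sST, sSTWU, mul_div_cancel_left₀ _ (vST ω h).ne']
  have lSTWV : ∀ ω, p ω ≠ 0 → Real.logb 2 (∑ u, c (bS ω) (bT ω) (bW ω) u (bV ω)) =
      Real.logb 2 (PSTWV (bS ω, bT ω, bW ω, bV ω)) - Real.logb 2 (PST (bS ω, bT ω)) := fun ω h => by
    rw [← Real.logb_div (zSTWV ω h).ne' (zST ω h).ne', sST, sSTWV, mul_div_cancel_left₀ _ (vST ω h).ne']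
  have lSTWUV : ∀ ω, p ω ≠ 0 → Real.logb 2 (c (bS ω) (bT ω) (bW ω) (bU ω) (bV ω)) =
      Real.logb 2 (PSTWUV (bS ω, bT ω, bW ω, bU ω, bV ω)) - Real.logb 2 (PST (bS ω, bT ω)) := fun ω h => by
    rw [← Real.logb_div (zSTWUV ω h).ne' (zST ω h).ne', sST, sSTWUV, mul_div_cancel_left₀ _ (vST ω h).ne']
  have zq1 : ∀ ω, p ω ≠ 0 → 0 < q1 (bS ω) (bW ω) (bU ω) := fun ω h => by
    rw [vq1 ω h]; exact div_pos (zSWU ω h) (zSW ω h)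
  have lq1 : ∀ ω, p ω ≠ 0 → Real.logb 2 (q1 (bS ω) (bW ω) (bU ω)) =
      Real.logb 2 (PSWU (bS ω, bW ω, bU ω)) - Real.logb 2 (PSW (bS ω, bW ω)) := fun ω h => by
    rw [vq1 ω h, Real.logb_div (zSWU ω h).ne' (zSW ω h).ne']
  have zq2 : ∀ ω, p ω ≠ 0 → 0 < q2 (bT ω) (bW ω) (bV ω) := fun ω h => by
    rw [vq2 ω h]; exact div_pos (zTWV ω h) (zTW ω h)
  have lq2 : ∀ ω, p ω ≠ 0 → Real.logb 2 (q2 (bT ω) (bW ω) (bV ω)) =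
      Real.logb 2 (PTWV (bT ω, bW ω, bV ω)) - Real.logb 2 (PTW (bT ω, bW ω)) := fun ω h => by
    rw [vq2 ω h, Real.logb_div (zTWV ω h).ne' (zTW ω h).ne']
  have m0 : ∑ ω, p ω * (Real.logb 2 (∑ u, ∑ v, c (bS ω) (bT ω) (bW ω) u v) -
      Real.logb 2 (PW (bW ω))) = -hSTW + hST + hW := by
    have := mean_eq (p := p) (a := fun ω => Real.logb 2 (∑ u, ∑ v, c (bS ω) (bT ω) (bW ω) u v) -
        Real.logb 2 (PW (bW ω)))
      (b := fun ω => Real.logb 2 (PSTW (bS ω, bT ω, bW ω)) -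
          Real.logb 2 (PST (bS ω, bT ω)) -
          Real.logb 2 (PW (bW ω))) fun ω h => by
        rw [lSTW ω h]
    simp only [mul_add, mul_sub, Finset.sum_add_distrib, Finset.sum_sub_distrib] at this ⊢
    linarith [nSTW, nST, nW]
  have m1 : ∑ ω, p ω * (Real.logb 2 (∑ v, c (bS ω) (bT ω) (bW ω) (bU ω) v) -
      Real.logb 2 (PW (bW ω) * q1 (bS ω) (bW ω) (bU ω))) = -hSTWU + hST + hW + hSWU - hSW := by
    have := mean_eq (p := p) (a := fun ω => Real.logb 2 (∑ v, c (bS ω) (bT ω) (bW ω) (bU ω) v) -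
        Real.logb 2 (PW (bW ω) * q1 (bS ω) (bW ω) (bU ω)))
      (b := fun ω => Real.logb 2 (PSTWU (bS ω, bT ω, bW ω, bU ω)) -
          Real.logb 2 (PST (bS ω, bT ω)) -
          Real.logb 2 (PW (bW ω)) -
          Real.logb 2 (PSWU (bS ω, bW ω, bU ω)) +
          Real.logb 2 (PSW (bS ω, bW ω))) fun ω h => by
        rw [lSTWU ω h, Real.logb_mul (zW ω h).ne' (zq1 ω h).ne', lq1 ω h]; ring
    simp only [mul_add, mul_sub, Finset.sum_add_distrib, Finset.sum_sub_distrib] at this ⊢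
    linarith [nSTWU, nST, nW, nSWU, nSW]
  have m2 : ∑ ω, p ω * (Real.logb 2 (∑ u, c (bS ω) (bT ω) (bW ω) u (bV ω)) -
      Real.logb 2 (PW (bW ω) * q2 (bT ω) (bW ω) (bV ω))) = -hSTWV + hST + hW + hTWV - hTW := by
    have := mean_eq (p := p) (a := fun ω => Real.logb 2 (∑ u, c (bS ω) (bT ω) (bW ω) u (bV ω)) -
        Real.logb 2 (PW (bW ω) * q2 (bT ω) (bW ω) (bV ω)))
      (b := fun ω => Real.logb 2 (PSTWV (bS ω, bT ω, bW ω, bV ω)) -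
          Real.logb 2 (PST (bS ω, bT ω)) -
          Real.logb 2 (PW (bW ω)) -
          Real.logb 2 (PTWV (bT ω, bW ω, bV ω)) +
          Real.logb 2 (PTW (bT ω, bW ω))) fun ω h => by
        rw [lSTWV ω h, Real.logb_mul (zW ω h).ne' (zq2 ω h).ne', lq2 ω h]; ring
    simp only [mul_add, mul_sub, Finset.sum_add_distrib, Finset.sum_sub_distrib] at this ⊢
    linarith [nSTWV, nST, nW, nTWV, nTW]
  have m3 : ∑ ω, p ω * (Real.logb 2 (c (bS ω) (bT ω) (bW ω) (bU ω) (bV ω)) -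
      Real.logb 2 (PW (bW ω) * q1 (bS ω) (bW ω) (bU ω) * q2 (bT ω) (bW ω) (bV ω))) = -hSTWUV + hST + hW + hSWU - hSW + hTWV - hTW := by
    have := mean_eq (p := p) (a := fun ω => Real.logb 2 (c (bS ω) (bT ω) (bW ω) (bU ω) (bV ω)) -
        Real.logb 2 (PW (bW ω) * q1 (bS ω) (bW ω) (bU ω) * q2 (bT ω) (bW ω) (bV ω)))
      (b := fun ω => Real.logb 2 (PSTWUV (bS ω, bT ω, bW ω, bU ω, bV ω)) -
          Real.logb 2 (PST (bS ω, bT ω)) -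
          Real.logb 2 (PW (bW ω)) -
          Real.logb 2 (PSWU (bS ω, bW ω, bU ω)) +
          Real.logb 2 (PSW (bS ω, bW ω)) -
          Real.logb 2 (PTWV (bT ω, bW ω, bV ω)) +
          Real.logb 2 (PTW (bT ω, bW ω))) fun ω h => by
        rw [lSTWUV ω h, Real.logb_mul (mul_pos (zW ω h) (zq1 ω h)).ne' (zq2 ω h).ne',
        Real.logb_mul (zW ω h).ne' (zq1 ω h).ne', lq1 ω h, lq2 ω h]; ring
    simp only [mul_add, mul_sub, Finset.sum_add_distrib, Finset.sum_sub_distrib] at this ⊢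
    linarith [nSTWUV, nST, nW, nSWU, nSW, nTWV, nTW]
  have m4 : ∑ ω, p ω * (Real.logb 2 (q1 (bS ω) (bW ω) (bU ω) * PWY1 (bW ω, bY1 ω)) -
      Real.logb 2 (PJ1 (bS ω, bW ω, bU ω, bY1 ω))) = -hSWU + hSW - hWY1 + hJ1 := by
    have := mean_eq (p := p) (a := fun ω => Real.logb 2 (q1 (bS ω) (bW ω) (bU ω) * PWY1 (bW ω, bY1 ω)) -
        Real.logb 2 (PJ1 (bS ω, bW ω, bU ω, bY1 ω)))
      (b := fun ω => Real.logb 2 (PSWU (bS ω, bW ω, bU ω)) -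
          Real.logb 2 (PSW (bS ω, bW ω)) +
          Real.logb 2 (PWY1 (bW ω, bY1 ω)) -
          Real.logb 2 (PJ1 (bS ω, bW ω, bU ω, bY1 ω))) fun ω h => by
        rw [Real.logb_mul (zq1 ω h).ne' (zWY1 ω h).ne', lq1 ω h]
    simp only [mul_add, mul_sub, Finset.sum_add_distrib, Finset.sum_sub_distrib] at this ⊢
    linarith [nSWU, nSW, nWY1, nJ1]
  have m5 : ∑ ω, p ω * (Real.logb 2 (PW (bW ω) * q1 (bS ω) (bW ω) (bU ω) * PY1 (bY1 ω)) -
      Real.logb 2 (PJ1 (bS ω, bW ω, bU ω, bY1 ω))) = -hW - hSWU + hSW - hY1 + hJ1 := by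
    have := mean_eq (p := p) (a := fun ω => Real.logb 2 (PW (bW ω) * q1 (bS ω) (bW ω) (bU ω) * PY1 (bY1 ω)) -
        Real.logb 2 (PJ1 (bS ω, bW ω, bU ω, bY1 ω)))
      (b := fun ω => Real.logb 2 (PW (bW ω)) +
          Real.logb 2 (PSWU (bS ω, bW ω, bU ω)) -
          Real.logb 2 (PSW (bS ω, bW ω)) +
          Real.logb 2 (PY1 (bY1 ω)) -
          Real.logb 2 (PJ1 (bS ω, bW ω, bU ω, bY1 ω))) fun ω h => by
        rw [Real.logb_mul (mul_pos (zW ω h) (zq1 ω h)).ne' (zY1 ω h).ne',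
        Real.logb_mul (zW ω h).ne' (zq1 ω h).ne', lq1 ω h]; ring
    simp only [mul_add, mul_sub, Finset.sum_add_distrib, Finset.sum_sub_distrib] at this ⊢
    linarith [nW, nSWU, nSW, nY1, nJ1]
  have m6 : ∑ ω, p ω * (Real.logb 2 (q2 (bT ω) (bW ω) (bV ω) * PWY2 (bW ω, bY2 ω)) -
      Real.logb 2 (PJ2 (bT ω, bW ω, bV ω, bY2 ω))) = -hTWV + hTW - hWY2 + hJ2 := by
    have := mean_eq (p := p) (a := fun ω => Real.logb 2 (q2 (bT ω) (bW ω) (bV ω) * PWY2 (bW ω, bY2 ω)) -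
        Real.logb 2 (PJ2 (bT ω, bW ω, bV ω, bY2 ω)))
      (b := fun ω => Real.logb 2 (PTWV (bT ω, bW ω, bV ω)) -
          Real.logb 2 (PTW (bT ω, bW ω)) +
          Real.logb 2 (PWY2 (bW ω, bY2 ω)) -
          Real.logb 2 (PJ2 (bT ω, bW ω, bV ω, bY2 ω))) fun ω h => by
        rw [Real.logb_mul (zq2 ω h).ne' (zWY2 ω h).ne', lq2 ω h]
    simp only [mul_add, mul_sub, Finset.sum_add_distrib, Finset.sum_sub_distrib] at this ⊢
    linarith [nTWV, nTW, nWY2, nJ2]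
  have m7 : ∑ ω, p ω * (Real.logb 2 (PW (bW ω) * q2 (bT ω) (bW ω) (bV ω) * PY2 (bY2 ω)) -
      Real.logb 2 (PJ2 (bT ω, bW ω, bV ω, bY2 ω))) = -hW - hTWV + hTW - hY2 + hJ2 := by
    have := mean_eq (p := p) (a := fun ω => Real.logb 2 (PW (bW ω) * q2 (bT ω) (bW ω) (bV ω) * PY2 (bY2 ω)) -
        Real.logb 2 (PJ2 (bT ω, bW ω, bV ω, bY2 ω)))
      (b := fun ω => Real.logb 2 (PW (bW ω)) +
          Real.logb 2 (PTWV (bT ω, bW ω, bV ω)) -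
          Real.logb 2 (PTW (bT ω, bW ω)) +
          Real.logb 2 (PY2 (bY2 ω)) -
          Real.logb 2 (PJ2 (bT ω, bW ω, bV ω, bY2 ω))) fun ω h => by
        rw [Real.logb_mul (mul_pos (zW ω h) (zq2 ω h)).ne' (zY2 ω h).ne',
        Real.logb_mul (zW ω h).ne' (zq2 ω h).ne', lq2 ω h]; ring
    simp only [mul_add, mul_sub, Finset.sum_add_distrib, Finset.sum_sub_distrib] at this ⊢
    linarith [nW, nTWV, nTW, nY2, nJ2]
  have hm0 : 0 ≤ -hSTW + hST + hW := by
    have h := mi_nonneg hp0 hp1 (fun ω => (bS ω, bT ω)) bW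
    rw [mi, margEnt_congr (F := fun ω => ((bS ω, bT ω), bW ω)) (G := fun ω => (bS ω, bT ω, bW ω))
      fun ω ω' _ _ => by simp; tauto] at h
    linarith
  obtain ⟨γ, hγ, d1, d2, d3, d4, d5⟩ : ∃ γ : ℝ, 0 < γ ∧
      10 * γ ≤ hY1 + hSTWU - (hST + hJ1) ∧ 10 * γ ≤ hY2 + hSTWV - (hST + hJ2) ∧
      10 * γ ≤ hY1 + hWY2 + hSTWUV - (hST + hJ1 + hJ2) ∧
      10 * γ ≤ hWY1 + hY2 + hSTWUV - (hST + hJ1 + hJ2) ∧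
      10 * γ ≤ hY1 + hY2 + hSTWUV + hSTW - (2 * hST + hJ1 + hJ2) := by
    have key : ∀ a b : ℝ, 0 < a → 0 < b → ∃ e : ℝ, 0 < e ∧ e ≤ a ∧ e ≤ b := fun a b ha hb =>
      ⟨min a b, lt_min ha hb, min_le_left _ _, min_le_right _ _⟩
    obtain ⟨a, ha, a1, a2⟩ := key _ _ (sub_pos.2 i1) (sub_pos.2 i2)
    obtain ⟨b, hb, b1, b2⟩ := key _ _ (sub_pos.2 i3) (sub_pos.2 i3')
    obtain ⟨e, he, e1, e2⟩ := key _ _ ha hb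
    obtain ⟨d, hd, d1, d2⟩ := key _ _ he (sub_pos.2 i4)
    exact ⟨d / 10, by positivity, by linarith, by linarith, by linarith, by linarith, by linarith⟩
  have hW1 : ∑ w, PW w = 1 := by
    have := sum_pm p bW fun _ => 1
    simpa [hp1] using this
  -- `a1`, `a2` are the exponents of the full tests at the two users, `b3` that of covering; the
  -- rates leave a slack `γ` in each covering and each packing constraint
  obtain ⟨a1, ha1⟩ : ∃ a, a = hW + hSWU - hSW + hY1 - hJ1 := ⟨_, rfl⟩
  obtain ⟨a2, ha2⟩ : ∃ a, a = hW + hTWV - hTW + hY2 - hJ2 := ⟨_, rfl⟩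
  obtain ⟨b3, hb3⟩ : ∃ a, a = -hSTWUV + hST + hW + hSWU - hSW + hTWV - hTW := ⟨_, rfl⟩
  refine sendable_of_exponents pST hpST0 hpST1 ch hch0 hch1 c hc0 hc1 pX hX0 hX1 p hp hp0 hp1
    PW (pm_nonneg hp0 _) hW1
    q1 (fun s w u => condU_nonneg (pm_nonneg hp0 _) (fun _ _ => pm_nonneg hp0 _ _) _ _)
    (fun s w => condU_sum sSWU _)
    q2 (fun t w v => condU_nonneg (pm_nonneg hp0 _) (fun _ _ => pm_nonneg hp0 _ _) _ _)
    (fun t w => condU_sum sTWV _)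
    PY1 (fun w y => PWY1 (w, y)) (fun s w u y => PJ1 (s, w, u, y))
    (fun _ _ _ _ => pm_nonneg hp0 _ _) sJ1
    (fun y => by rw [Finset.sum_comm]; exact (Finset.sum_congr rfl fun w _ => sJ1 w y).trans (sY1 y))
    PY2 (fun w y => PWY2 (w, y)) (fun t w v y => PJ2 (t, w, v, y))
    (fun _ _ _ _ => pm_nonneg hp0 _ _) sJ2
    (fun y => by rw [Finset.sum_comm]; exact (Finset.sum_congr rfl fun w _ => sJ2 w y).trans (sY2 y))
    zW zq1 zq2 zY1 zWY1 zJ1 zY2 zWY2 zJ2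
    (-hSTW + hST + hW + γ) (-hSTWU + hST + hW + hSWU - hSW + γ)
    (-hSTWV + hST + hW + hTWV - hTW + γ) (b3 + γ)
    (-hSWU + hSW - hWY1 + hJ1 + γ) (-a1 + γ) (-hTWV + hTW - hWY2 + hJ2 + γ) (-a2 + γ)
    (a1 + a2 - b3 - 6 * γ) (b3 + 4 * γ - a2) (b3 + 4 * γ - a1) (by linarith)
    (m0.trans_lt (by linarith)) (by linarith) (m1.trans_lt (by linarith)) (by linarith)
    (m2.trans_lt (by linarith)) (by linarith) (m3.trans_lt (by linarith)) (by linarith)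
    (m4.trans_lt (by linarith)) (by linarith) (m5.trans_lt (by linarith)) (by linarith)
    (m6.trans_lt (by linarith)) (by linarith) (m7.trans_lt (by linarith)) (by linarith)

end Entropy

/-! ### The common part -/

/-- Entropies are unchanged under an injective relabelling of the sample space. -/
lemma margEnt_push {Ω Ω' α : Type*} [Fintype Ω] [Fintype Ω'] [Fintype α] [DecidableEq α]
    {p : Ω → ℝ} {p' : Ω' → ℝ} {i : Ω → Ω'} (hi : Function.Injective i) (h : ∀ ω, p' (i ω) = p ω)
    (h0 : ∀ ω', ω' ∉ Set.range i → p' ω' = 0) (F : Ω' → α) :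
    margEnt p' F = margEnt p (fun ω => F (i ω)) := by
  have key : ∀ a, (∑ ω', if F ω' = a then p' ω' else 0) = ∑ ω, if F (i ω) = a then p ω else 0 :=
    fun a => (Fintype.sum_of_injective i hi _ _ (fun ω' hω' => by simp [h0 ω' hω'])
      fun ω => by rw [h]).symm
  simp only [margEnt, key]

section CommonPart

variable {S T K W U V X Y1 Y2 : Type*} [Fintype S] [Fintype T] [Fintype K] [Fintype W] [Fintype U]
  [Fintype V] [Fintype X] [Fintype Y1] [Fintype Y2] [DecidableEq S] [DecidableEq T] [DecidableEq K]
  [DecidableEq W] [DecidableEq U] [DecidableEq V] [DecidableEq X] [DecidableEq Y1] [DecidableEq Y2]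
  {pST : S → T → ℝ} {chan : X → Y1 → Y2 → ℝ} {pWUV : S → T → W → U → V → ℝ}
  {pX : W → U → V → X → ℝ} {p : Omega8 S T W U V X Y1 Y2 → ℝ}

/-- The coding theorem with a function `f` of the first source adjoined to the cloud variable. -/
theorem sendable_of_entropies_common (f : S → K)
    (hpST0 : ∀ s t, 0 ≤ pST s t) (hpST1 : ∑ s, ∑ t, pST s t = 1)
    (hch0 : ∀ x y1 y2, 0 ≤ chan x y1 y2) (hch1 : ∀ x, ∑ y1, ∑ y2, chan x y1 y2 = 1)
    (hpWUVnn : ∀ s t w u v, 0 ≤ pWUV s t w u v)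
    (hpWUVsum : ∀ s t, ∑ w, ∑ u, ∑ v, pWUV s t w u v = 1)
    (hpXnn : ∀ w u v x, 0 ≤ pX w u v x) (hpXsum : ∀ w u v, ∑ x, pX w u v x = 1)
    (hp : ∀ s t w u v x y1 y2, p (s, t, w, u, v, x, y1, y2) =
        pST s t * pWUV s t w u v * pX w u v x * chan x y1 y2)
    {hY1 hY2 hW hST hSW hTW hSTW hSWU hTWV hSTWU hSTWV hSTWUV hWY1 hWY2 hJ1 hJ2 : ℝ}
    (eY1 : margEnt p bY1 = hY1)
    (eY2 : margEnt p bY2 = hY2)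
    (eW : margEnt p (fun ω => (f (bS ω), bW ω)) = hW)
    (eST : margEnt p (fun ω => (bS ω, bT ω)) = hST)
    (eSW : margEnt p (fun ω => (bS ω, (f (bS ω), bW ω))) = hSW)
    (eTW : margEnt p (fun ω => (bT ω, (f (bS ω), bW ω))) = hTW)
    (eSTW : margEnt p (fun ω => (bS ω, bT ω, (f (bS ω), bW ω))) = hSTW)
    (eSWU : margEnt p (fun ω => (bS ω, (f (bS ω), bW ω), bU ω)) = hSWU)
    (eTWV : margEnt p (fun ω => (bT ω, (f (bS ω), bW ω), bV ω)) = hTWV)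
    (eSTWU : margEnt p (fun ω => (bS ω, bT ω, (f (bS ω), bW ω), bU ω)) = hSTWU)
    (eSTWV : margEnt p (fun ω => (bS ω, bT ω, (f (bS ω), bW ω), bV ω)) = hSTWV)
    (eSTWUV : margEnt p (fun ω => (bS ω, bT ω, (f (bS ω), bW ω), bU ω, bV ω)) = hSTWUV)
    (eWY1 : margEnt p (fun ω => ((f (bS ω), bW ω), bY1 ω)) = hWY1)
    (eWY2 : margEnt p (fun ω => ((f (bS ω), bW ω), bY2 ω)) = hWY2)
    (eJ1 : margEnt p (fun ω => (bS ω, (f (bS ω), bW ω), bU ω, bY1 ω)) = hJ1)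
    (eJ2 : margEnt p (fun ω => (bT ω, (f (bS ω), bW ω), bV ω, bY2 ω)) = hJ2)
    (i1 : hST + hJ1 < hY1 + hSTWU) (i2 : hST + hJ2 < hY2 + hSTWV)
    (i3 : hST + hJ1 + hJ2 < hY1 + hWY2 + hSTWUV) (i3' : hST + hJ1 + hJ2 < hWY1 + hY2 + hSTWUV)
    (i4 : 2 * hST + hJ1 + hJ2 < hY1 + hY2 + hSTWUV + hSTW) :
    BCSendable pST chan := by
  -- the common part is adjoined to the cloud variable: `(K, W)` takes the place of `W`
  let c' : S → T → K × W → U → V → ℝ := fun s t z u v => if z.1 = f s then pWUV s t z.2 u v else 0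
  let p' : Omega8 S T (K × W) U V X Y1 Y2 → ℝ := fun ω =>
    pST (bS ω) (bT ω) * c' (bS ω) (bT ω) (bW ω) (bU ω) (bV ω) *
      pX (bW ω).2 (bU ω) (bV ω) (bX ω) * chan (bX ω) (bY1 ω) (bY2 ω)
  let i : Omega8 S T W U V X Y1 Y2 → Omega8 S T (K × W) U V X Y1 Y2 := fun ω =>
    (bS ω, bT ω, (f (bS ω), bW ω), bU ω, bV ω, bX ω, bY1 ω, bY2 ω)
  have hi : Function.Injective i := by
    rintro ⟨s, t, w, u, v, x, y1, y2⟩ ⟨s', t', w', u', v', x', y1', y2'⟩ h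
    simp only [i, bS, bT, bW, bU, bV, bX, bY1, bY2, Prod.mk.injEq] at h ⊢
    tauto
  have hpi : ∀ ω, p' (i ω) = p ω := by
    rintro ⟨s, t, w, u, v, x, y1, y2⟩
    simp [p', i, c', bS, bT, bW, bU, bV, bX, bY1, bY2, hp]
  have hp'0 : ∀ ω, ω ∉ Set.range i → p' ω = 0 := by
    rintro ⟨s, t, ⟨k, w⟩, u, v, x, y1, y2⟩ h
    have hk : k ≠ f s := fun e => h ⟨(s, t, w, u, v, x, y1, y2), by
      simp [i, bS, bT, bW, bU, bV, bX, bY1, bY2, e]⟩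
    simp [p', c', bS, bW, hk]
  have hc1 : ∀ s t, ∑ z, ∑ u, ∑ v, c' s t z u v = 1 := fun s t => by
    rw [Fintype.sum_prod_type, Finset.sum_eq_single (f s)]
    · simpa [c'] using hpWUVsum s t
    · intro k _ hk
      simp [c', hk]
    · simp
  exact sendable_of_entropies (c := c') (pX := fun z => pX z.2) (p := p') hpST0 hpST1 hch0 hch1
    (fun s t z u v => by
      simp only [c']
      split_ifs
      exacts [hpWUVnn _ _ _ _ _, le_rfl])
    hc1 (fun z => hpXnn z.2) (fun z => hpXsum z.2) (fun _ _ _ _ _ _ _ _ => rfl)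
    ((margEnt_push hi hpi hp'0 _).trans eY1) ((margEnt_push hi hpi hp'0 _).trans eY2)
    ((margEnt_push hi hpi hp'0 _).trans eW) ((margEnt_push hi hpi hp'0 _).trans eST)
    ((margEnt_push hi hpi hp'0 _).trans eSW) ((margEnt_push hi hpi hp'0 _).trans eTW)
    ((margEnt_push hi hpi hp'0 _).trans eSTW) ((margEnt_push hi hpi hp'0 _).trans eSWU)
    ((margEnt_push hi hpi hp'0 _).trans eTWV) ((margEnt_push hi hpi hp'0 _).trans eSTWU)
    ((margEnt_push hi hpi hp'0 _).trans eSTWV) ((margEnt_push hi hpi hp'0 _).trans eSTWUV)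
    ((margEnt_push hi hpi hp'0 _).trans eWY1) ((margEnt_push hi hpi hp'0 _).trans eWY2)
    ((margEnt_push hi hpi hp'0 _).trans eJ1) ((margEnt_push hi hpi hp'0 _).trans eJ2)
    i1 i2 i3 i3' i4

end CommonPart

/-- **Proposition 2 (Han-Costa, with the Kramer-Nair correction).**  A correlated source
`(S,T)` with common part `K = f(S) = g(T)` can be sent with arbitrarily small probability
of error over the broadcast channel `p(y1,y2|x)` if there are auxiliaries `W, U, V` and an
input `X` with `(S,T) → (W,U,V) → X → (Y1,Y2)` a Markov chain, satisfying the four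
information inequalities below. -/
theorem han_costa_BC
    {S T K W U V X Y1 Y2 : Type*}
    [Fintype S] [Fintype T] [Fintype K] [Fintype W] [Fintype U] [Fintype V] [Fintype X]
    [Fintype Y1] [Fintype Y2]
    [DecidableEq S] [DecidableEq T] [DecidableEq K] [DecidableEq W] [DecidableEq U]
    [DecidableEq V] [DecidableEq X] [DecidableEq Y1] [DecidableEq Y2]
    -- the source
    (pST : S → T → ℝ) (hpSTnn : ∀ s t, 0 ≤ pST s t) (hpSTsum : ∑ s : S, ∑ t : T, pST s t = 1)
    -- the common part K = f(S) = g(T)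
    (f : S → K) (g : T → K) (hcommon : ∀ s t, pST s t ≠ 0 → f s = g t)
    -- the channel
    (chan : X → Y1 → Y2 → ℝ) (hchannn : ∀ x y1 y2, 0 ≤ chan x y1 y2)
    (hchansum : ∀ x, ∑ y1 : Y1, ∑ y2 : Y2, chan x y1 y2 = 1)
    -- the auxiliary conditional distributions (giving the Markov chain
    -- (S,T) → (W,U,V) → X → (Y1,Y2))
    (pWUV : S → T → W → U → V → ℝ) (hpWUVnn : ∀ s t w u v, 0 ≤ pWUV s t w u v)
    (hpWUVsum : ∀ s t, ∑ w : W, ∑ u : U, ∑ v : V, pWUV s t w u v = 1)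
    (pX : W → U → V → X → ℝ) (hpXnn : ∀ w u v x, 0 ≤ pX w u v x)
    (hpXsum : ∀ w u v, ∑ x : X, pX w u v x = 1)
    -- the joint distribution of all the variables
    (p : Omega8 S T W U V X Y1 Y2 → ℝ)
    (hp : ∀ s t w u v x y1 y2,
      p (s, t, w, u, v, x, y1, y2) =
        pST s t * pWUV s t w u v * pX w u v x * chan x y1 y2)
    -- the common-part random variable
    (vK : Omega8 S T W U V X Y1 Y2 → K) (hvK : vK = fun ω => f (bS ω))
    -- the four inequalities
    (h1 : margEnt p bS <
      mi p (fun ω => (bS ω, bW ω, bU ω)) bY1 - cmi p bT (fun ω => (bW ω, bU ω)) bS)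
    (h2 : margEnt p bT <
      mi p (fun ω => (bT ω, bW ω, bV ω)) bY2 - cmi p bS (fun ω => (bW ω, bV ω)) bT)
    (h3 : margEnt p (fun ω => (bS ω, bT ω)) <
      min (mi p (fun ω => (vK ω, bW ω)) bY1) (mi p (fun ω => (vK ω, bW ω)) bY2)
        + cmi p (fun ω => (bS ω, bU ω)) bY1 (fun ω => (vK ω, bW ω))
        + cmi p (fun ω => (bT ω, bV ω)) bY2 (fun ω => (vK ω, bW ω))
        - cmi p (fun ω => (bS ω, bU ω)) (fun ω => (bT ω, bV ω)) (fun ω => (vK ω, bW ω)))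
    (h4 : margEnt p (fun ω => (bS ω, bT ω)) <
      mi p (fun ω => (bS ω, bW ω, bU ω)) bY1 + mi p (fun ω => (bT ω, bW ω, bV ω)) bY2
        - cmi p (fun ω => (bS ω, bU ω)) (fun ω => (bT ω, bV ω)) (fun ω => (vK ω, bW ω))
        - mi p (fun ω => (bS ω, bT ω)) (fun ω => (vK ω, bW ω))) :
    BCSendable pST chan := by
  subst hvK
  have hK : ∀ ω, p ω ≠ 0 → f (bS ω) = g (bT ω) := by
    rintro ⟨s, t, w, u, v, x, y1, y2⟩ h
    refine hcommon s t fun e => h ?_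
    rw [hp, e]
    ring
  have x1 : margEnt p (fun ω => (bT ω, bS ω)) =
      margEnt p (fun ω => (bS ω, bT ω)) := margEnt_congr fun ω ω' h h' => by
    have e := hK ω h
    have e' := hK ω' h'
    simp only [Prod.mk.injEq]
    grind only
  have x2 : margEnt p (fun ω => (bS ω, bW ω, bU ω)) =
      margEnt p (fun ω => (bS ω, (f (bS ω), bW ω), bU ω)) := margEnt_congr fun ω ω' h h' => by
    have e := hK ω h
    have e' := hK ω' h'
    simp only [Prod.mk.injEq]
    grind only
  have x3 : margEnt p (fun ω => ((bW ω, bU ω), bS ω)) =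
      margEnt p (fun ω => (bS ω, (f (bS ω), bW ω), bU ω)) := margEnt_congr fun ω ω' h h' => by
    have e := hK ω h
    have e' := hK ω' h'
    simp only [Prod.mk.injEq]
    grind only
  have x4 : margEnt p (fun ω => ((bS ω, bU ω), f (bS ω), bW ω)) =
      margEnt p (fun ω => (bS ω, (f (bS ω), bW ω), bU ω)) := margEnt_congr fun ω ω' h h' => by
    have e := hK ω h
    have e' := hK ω' h'
    simp only [Prod.mk.injEq]
    grind only
  have x5 : margEnt p (fun ω => (bT ω, bW ω, bV ω)) =
      margEnt p (fun ω => (bT ω, (f (bS ω), bW ω), bV ω)) := margEnt_congr fun ω ω' h h' => by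
    have e := hK ω h
    have e' := hK ω' h'
    simp only [Prod.mk.injEq]
    grind only
  have x6 : margEnt p (fun ω => ((bW ω, bV ω), bT ω)) =
      margEnt p (fun ω => (bT ω, (f (bS ω), bW ω), bV ω)) := margEnt_congr fun ω ω' h h' => by
    have e := hK ω h
    have e' := hK ω' h'
    simp only [Prod.mk.injEq]
    grind only
  have x7 : margEnt p (fun ω => ((bT ω, bV ω), f (bS ω), bW ω)) =
      margEnt p (fun ω => (bT ω, (f (bS ω), bW ω), bV ω)) := margEnt_congr fun ω ω' h h' => by
    have e := hK ω h
    have e' := hK ω' h'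
    simp only [Prod.mk.injEq]
    grind only
  have x8 : margEnt p (fun ω => ((bS ω, bW ω, bU ω), bY1 ω)) =
      margEnt p (fun ω => (bS ω, (f (bS ω), bW ω), bU ω, bY1 ω)) := margEnt_congr fun ω ω' h h' => by
    have e := hK ω h
    have e' := hK ω' h'
    simp only [Prod.mk.injEq]
    grind only
  have x9 : margEnt p (fun ω => ((bS ω, bU ω), bY1 ω, f (bS ω), bW ω)) =
      margEnt p (fun ω => (bS ω, (f (bS ω), bW ω), bU ω, bY1 ω)) := margEnt_congr fun ω ω' h h' => by
    have e := hK ω h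
    have e' := hK ω' h'
    simp only [Prod.mk.injEq]
    grind only
  have x10 : margEnt p (fun ω => ((bT ω, bW ω, bV ω), bY2 ω)) =
      margEnt p (fun ω => (bT ω, (f (bS ω), bW ω), bV ω, bY2 ω)) := margEnt_congr fun ω ω' h h' => by
    have e := hK ω h
    have e' := hK ω' h'
    simp only [Prod.mk.injEq]
    grind only
  have x11 : margEnt p (fun ω => ((bT ω, bV ω), bY2 ω, f (bS ω), bW ω)) =
      margEnt p (fun ω => (bT ω, (f (bS ω), bW ω), bV ω, bY2 ω)) := margEnt_congr fun ω ω' h h' => by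
    have e := hK ω h
    have e' := hK ω' h'
    simp only [Prod.mk.injEq]
    grind only
  have x12 : margEnt p (fun ω => (bT ω, (bW ω, bU ω), bS ω)) =
      margEnt p (fun ω => (bS ω, bT ω, (f (bS ω), bW ω), bU ω)) := margEnt_congr fun ω ω' h h' => by
    have e := hK ω h
    have e' := hK ω' h'
    simp only [Prod.mk.injEq]
    grind only
  have x13 : margEnt p (fun ω => (bS ω, (bW ω, bV ω), bT ω)) =
      margEnt p (fun ω => (bS ω, bT ω, (f (bS ω), bW ω), bV ω)) := margEnt_congr fun ω ω' h h' => by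
    have e := hK ω h
    have e' := hK ω' h'
    simp only [Prod.mk.injEq]
    grind only
  have x14 : margEnt p (fun ω => (bY1 ω, f (bS ω), bW ω)) =
      margEnt p (fun ω => ((f (bS ω), bW ω), bY1 ω)) := margEnt_congr fun ω ω' h h' => by
    have e := hK ω h
    have e' := hK ω' h'
    simp only [Prod.mk.injEq]
    grind only
  have x15 : margEnt p (fun ω => (bY2 ω, f (bS ω), bW ω)) =
      margEnt p (fun ω => ((f (bS ω), bW ω), bY2 ω)) := margEnt_congr fun ω ω' h h' => by
    have e := hK ω h
    have e' := hK ω' h'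
    simp only [Prod.mk.injEq]
    grind only
  have x16 : margEnt p (fun ω => ((bS ω, bU ω), (bT ω, bV ω), f (bS ω), bW ω)) =
      margEnt p (fun ω => (bS ω, bT ω, (f (bS ω), bW ω), bU ω, bV ω)) := margEnt_congr fun ω ω' h h' => by
    have e := hK ω h
    have e' := hK ω' h'
    simp only [Prod.mk.injEq]
    grind only
  have x17 : margEnt p (fun ω => ((bS ω, bT ω), f (bS ω), bW ω)) =
      margEnt p (fun ω => (bS ω, bT ω, (f (bS ω), bW ω))) := margEnt_congr fun ω ω' h h' => by
    have e := hK ω h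
    have e' := hK ω' h'
    simp only [Prod.mk.injEq]
    grind only
  simp only [mi, cmi, x1, x2, x3, x4, x5, x6, x7, x8, x9, x10, x11, x12, x13, x14, x15, x16, x17] at h1 h2 h3 h4
  generalize hm : min (_ : ℝ) _ = m at h3
  have hm1 := hm ▸ min_le_left _ _
  have hm2 := hm ▸ min_le_right _ _
  refine sendable_of_entropies_common f hpSTnn hpSTsum hchannn hchansum hpWUVnn hpWUVsum hpXnn
    hpXsum hp rfl rfl rfl rfl rfl rfl rfl rfl rfl rfl rfl rfl rfl rfl rfl rfl ?_ ?_ ?_ ?_ ?_ <;>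
  linarith
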